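/- arXiv:1608.02009 — 2 statements merged into one kernel-verified Lean document; each statement's English description precedes it below -/
import Mathlib

section
/- Let n ≥ 2 and α₀ ∈ (0,1). There exist an unbounded set E ⊂ ℤⁿ with dim_LG E = n − 2α₀ but dim_L E = 0, and a homeomorphism f : ℝⁿ → ℝⁿ which is Lipschitz, η-quasisymmetric for some homeomorphism η : [0,∞) → [0,∞), differentiable almost everywhere with Jacobian J_f = |det Df| satisfying the change-of-variables formula ∫ g(f(x)) J_f(x) dx = ∫ g(y) dy for every nonnegative measurable g, and with J_f ∈ A_1(ℝⁿ; closure of E), such that for every α ∈ (α₀, 1) the composition operator u ↦ u∘f is unbounded on Q_α(ℝⁿ): for every constant C > 0 there exists u ∈ Q_α(ℝⁿ) with ‖u∘f‖_{Q_α} > C ‖u‖_{Q_α} and 0 < ‖u‖_{Q_α} < ∞. -/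
/-!
The set `E` is a discrete self-similar set of growth exponent `s = n - 2 α₀`: the points of `ℤⁿ`
whose coordinates have binary digits supported on a set of positions of density `s / n`. Inside a
ball of radius `R` it is covered by a constant times `(max R 1 / max r 1) ^ s` cubes of edge `r`,
and this count is attained at `r ≈ 1`, `R → ∞`. Hence `dimGlob E = s`; at scales `R ≤ 1` only
boundedly many points are seen, so `dimLoc E = 0`.

The map `f` is `x ↦ e + 4 |x - e| (x - e)` on each ball `B(e, 1/4)`, `e ∈ E`, and the identity
elsewhere. Up to constants, `|f x - f y|` is `t (w(x) + min(1, t))` with `t = |x - y|` and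
`w(x) = min(1, 4 dist(x, E))`, which gives the Lipschitz and quasisymmetry estimates. The Jacobian
is comparable to `wⁿ`, hence to a constant on balls staying away from `E`; this is the local `A₁`
condition.

For unboundedness take `F ⊆ E ∩ B(0, R)` with about `R ^ s` points and let `u` be the sum of tents
of radius `ε` centred at `F`. On a ball the energy of `u` is at most a constant times `ε ^ (-2α)`
times the volume of the part of the support of `u` in the ball, and summing over the tents shows
`‖u‖² ≲ max(1, R ^ (2(α - α₀)) ε ^ (n - 2α))`. For `ε` such that the second term equals `1` the
norms of `u` stay bounded. The function `u ∘ f` consists of bumps of radius `√ε / 2`, and on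
`B(0, 2R)` its normalised energy is at least a constant times
`R ^ (2α - n) R ^ s (√ε) ^ (n - 2α) = R ^ (α - α₀)`, which tends to infinity with `R`.
-/

open MeasureTheory Metric Filter Set ENNReal NNReal

noncomputable section

/-- Points of `ℝⁿ`. -/
abbrev Pt (n : ℕ) := EuclideanSpace ℝ (Fin n)

/-- The axis-parallel closed cube with lower corner `c` and edge length `r`. -/
def closedCube {n : ℕ} (c : Pt n) (r : ℝ) : Set (Pt n) :=
  {x | ∀ i, c i ≤ x i ∧ x i ≤ c i + r}

/-- `Ncov r E`: the minimal number of axis-parallel closed cubes of edge length `r`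
needed to cover `E` (junk value `0` if no finite cover exists). -/
def Ncov {n : ℕ} (r : ℝ) (E : Set (Pt n)) : ℕ :=
  sInf {m : ℕ | ∃ s : Finset (Pt n), s.card = m ∧ E ⊆ ⋃ c ∈ s, closedCube c r}

/-- Upper Minkowski dimension (intended for bounded sets). -/
def dimM {n : ℕ} (F : Set (Pt n)) : ℝ :=
  limsup (fun r : ℝ => Real.log (Ncov r F) / Real.log (1 / r)) (nhdsWithin 0 (Ioi 0))

/-- The set of ratios `log N_cov(r, E ∩ B) / log (r_B / r)` over balls `B = B(x, r_B)`
with `N * r ≤ r_B ≤ R`. -/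
def locRatios {n : ℕ} (E : Set (Pt n)) (N r R : ℝ) : Set ℝ :=
  {d | ∃ (x : Pt n) (rB : ℝ), 0 < rB ∧ N * r ≤ rB ∧ rB ≤ R ∧
        d = Real.log (Ncov r (E ∩ ball x rB)) / Real.log (rB / r)}

/-- The local self-similar Minkowski dimension. -/
def dimLoc {n : ℕ} (E : Set (Pt n)) : ℝ :=
  liminf (fun N : ℝ =>
    limsup (fun r : ℝ => sSup (locRatios E N r 1)) (nhdsWithin 0 (Ioi 0))) atTop

/-- The global self-similar Minkowski dimension. -/
def dimGlob {n : ℕ} (E : Set (Pt n)) : ℝ :=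
  liminf (fun N : ℝ =>
    sSup {d : ℝ | ∃ r : ℝ, 0 < r ∧ ∃ (x : Pt n) (rB : ℝ), 0 < rB ∧ N * r ≤ rB ∧
      d = Real.log (Ncov r (E ∩ ball x rB)) / Real.log (rB / r)}) atTop

/-- The `Q_α`-energy `Φ_α(u, B(x₀,r)) = |B|^{2α/n-1} ∬_{B×B} |u(x)-u(y)|²/|x-y|^{n+2α}`. -/
def Phi {n : ℕ} (α : ℝ) (u : Pt n → ℝ) (x₀ : Pt n) (r : ℝ) : ℝ≥0∞ :=
  (volume (ball x₀ r)) ^ (2 * α / (n : ℝ) - 1) *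
    ∫⁻ x in ball x₀ r, ∫⁻ y in ball x₀ r,
      ENNReal.ofReal (|u x - u y| ^ 2 / ‖x - y‖ ^ ((n : ℝ) + 2 * α))

/-- The `Q_α`-norm of `u`. -/
def Qnorm {n : ℕ} (α : ℝ) (u : Pt n → ℝ) : ℝ≥0∞ :=
  ⨆ (x₀ : Pt n) (r : ℝ) (_ : 0 < r),
    (ENNReal.ofReal (r ^ (2 * α - (n : ℝ))) *
      ∫⁻ x in ball x₀ r, ∫⁻ y in ball x₀ r,
        ENNReal.ofReal (|u x - u y| ^ 2 / ‖x - y‖ ^ ((n : ℝ) + 2 * α))) ^ (1/2 : ℝ)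

/-- Membership in `Q_α(ℝⁿ)`: `u ∈ L²_loc` and the `Q_α`-norm is finite. -/
def MemQ {n : ℕ} (α : ℝ) (u : Pt n → ℝ) : Prop :=
  LocallyIntegrable (fun x => |u x| ^ 2) volume ∧ Qnorm α u < ⊤

/-- `Ψ_{α,q}(u, B(x₀,r))`. -/
def Psi {n : ℕ} (α q : ℝ) (u : Pt n → ℝ) (x₀ : Pt n) (r : ℝ) : ℝ≥0∞ :=
  ∑' k : ℕ, ENNReal.ofReal ((2:ℝ) ^ (2 * (k:ℝ) * α)) *
    ((volume (ball x₀ r))⁻¹ * ∫⁻ x in ball x₀ r,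
      ⨅ c : ℝ, ((volume (ball x ((2:ℝ) ^ (-(k:ℝ)) * r)))⁻¹ *
        ∫⁻ z in ball x ((2:ℝ) ^ (-(k:ℝ)) * r), ENNReal.ofReal (|u z - c| ^ q)) ^ (2 / q))

/-- The quantity `inf_c ( ⨍_{B(x,ρ)} |u - c|^σ )^{1/σ}`. -/
def oscAvg {n : ℕ} (σ : ℝ) (u : Pt n → ℝ) (x : Pt n) (ρ : ℝ) : ℝ≥0∞ :=
  ⨅ c : ℝ, ((volume (ball x ρ))⁻¹ *
    ∫⁻ w in ball x ρ, ENNReal.ofReal (|u w - c| ^ σ)) ^ (1/σ)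

/-- `f` is `η`-quasisymmetric, where the homeomorphism `η` of `[0,∞)` is encoded as an
order isomorphism of `ℝ≥0`. -/
def IsQS {n : ℕ} (f : Pt n → Pt n) (η : ℝ≥0 ≃o ℝ≥0) : Prop :=
  ∀ x a b : Pt n, x ≠ b →
    nndist (f x) (f a) ≤ η (nndist x a / nndist x b) * nndist (f x) (f b)

/-- The local Muckenhoupt class `A₁(ℝⁿ; S)`: the `A₁` condition holds on every ball
`B(x₀,r)` with `2r < dist(x₀, S)`. -/
def MemA1 {n : ℕ} (w : Pt n → ℝ) (S : Set (Pt n)) : Prop :=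
  ∃ C > 0, ∀ (x₀ : Pt n) (r : ℝ), 0 < r →
    ENNReal.ofReal (2 * r) < EMetric.infEdist x₀ S →
    ⨍ x in ball x₀ r, w x ∂volume ≤ C * essInf w (volume.restrict (ball x₀ r))

/-- `J` is the a.e. Jacobian of `f` (`J = |det Df|` a.e.) and the change-of-variables
formula holds for all nonnegative measurable integrands. -/
def JacobianCOV {n : ℕ} (f : Pt n → Pt n) (J : Pt n → ℝ) : Prop :=
  (∀ᵐ x ∂(volume : Measure (Pt n)), ∃ D : Pt n →L[ℝ] Pt n,
      HasFDerivAt f D x ∧ J x = |D.det|) ∧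
  ∀ g : Pt n → ℝ≥0∞, Measurable g →
    ∫⁻ x, g (f x) * ENNReal.ofReal (J x) = ∫⁻ y, g y

/-- The hyperplane `ℝ^{n-1} × {0}` (the last coordinate vanishes). -/
def Hset (n : ℕ) : Set (Pt n) := {x | ∀ i : Fin n, (i : ℕ) = n - 1 → x i = 0}

/-- The open upper half-space (last coordinate positive). -/
def upperHalf (n : ℕ) : Set (Pt n) := {x | ∀ i : Fin n, (i : ℕ) = n - 1 → 0 < x i}

/-- The open lower half-space (last coordinate negative). -/
def lowerHalf (n : ℕ) : Set (Pt n) := {x | ∀ i : Fin n, (i : ℕ) = n - 1 → x i < 0}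

/-- The hyperbolic length `∫₀¹ |γ'(t)|/dist(γ(t),H) dt` of a curve `γ`. -/
def hypLen {n : ℕ} (H : Set (Pt n)) (γ : ℝ → Pt n) : ℝ :=
  ∫ t in (0:ℝ)..1, ‖deriv γ t‖ / Metric.infDist (γ t) H

/-- The hyperbolic-type distance associated with the set `H`: the infimum of hyperbolic
lengths of differentiable curves joining `z` and `w` in the complement of `H`. -/
def hypDist {n : ℕ} (H : Set (Pt n)) (z w : Pt n) : ℝ :=
  sInf {L : ℝ | ∃ γ : ℝ → Pt n, γ 0 = z ∧ γ 1 = w ∧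
    (∀ t ∈ Icc (0:ℝ) 1, DifferentiableAt ℝ γ t ∧ γ t ∉ H) ∧ L = hypLen H γ}

/-- `L_f(z,t) = sup { |f(z)-f(w)| : |z-w| ≤ t }`. -/
def Lf {n : ℕ} (f : Pt n → Pt n) (z : Pt n) (t : ℝ) : ℝ :=
  sSup ((fun w => dist (f z) (f w)) '' closedBall z t)

/-! ### Integers with prescribed digit positions -/

/-- The natural numbers whose nonzero binary digits are all at positions in `J`; the
one-dimensional factor of the set `E`. -/
def digitSet (J : Set ℕ) : Set ℕ := {m | ∀ j, m.testBit j → j ∈ J}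

open Classical in
/-- The values that the `k` binary digits at the positions `a, …, a + k - 1` of an element of
`digitSet J` may take. -/
def digitBlock (J : Set ℕ) (a k : ℕ) : Finset ℕ :=
  {t ∈ Finset.range (2 ^ k) | ∀ i, t.testBit i → a + i ∈ J}

open Classical in
/-- The number of elements of `J` in the window `[a, a + k)`. -/
def windowCount (J : Set ℕ) (a k : ℕ) : ℕ := ((Finset.range k).filter (a + · ∈ J)).card

/-- `J` has density `σ` with discrepancy at most `1` in every window. -/
def IsBalanced (J : Set ℕ) (σ : ℝ) : Prop := ∀ a k, |(windowCount J a k : ℝ) - k * σ| ≤ 1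

/-- The positions at which `⌊jσ⌋` jumps: the standard balanced set of density `σ ∈ [0, 1]`. -/
def jumpSet (σ : ℝ) : Set ℕ := {j | ⌊j * σ⌋₊ < ⌊(j + 1 : ℕ) * σ⌋₊}

section Digits

variable {J : Set ℕ} {σ : ℝ}

lemma mem_digitBlock {a k t : ℕ} :
    t ∈ digitBlock J a k ↔ t < 2 ^ k ∧ ∀ i, t.testBit i → a + i ∈ J := by
  simp only [digitBlock, Finset.mem_filter, Finset.mem_range]

lemma div_mod_mem_digitBlock {m : ℕ} (hm : m ∈ digitSet J) (a k : ℕ) :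
    m / 2 ^ a % 2 ^ k ∈ digitBlock J a k := by
  refine mem_digitBlock.2 ⟨Nat.mod_lt _ (by positivity), fun i hi => ?_⟩
  rw [Nat.testBit_mod_two_pow, Nat.testBit_div_two_pow, Bool.and_eq_true] at hi
  exact hm _ (by rw [add_comm]; exact hi.2)

lemma mem_digitSet_of_mem_digitBlock_zero {k t : ℕ} (ht : t ∈ digitBlock J 0 k) :
    t ∈ digitSet J := fun j hj => by
  simpa only [zero_add] using (mem_digitBlock.1 ht).2 j hj

lemma card_digitBlock (J : Set ℕ) (a k : ℕ) :
    (digitBlock J a k).card = 2 ^ windowCount J a k := by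
  classical
  rw [windowCount, ← Finset.card_powerset]
  refine Finset.card_equiv Finset.equivBitIndices fun t => ?_
  simp only [mem_digitBlock, Finset.equivBitIndices_apply, Finset.mem_powerset, Finset.subset_iff,
    Finset.mem_filter, Finset.mem_range, List.mem_toFinset, Nat.mem_bitIndices]
  refine ⟨fun ⟨hlt, hJ⟩ i hi => ⟨?_, hJ i hi⟩, fun h => ⟨?_, fun i hi => (h hi).2⟩⟩
  · by_contra! hki
    have := Nat.testBit_lt_two_pow (hlt.trans_le (Nat.pow_le_pow_right two_pos hki))
    simp_all
  · refine Nat.lt_pow_two_of_testBit t fun i hki => ?_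
    by_contra hi
    exact hki.not_gt (h (by simpa using hi)).1

lemma floor_succ_mul_le (h0 : 0 ≤ σ) (h1 : σ ≤ 1) (j : ℕ) :
    ⌊(j + 1 : ℕ) * σ⌋₊ ≤ ⌊j * σ⌋₊ + 1 := by
  rw [← Nat.floor_add_one (by positivity)]
  refine Nat.floor_le_floor ?_
  push_cast
  linarith

lemma floor_add_windowCount_jumpSet (h0 : 0 ≤ σ) (h1 : σ ≤ 1) (a k : ℕ) :
    ⌊a * σ⌋₊ + windowCount (jumpSet σ) a k = ⌊(a + k : ℕ) * σ⌋₊ := by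
  classical
  induction k with
  | zero => simp [windowCount]
  | succ k ih =>
    have hup : ⌊(a + k + 1 : ℕ) * σ⌋₊ ≤ ⌊(a + k : ℕ) * σ⌋₊ + 1 := floor_succ_mul_le h0 h1 _
    have hmono : ⌊(a + k : ℕ) * σ⌋₊ ≤ ⌊(a + k + 1 : ℕ) * σ⌋₊ :=
      Nat.floor_le_floor (mul_le_mul_of_nonneg_right (by push_cast; linarith) h0)
    rw [windowCount, Finset.range_add_one, Finset.filter_insert, ← add_assoc]
    split_ifs with hJ
    · rw [Finset.card_insert_of_notMem (by simp), ← add_assoc, ← windowCount, ih]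
      exact le_antisymm (Nat.succ_le_of_lt hJ) hup
    · rw [← windowCount, ih]
      exact le_antisymm hmono (not_lt.1 hJ)

lemma isBalanced_jumpSet (h0 : 0 ≤ σ) (h1 : σ ≤ 1) : IsBalanced (jumpSet σ) σ := by
  intro a k
  have hcount : (⌊a * σ⌋₊ + windowCount (jumpSet σ) a k : ℝ) = ⌊(a + k : ℕ) * σ⌋₊ := by
    exact_mod_cast floor_add_windowCount_jumpSet h0 h1 a k
  have ha : ⌊a * σ⌋₊ ≤ a * σ := Nat.floor_le (by positivity)
  have ha' : a * σ < ⌊a * σ⌋₊ + 1 := Nat.lt_floor_add_one _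
  have hak : ⌊(a + k : ℕ) * σ⌋₊ ≤ (a + k : ℕ) * σ := Nat.floor_le (by positivity)
  have hak' : (a + k : ℕ) * σ < ⌊(a + k : ℕ) * σ⌋₊ + 1 := Nat.lt_floor_add_one _
  have hsplit : ((a + k : ℕ) : ℝ) * σ = a * σ + k * σ := by push_cast; ring
  rw [abs_le]
  constructor <;> linarith

lemma IsBalanced.card_digitBlock_le (hJ : IsBalanced J σ) (a k : ℕ) :
    ((digitBlock J a k).card : ℝ) ≤ 2 * ((2 : ℝ) ^ k) ^ σ := by
  rw [card_digitBlock, Nat.cast_pow, Nat.cast_ofNat, ← Real.rpow_natCast 2 (windowCount J a k)]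
  calc (2 : ℝ) ^ (windowCount J a k : ℝ) ≤ 2 ^ (1 + k * σ) :=
        Real.rpow_le_rpow_of_exponent_le one_le_two (by linarith [(abs_le.1 (hJ a k)).2])
    _ = 2 * ((2 : ℝ) ^ k) ^ σ := by
        rw [Real.rpow_add two_pos, Real.rpow_one, Real.rpow_mul two_pos.le, Real.rpow_natCast]

lemma IsBalanced.le_card_digitBlock (hJ : IsBalanced J σ) (a k : ℕ) :
    2⁻¹ * ((2 : ℝ) ^ k) ^ σ ≤ (digitBlock J a k).card := by
  rw [card_digitBlock, Nat.cast_pow, Nat.cast_ofNat, ← Real.rpow_natCast 2 (windowCount J a k)]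
  calc 2⁻¹ * ((2 : ℝ) ^ k) ^ σ = 2 ^ (-1 + k * σ) := by
        rw [Real.rpow_add two_pos, Real.rpow_neg_one, Real.rpow_mul two_pos.le, Real.rpow_natCast]
    _ ≤ (2 : ℝ) ^ (windowCount J a k : ℝ) :=
        Real.rpow_le_rpow_of_exponent_le one_le_two (by linarith [(abs_le.1 (hJ a k)).1])

/-- An interval of length `2 ^ (a + k)` meets at most two dyadic intervals of that length, and each
of these contains at most `#(digitBlock J a k)` dyadic intervals of length `2 ^ a` meeting
`digitSet J`. -/
lemma exists_finset_div_mul_two_pow_mem (J : Set ℕ) (a k : ℕ) (x : ℝ) : ∃ S : Finset ℕ,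
    S.card ≤ 2 * (digitBlock J a k).card ∧
    ∀ m ∈ digitSet J, x < m → (m : ℝ) < x + 2 ^ (a + k) → m / 2 ^ a * 2 ^ a ∈ S := by
  set P : ℝ := 2 ^ (a + k) with hP
  have hP0 : 0 < P := by positivity
  set q : ℕ := ⌊x / P⌋₊
  refine ⟨(({q, q + 1} : Finset ℕ) ×ˢ digitBlock J a k).image
    (fun p => (2 ^ k * p.1 + p.2) * 2 ^ a), ?_, fun m hm hxm hmx => ?_⟩
  · refine Finset.card_image_le.trans ?_
    rw [Finset.card_product]
    gcongr
    exact Finset.card_le_two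
  · refine Finset.mem_image.2 ⟨(m / 2 ^ (a + k), m / 2 ^ a % 2 ^ k),
      Finset.mem_product.2 ⟨?_, div_mod_mem_digitBlock hm a k⟩, ?_⟩
    · have hfloor : m / 2 ^ (a + k) = ⌊(m : ℝ) / P⌋₊ := by
        rw [← Nat.floor_div_eq_div (K := ℝ), hP, Nat.cast_pow, Nat.cast_ofNat]
      have hlow : q ≤ m / 2 ^ (a + k) := hfloor ▸ Nat.floor_le_floor (by gcongr)
      have hup : m / 2 ^ (a + k) < q + 2 := by
        rw [hfloor, Nat.floor_lt (by positivity)]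
        have hxq : x / P < q + 1 := Nat.lt_floor_add_one _
        have hmP : (m : ℝ) / P < x / P + 1 := by
          rw [div_add_one hP0.ne']
          gcongr
        push_cast
        linarith
      simp only [Finset.mem_insert, Finset.mem_singleton]
      omega
    · rw [pow_add, ← Nat.div_div_eq_div_mul, Nat.div_add_mod]

lemma exists_dyadic_scales {r R : ℝ} (hR : 0 < R) (hrR : r ≤ R) : ∃ a k : ℕ,
    (2 : ℝ) ^ a ≤ max r 1 ∧ 2 * R < 2 ^ (a + k) ∧ (2 : ℝ) ^ k ≤ 8 * (max R 1 / max r 1) := by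
  obtain ⟨a, ha, ha'⟩ := exists_nat_pow_near (le_max_right r 1) (one_lt_two : (1 : ℝ) < 2)
  obtain ⟨b, hb, hb'⟩ := exists_nat_pow_near (le_max_right (2 * R) 1) (one_lt_two : (1 : ℝ) < 2)
  have hab : a < b + 1 := by
    refine (pow_lt_pow_iff_right₀ (one_lt_two : (1 : ℝ) < 2)).1 (lt_of_le_of_lt ?_ hb')
    exact ha.trans (max_le_max (by linarith) le_rfl)
  obtain ⟨k, hk⟩ := Nat.exists_eq_add_of_lt hab
  replace hk : b + 1 = a + (k + 1) := by omega
  refine ⟨a, k + 1, ha, hk ▸ (le_max_left _ _).trans_lt hb', ?_⟩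
  rw [← mul_div_assoc, le_div_iff₀ (by positivity)]
  calc (2 : ℝ) ^ (k + 1) * max r 1 ≤ 2 ^ (k + 1) * 2 ^ (a + 1) := by gcongr
    _ = 4 * 2 ^ b := by
        rw [← pow_add, show k + 1 + (a + 1) = b + 2 by omega, pow_add]
        ring
    _ ≤ 4 * max (2 * R) 1 := by gcongr
    _ ≤ 4 * (2 * max R 1) := by
        gcongr
        exact max_le (by linarith [le_max_left R 1]) (by linarith [le_max_right R 1])
    _ = 8 * max R 1 := by ring

lemma IsBalanced.exists_finset_interval_cover (hJ : IsBalanced J σ) (h0 : 0 ≤ σ) (h1 : σ ≤ 1)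
    (x : ℝ) {R r : ℝ} (hr : 0 < r) (hrR : r ≤ R) : ∃ S : Finset ℝ,
    (S.card : ℝ) ≤ 32 * (max R 1 / max r 1) ^ σ ∧
    ∀ m ∈ digitSet J, x - R < m → (m : ℝ) < x + R → ∃ c ∈ S, c ≤ m ∧ (m : ℝ) ≤ c + r := by
  obtain ⟨a, k, ha, hR, hk⟩ := exists_dyadic_scales (hr.trans_le hrR) hrR
  obtain ⟨S, hScard, hS⟩ := exists_finset_div_mul_two_pow_mem J a k (x - R)
  refine ⟨S.image (fun c : ℕ => (c : ℝ)), ?_, fun m hm hxm hmx => ?_⟩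
  · have hq : 0 ≤ max R 1 / max r 1 := by positivity
    have h8 : (8 : ℝ) ^ σ ≤ 8 := by
      simpa only [Real.rpow_one] using Real.rpow_le_rpow_of_exponent_le (by norm_num) h1
    calc ((S.image (fun c : ℕ => (c : ℝ))).card : ℝ) ≤ (2 * (digitBlock J a k).card : ℕ) := by
          exact_mod_cast Finset.card_image_le.trans hScard
      _ ≤ 2 * (2 * ((2 : ℝ) ^ k) ^ σ) := by
          push_cast
          gcongr
          exact hJ.card_digitBlock_le a k
      _ ≤ 2 * (2 * (8 * (max R 1 / max r 1)) ^ σ) := by gcongr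
      _ = 4 * 8 ^ σ * (max R 1 / max r 1) ^ σ := by
          rw [Real.mul_rpow (by norm_num) hq]
          ring
      _ ≤ 4 * 8 * (max R 1 / max r 1) ^ σ := by gcongr
      _ = 32 * (max R 1 / max r 1) ^ σ := by ring
  · refine ⟨_, Finset.mem_image_of_mem _ (hS m hm hxm (by linarith)), ?_, ?_⟩
    · exact_mod_cast Nat.div_mul_le_self m (2 ^ a)
    · have hlt : m + 1 ≤ m / 2 ^ a * 2 ^ a + 2 ^ a := Nat.lt_div_mul_add (Nat.two_pow_pos a)
      have hlt' : (m : ℝ) + 1 ≤ (m / 2 ^ a * 2 ^ a : ℕ) + 2 ^ a := by exact_mod_cast hlt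
      have har : (2 : ℝ) ^ a ≤ r + 1 := ha.trans (max_le (by linarith) (by linarith))
      linarith

end Digits

/-! ### Regular sets of integer points -/

/-- `E` consists of integer points and is regular of dimension `s` at scales above `1`: a ball of
radius `R` is covered by `K (max R 1 / max r 1) ^ s` cubes of edge `r`, and the balls about the
origin contain a corresponding number of points. -/
structure IsRegularLattice {n : ℕ} (E : Set (Pt n)) (s K k : ℝ) : Prop where
  exponent_nonneg : 0 ≤ s
  one_le_upper : 1 ≤ K
  lower_pos : 0 < k
  exists_int : ∀ x ∈ E, ∀ i, ∃ m : ℤ, x i = (m : ℝ)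
  exists_cover : ∀ (x : Pt n) (R r : ℝ), 0 < r → r ≤ R → ∃ S : Finset (Pt n),
    (S.card : ℝ) ≤ K * (max R 1 / max r 1) ^ s ∧ E ∩ ball x R ⊆ ⋃ c ∈ S, closedCube c r
  exists_finset : ∀ b : ℕ, ∃ F : Finset (Pt n),
    (F : Set (Pt n)) ⊆ E ∩ ball 0 ((n + 1) * 2 ^ b) ∧ k * ((2 : ℝ) ^ b) ^ s ≤ F.card

/-- The points of `ℤⁿ` all of whose coordinates lie in `digitSet J`. -/
def latticeSet (n : ℕ) (J : Set ℕ) : Set (Pt n) := {x | ∀ i, ∃ m ∈ digitSet J, x i = (m : ℝ)}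

section LatticeSet

variable {n : ℕ} {J : Set ℕ} {σ : ℝ}

lemma exists_finset_closedCube_cover (S : Fin n → Finset ℝ) (r : ℝ) : ∃ T : Finset (Pt n),
    T.card ≤ ∏ i, (S i).card ∧
    ∀ y : Pt n, (∀ i, ∃ c ∈ S i, c ≤ y i ∧ y i ≤ c + r) → y ∈ ⋃ c ∈ T, closedCube c r := by
  refine ⟨(Fintype.piFinset S).image (WithLp.toLp 2), ?_, fun y hy => ?_⟩
  · rw [← Fintype.card_piFinset]
    exact Finset.card_image_le
  · choose c hcS hc using hy
    simp only [mem_iUnion]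
    exact ⟨_, Finset.mem_image_of_mem _ (Fintype.mem_piFinset.2 hcS), hc⟩

lemma norm_lt_of_forall_abs_le {x : Pt n} {B : ℝ} (hB : 0 < B) (hx : ∀ i, |x i| ≤ B) :
    ‖x‖ < (n + 1) * B := by
  rw [EuclideanSpace.norm_eq]
  refine (Real.sqrt_lt' (by positivity)).2 ?_
  calc ∑ i, ‖x i‖ ^ 2 ≤ ∑ _i : Fin n, B ^ 2 :=
        Finset.sum_le_sum fun i _ => pow_le_pow_left₀ (norm_nonneg _) (hx i) 2
    _ = n * B ^ 2 := by simp
    _ < ((n + 1) * B) ^ 2 := by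
        rw [mul_pow]
        gcongr
        nlinarith [Nat.cast_nonneg (α := ℝ) n]

lemma abs_apply_sub_le_dist (x y : Pt n) (i : Fin n) : |x i - y i| ≤ dist x y := by
  rw [dist_eq_norm]
  exact PiLp.norm_apply_le (x - y) i

lemma IsBalanced.exists_latticeSet_cover (hJ : IsBalanced J σ) (h0 : 0 ≤ σ) (h1 : σ ≤ 1)
    (x : Pt n) {R r : ℝ} (hr : 0 < r) (hrR : r ≤ R) : ∃ T : Finset (Pt n),
    (T.card : ℝ) ≤ 32 ^ n * (max R 1 / max r 1) ^ (n * σ) ∧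
    latticeSet n J ∩ ball x R ⊆ ⋃ c ∈ T, closedCube c r := by
  choose S hScard hS using fun i => hJ.exists_finset_interval_cover h0 h1 (x i) hr hrR
  obtain ⟨T, hTcard, hT⟩ := exists_finset_closedCube_cover S r
  refine ⟨T, ?_, fun y ⟨hy, hyx⟩ => hT y fun i => ?_⟩
  · have hq : 0 ≤ max R 1 / max r 1 := by positivity
    calc (T.card : ℝ) ≤ ∏ i, ((S i).card : ℝ) := by exact_mod_cast hTcard
      _ ≤ ∏ _i : Fin n, 32 * (max R 1 / max r 1) ^ σ :=
          Finset.prod_le_prod (fun _ _ => by positivity) fun i _ => hScard i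
      _ = 32 ^ n * (max R 1 / max r 1) ^ (n * σ) := by
          rw [Finset.prod_const, Finset.card_univ, Fintype.card_fin, mul_pow, mul_comm (n : ℝ) σ,
            Real.rpow_mul hq, Real.rpow_natCast]
  · obtain ⟨m, hm, hym⟩ := hy i
    have hdist := abs_lt.1 ((abs_apply_sub_le_dist y x i).trans_lt (mem_ball.1 hyx))
    rw [hym] at hdist ⊢
    exact hS i m hm (by linarith) (by linarith)

lemma IsBalanced.exists_finset_subset_latticeSet (hJ : IsBalanced J σ) (n b : ℕ) :
    ∃ F : Finset (Pt n), (F : Set (Pt n)) ⊆ latticeSet n J ∩ ball 0 ((n + 1) * 2 ^ b) ∧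
      2⁻¹ ^ n * ((2 : ℝ) ^ b) ^ (n * σ) ≤ F.card := by
  set toPt : (Fin n → ℕ) → Pt n := fun v => WithLp.toLp 2 (fun i => (v i : ℝ))
  have htoPt : Function.Injective toPt := fun v w h =>
    funext fun i => Nat.cast_injective (R := ℝ) (congrArg (fun z : Pt n => z i) h)
  refine ⟨(Fintype.piFinset fun _ => digitBlock J 0 b).image toPt, ?_, ?_⟩
  · rw [Finset.coe_image, image_subset_iff]
    intro v hv
    have hv : ∀ i, v i ∈ digitBlock J 0 b := Fintype.mem_piFinset.1 hv
    refine ⟨fun i => ⟨v i, mem_digitSet_of_mem_digitBlock_zero (hv i), rfl⟩, ?_⟩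
    rw [mem_ball_zero_iff]
    refine norm_lt_of_forall_abs_le (by positivity) fun i => ?_
    have hlt : v i < 2 ^ b := (mem_digitBlock.1 (hv i)).1
    calc |(v i : ℝ)| = v i := Nat.abs_cast _
      _ ≤ 2 ^ b := by exact_mod_cast hlt.le
  · rw [Finset.card_image_of_injective _ htoPt, Fintype.card_piFinset, Finset.prod_const,
      Finset.card_univ, Fintype.card_fin, Nat.cast_pow, mul_comm (n : ℝ) σ,
      Real.rpow_mul (by positivity), Real.rpow_natCast, ← mul_pow]
    exact pow_le_pow_left₀ (by positivity) (hJ.le_card_digitBlock 0 b) n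

lemma IsBalanced.isRegularLattice_latticeSet (hJ : IsBalanced J σ) (h0 : 0 ≤ σ) (h1 : σ ≤ 1)
    (n : ℕ) : IsRegularLattice (latticeSet n J) (n * σ) (32 ^ n) (2⁻¹ ^ n) where
  exponent_nonneg := by positivity
  one_le_upper := one_le_pow₀ (by norm_num)
  lower_pos := by positivity
  exists_int x hx i := by
    obtain ⟨m, -, hm⟩ := hx i
    exact ⟨m, by rw [hm, Int.cast_natCast]⟩
  exists_cover x _ _ hr hrR := hJ.exists_latticeSet_cover h0 h1 x hr hrR
  exists_finset b := hJ.exists_finset_subset_latticeSet n b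

end LatticeSet

section IntegerPoints

variable {n : ℕ} {E : Set (Pt n)}

lemma one_le_dist_of_int (hint : ∀ x ∈ E, ∀ i, ∃ m : ℤ, x i = (m : ℝ)) :
    E.Pairwise fun x y => 1 ≤ dist x y := by
  intro x hx y hy hxy
  obtain ⟨i, hi⟩ : ∃ i, x i ≠ y i := by
    by_contra! h
    exact hxy (PiLp.ext h)
  obtain ⟨a, ha⟩ := hint x hx i
  obtain ⟨b, hb⟩ := hint y hy i
  have hab : a ≠ b := by
    rintro rfl
    exact hi (ha.trans hb.symm)
  calc (1 : ℝ) ≤ |(a : ℝ) - b| := by exact_mod_cast Int.one_le_abs (sub_ne_zero.2 hab)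
    _ = |x i - y i| := by rw [ha, hb]
    _ ≤ dist x y := abs_apply_sub_le_dist x y i

lemma countable_of_int (hint : ∀ x ∈ E, ∀ i, ∃ m : ℤ, x i = (m : ℝ)) : E.Countable := by
  refine (countable_range
    (fun v : Fin n → ℤ => (WithLp.toLp 2 (fun i => (v i : ℝ)) : Pt n))).mono fun x hx => ?_
  choose v hv using hint x hx
  exact ⟨v, PiLp.ext fun i => (hv i).symm⟩

/-- A cube of edge less than `1` contains at most one integer point. -/
lemma card_le_card_of_int_of_cover (hint : ∀ x ∈ E, ∀ i, ∃ m : ℤ, x i = (m : ℝ)) {r : ℝ}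
    (hr : r < 1) {F S : Finset (Pt n)} (hF : (F : Set (Pt n)) ⊆ E)
    (hS : (F : Set (Pt n)) ⊆ ⋃ c ∈ S, closedCube c r) : F.card ≤ S.card := by
  have hcube : ∀ x ∈ F, ∃ c ∈ S, x ∈ closedCube c r := fun x hx => by
    simpa only [mem_iUnion, exists_prop] using hS (Finset.mem_coe.2 hx)
  choose! c hcS hc using hcube
  refine Finset.card_le_card_of_injOn c hcS fun x hx y hy hxy => PiLp.ext fun i => ?_
  obtain ⟨a, ha⟩ := hint x (hF hx) i
  obtain ⟨b, hb⟩ := hint y (hF hy) i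
  have hcx := hc x hx i
  have hcy := hc y hy i
  rw [hxy, ha] at hcx
  rw [hb] at hcy
  have hab : a < b + 1 := by exact_mod_cast (by linarith : (a : ℝ) < b + 1)
  have hba : b < a + 1 := by exact_mod_cast (by linarith : (b : ℝ) < a + 1)
  rw [ha, hb, show a = b by omega]

end IntegerPoints

/-! ### Self-similar Minkowski dimensions of regular sets -/

/-- The ratios `log N_cov(r, E ∩ B) / log (r_B / r)` over all scales `r` and balls `B` with
`N r ≤ r_B`, whose suprema define `dimGlob E`. -/
def globRatios {n : ℕ} (E : Set (Pt n)) (N : ℝ) : Set ℝ :=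
  {d | ∃ r : ℝ, 0 < r ∧ ∃ (x : Pt n) (rB : ℝ), 0 < rB ∧ N * r ≤ rB ∧
    d = Real.log (Ncov r (E ∩ ball x rB)) / Real.log (rB / r)}

lemma tendsto_add_mul_div_add_mul (c d s : ℝ) {l : ℝ} (hl : 0 < l) :
    Tendsto (fun b : ℕ => (c + s * (b * l)) / (d + b * l)) atTop (nhds s) := by
  have hden : Tendsto (fun b : ℕ => d + b * l) atTop atTop :=
    tendsto_atTop_add_const_left _ _ (tendsto_natCast_atTop_atTop.atTop_mul_const hl)
  have hlim : Tendsto (fun b : ℕ => s + (c - s * d) / (d + b * l)) atTop (nhds s) := by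
    simpa only [add_zero] using (hden.const_div_atTop (c - s * d)).const_add s
  refine hlim.congr' ?_
  filter_upwards [hden.eventually_gt_atTop 0] with b hb
  field_simp
  ring

namespace IsRegularLattice

variable {n : ℕ} {E : Set (Pt n)} {s K k : ℝ}

lemma pairwise_one_le_dist (hE : IsRegularLattice E s K k) : E.Pairwise fun x y => 1 ≤ dist x y :=
  one_le_dist_of_int hE.exists_int

lemma card_le (hE : IsRegularLattice E s K k) {x : Pt n} {R : ℝ} (hR : 1 ≤ R)
    {F : Finset (Pt n)} (hF : (F : Set (Pt n)) ⊆ E ∩ ball x R) : (F.card : ℝ) ≤ K * R ^ s := by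
  obtain ⟨S, hScard, hS⟩ := hE.exists_cover x R (1 / 2) (by norm_num) (by linarith)
  rw [max_eq_left hR, max_eq_right (by norm_num), div_one] at hScard
  refine le_trans ?_ hScard
  exact_mod_cast card_le_card_of_int_of_cover hE.exists_int (by norm_num)
    (hF.trans inter_subset_left) (hF.trans hS)

lemma not_isBounded (hE : IsRegularLattice E s K k) (hs : 0 < s) : ¬ Bornology.IsBounded E := by
  intro hb
  obtain ⟨R, hR⟩ := hb.subset_ball 0
  have hlim : Tendsto (fun b : ℕ => k * ((2 : ℝ) ^ b) ^ s) atTop atTop :=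
    ((_root_.tendsto_rpow_atTop hs).comp
      (tendsto_pow_atTop_atTop_of_one_lt one_lt_two)).const_mul_atTop hE.lower_pos
  obtain ⟨b, hb⟩ := (hlim.eventually_gt_atTop (K * (max R 1) ^ s)).exists
  obtain ⟨F, hFE, hFcard⟩ := hE.exists_finset b
  have hFle := hE.card_le (x := 0) (le_max_right R 1) (F := F) fun y hy =>
    ⟨(hFE hy).1, ball_subset_ball (le_max_left _ _) (hR (hFE hy).1)⟩
  linarith

lemma Ncov_le (hE : IsRegularLattice E s K k) (x : Pt n) {R r : ℝ} (hr : 0 < r) (hrR : r ≤ R) :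
    (Ncov r (E ∩ ball x R) : ℝ) ≤ K * (max R 1 / max r 1) ^ s := by
  obtain ⟨S, hScard, hS⟩ := hE.exists_cover x R r hr hrR
  refine le_trans ?_ hScard
  exact_mod_cast (Nat.sInf_le ⟨S, rfl, hS⟩ : Ncov r (E ∩ ball x R) ≤ S.card)

lemma card_le_Ncov (hE : IsRegularLattice E s K k) {x : Pt n} {R r : ℝ} (hr : 0 < r) (hr1 : r < 1)
    (hrR : r ≤ R) {F : Finset (Pt n)} (hF : (F : Set (Pt n)) ⊆ E ∩ ball x R) :
    F.card ≤ Ncov r (E ∩ ball x R) := by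
  obtain ⟨S₀, -, hS₀⟩ := hE.exists_cover x R r hr hrR
  have hne : {m : ℕ | ∃ S : Finset (Pt n), S.card = m ∧
      E ∩ ball x R ⊆ ⋃ c ∈ S, closedCube c r}.Nonempty := ⟨_, S₀, rfl, hS₀⟩
  obtain ⟨S, hScard, hS⟩ := Nat.sInf_mem hne
  rw [Ncov, ← hScard]
  exact card_le_card_of_int_of_cover hE.exists_int hr1 (hF.trans inter_subset_left) (hF.trans hS)

lemma log_Ncov_le (hE : IsRegularLattice E s K k) (x : Pt n) {R r : ℝ} (hr : 0 < r)
    (hrR : r ≤ R) : Real.log (Ncov r (E ∩ ball x R)) ≤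
      Real.log K + s * Real.log (max R 1 / max r 1) := by
  have hK := hE.one_le_upper
  have hq : 1 ≤ max R 1 / max r 1 :=
    (one_le_div (by positivity)).2 (max_le_max hrR le_rfl)
  rw [← Real.log_rpow (by positivity), ← Real.log_mul (by positivity) (by positivity)]
  rcases Nat.eq_zero_or_pos (Ncov r (E ∩ ball x R)) with hzero | hpos
  · rw [hzero, Nat.cast_zero, Real.log_zero]
    exact Real.log_nonneg (one_le_mul_of_one_le_of_one_le hK
      (Real.one_le_rpow hq hE.exponent_nonneg))
  · exact Real.log_le_log (by exact_mod_cast hpos) (hE.Ncov_le x hr hrR)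

lemma le_of_mem_globRatios (hE : IsRegularLattice E s K k) {N d : ℝ} (hN : 1 < N)
    (hd : d ∈ globRatios E N) : d ≤ s + Real.log K / Real.log N := by
  obtain ⟨r, hr, x, R, hR, hNR, rfl⟩ := hd
  have hs := hE.exponent_nonneg
  have hrR : r ≤ R := by nlinarith
  have hlogN : 0 < Real.log N := Real.log_pos hN
  have hlogR : Real.log N ≤ Real.log (R / r) :=
    Real.log_le_log (by linarith) ((le_div_iff₀ hr).2 hNR)
  have hmax : max R 1 / max r 1 ≤ R / r := by
    rw [div_le_div_iff₀ (by positivity) hr]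
    rcases le_total R 1 with hR1 | hR1
    · rw [max_eq_right hR1, max_eq_right (hrR.trans hR1)]
      linarith
    · rw [max_eq_left hR1]
      gcongr
      exact le_max_left _ _
  have hlogK : 0 ≤ Real.log K := Real.log_nonneg hE.one_le_upper
  calc Real.log (Ncov r (E ∩ ball x R)) / Real.log (R / r)
      ≤ (Real.log K + s * Real.log (R / r)) / Real.log (R / r) := by
        refine div_le_div_of_nonneg_right ?_ (hlogN.le.trans hlogR)
        exact (hE.log_Ncov_le x hr hrR).trans (by gcongr)
    _ = s + Real.log K / Real.log (R / r) := by
        rw [add_div, mul_div_cancel_right₀ _ (hlogN.trans_le hlogR).ne', add_comm]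
    _ ≤ s + Real.log K / Real.log N := by gcongr

lemma le_log_Ncov (hE : IsRegularLattice E s K k) (b : ℕ) :
    Real.log k + s * (b * Real.log 2) ≤
      Real.log (Ncov (1 / 2) (E ∩ ball 0 ((n + 1) * 2 ^ b))) := by
  obtain ⟨F, hFE, hFcard⟩ := hE.exists_finset b
  have hk := hE.lower_pos
  have h2b : (1 : ℝ) ≤ 2 ^ b := one_le_pow₀ one_le_two
  have hNcov : F.card ≤ Ncov (1 / 2) (E ∩ ball 0 (((n : ℝ) + 1) * 2 ^ b)) :=
    hE.card_le_Ncov (by norm_num) (by norm_num) (by nlinarith [Nat.cast_nonneg (α := ℝ) n]) hFE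
  calc Real.log k + s * (b * Real.log 2) = Real.log (k * ((2 : ℝ) ^ b) ^ s) := by
        rw [Real.log_mul hk.ne' (by positivity), Real.log_rpow (by positivity), Real.log_pow]
    _ ≤ _ := Real.log_le_log (by positivity) (hFcard.trans (by exact_mod_cast hNcov))

/-- The ratios at scale `1 / 2` in the balls `B(0, (n + 1) 2 ^ b)` tend to at least `s`. -/
lemma le_sSup_globRatios (hE : IsRegularLattice E s K k) {N : ℝ} (hN : 1 < N) :
    s ≤ sSup (globRatios E N) := by
  refine le_of_tendsto (tendsto_add_mul_div_add_mul (Real.log k) (Real.log (2 * (n + 1))) s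
    (Real.log_pos one_lt_two)) ?_
  have hbig : Tendsto (fun b : ℕ => (2 : ℝ) ^ b) atTop atTop :=
    tendsto_pow_atTop_atTop_of_one_lt one_lt_two
  filter_upwards [hbig.eventually_ge_atTop N] with b hb
  have : (0 : ℝ) ≤ n := Nat.cast_nonneg n
  have hden : Real.log (2 * (n + 1)) + b * Real.log 2 =
      Real.log (((n : ℝ) + 1) * 2 ^ b / (1 / 2)) := by
    rw [← Real.log_pow, ← Real.log_mul (by positivity) (by positivity)]
    congr 1
    ring
  have hmem : Real.log (Ncov (1 / 2) (E ∩ ball 0 (((n : ℝ) + 1) * 2 ^ b))) /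
      Real.log (((n : ℝ) + 1) * 2 ^ b / (1 / 2)) ∈ globRatios E N :=
    ⟨1 / 2, by norm_num, 0, _, by positivity, by nlinarith, rfl⟩
  refine le_trans ?_ (le_csSup ⟨_, fun d => hE.le_of_mem_globRatios hN⟩ hmem)
  rw [hden]
  gcongr
  · refine Real.log_nonneg ?_
    rw [div_div_eq_mul_div, div_one]
    nlinarith
  · exact hE.le_log_Ncov b

lemma dimGlob_eq (hE : IsRegularLattice E s K k) : dimGlob E = s := by
  have hlim : Tendsto (fun N : ℝ => s + Real.log K / Real.log N) atTop (nhds s) := by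
    simpa only [add_zero] using
      (Real.tendsto_log_atTop.const_div_atTop (Real.log K)).const_add s
  have hsSup : Tendsto (fun N => sSup (globRatios E N)) atTop (nhds s) := by
    refine tendsto_of_tendsto_of_tendsto_of_le_of_le' tendsto_const_nhds hlim ?_ ?_
    · filter_upwards [eventually_gt_atTop 1] with N hN using hE.le_sSup_globRatios hN
    · filter_upwards [eventually_gt_atTop 1] with N hN
      refine csSup_le ?_ fun d => hE.le_of_mem_globRatios hN
      exact ⟨_, 1, one_pos, 0, N, by linarith, by linarith, rfl⟩
  exact hsSup.liminf_eq

/-- A ball of radius at most `1` is covered by `K` cubes at every scale. -/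
lemma mem_Icc_of_mem_locRatios (hE : IsRegularLattice E s K k) {N r d : ℝ} (hN : 1 < N)
    (hr : 0 < r) (hd : d ∈ locRatios E N r 1) : d ∈ Icc 0 (Real.log K / Real.log N) := by
  obtain ⟨x, R, -, hNR, hR1, rfl⟩ := hd
  have hrR : r ≤ R := by nlinarith
  have hlogN : 0 < Real.log N := Real.log_pos hN
  have hlogR : Real.log N ≤ Real.log (R / r) :=
    Real.log_le_log (by linarith) ((le_div_iff₀ hr).2 hNR)
  have hlog := hE.log_Ncov_le x hr hrR
  rw [max_eq_right hR1, max_eq_right (hrR.trans hR1), div_one, Real.log_one, mul_zero,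
    add_zero] at hlog
  exact ⟨div_nonneg (Real.log_natCast_nonneg _) (hlogN.le.trans hlogR),
    div_le_div₀ (Real.log_nonneg hE.one_le_upper) hlog hlogN hlogR⟩

lemma limsup_locRatios_mem_Icc (hE : IsRegularLattice E s K k) {N : ℝ} (hN : 1 < N) :
    limsup (fun r : ℝ => sSup (locRatios E N r 1)) (nhdsWithin 0 (Ioi 0)) ∈
      Icc 0 (Real.log K / Real.log N) := by
  have hlow : ∀ᶠ r in nhdsWithin (0 : ℝ) (Ioi 0), 0 ≤ sSup (locRatios E N r 1) := by
    filter_upwards [self_mem_nhdsWithin] with r hr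
    exact Real.sSup_nonneg fun d hd => (hE.mem_Icc_of_mem_locRatios hN hr hd).1
  have hup : ∀ᶠ r in nhdsWithin (0 : ℝ) (Ioi 0),
      sSup (locRatios E N r 1) ≤ Real.log K / Real.log N := by
    filter_upwards [self_mem_nhdsWithin] with r hr
    exact Real.sSup_le (fun d hd => (hE.mem_Icc_of_mem_locRatios hN hr hd).2)
      (div_nonneg (Real.log_nonneg hE.one_le_upper) (Real.log_pos hN).le)
  exact ⟨le_limsup_of_frequently_le hlow.frequently ⟨_, eventually_map.2 hup⟩,
    limsup_le_of_le (IsBoundedUnder.isCoboundedUnder_le ⟨0, eventually_map.2 hlow⟩) hup⟩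

lemma dimLoc_eq_zero (hE : IsRegularLattice E s K k) : dimLoc E = 0 := by
  refine Tendsto.liminf_eq (tendsto_of_tendsto_of_tendsto_of_le_of_le' tendsto_const_nhds
    (Real.tendsto_log_atTop.const_div_atTop (Real.log K)) ?_ ?_)
  · filter_upwards [eventually_gt_atTop 1] with N hN using (hE.limsup_locRatios_mem_Icc hN).1
  · filter_upwards [eventually_gt_atTop 1] with N hN using (hE.limsup_locRatios_mem_Icc hN).2

end IsRegularLattice

/-! ### The radial stretch around a separated set -/

/-- The weight `min(1, 4 dist(x, E))`, comparable to the local contraction of `stretch E`. -/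
def stretchWeight {X : Type*} [PseudoMetricSpace X] (E : Set X) (x : X) : ℝ :=
  min 1 (4 * infDist x E)

/-- The gauge `t (w(x) + min(1, t))`, where `w` is `stretchWeight E`; it is comparable to
`|f(x) - f(y)|` for `f = stretch E` and `|x - y| = t`. -/
def stretchGauge {X : Type*} [PseudoMetricSpace X] (E : Set X) (x : X) (t : ℝ) : ℝ :=
  t * (stretchWeight E x + min 1 t)

/-- The point `e ∈ E` is the only one that may lie within `1/4` of `x`. It need not lie that
close itself, so that two points have a common sole center unless they lie in two different
balls `B(e, 1/4)`. -/
def IsSoleCenter {X : Type*} [PseudoMetricSpace X] (E : Set X) (e x : X) : Prop :=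
  e ∈ E ∧ ∀ e' ∈ E, e' ≠ e → 1 / 4 ≤ dist x e'

/-- The radial map `z ↦ min(1, 4|z|) z`; it is the identity outside `B(0, 1/4)`. -/
def radialStretch {V : Type*} [NormedAddCommGroup V] [NormedSpace ℝ V] (z : V) : V :=
  min 1 (4 * ‖z‖) • z

open Classical in
/-- The map `x ↦ e + 4|x - e|(x - e)` on each ball `B(e, 1/4)`, `e ∈ E`, and the identity
elsewhere. For a `1`-separated `E` these balls are disjoint, so the choice of `e` is forced. -/
def stretch {V : Type*} [NormedAddCommGroup V] [NormedSpace ℝ V] (E : Set V) (x : V) : V :=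
  if h : ∃ e ∈ E, dist x e < 1 / 4 then h.choose + radialStretch (x - h.choose) else x

lemma min_one_add_le {a b : ℝ} (ha : 0 ≤ a) (hb : 0 ≤ b) :
    min 1 (a + b) ≤ min 1 a + min 1 b := by
  grind

section Weight

variable {X : Type*} [PseudoMetricSpace X] {E : Set X}

lemma stretchWeight_nonneg (x : X) : 0 ≤ stretchWeight E x :=
  le_min zero_le_one (mul_nonneg (by norm_num) infDist_nonneg)

lemma stretchWeight_le_one (x : X) : stretchWeight E x ≤ 1 := min_le_left _ _

lemma stretchWeight_le_add (x y : X) :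
    stretchWeight E y ≤ stretchWeight E x + 4 * min 1 (dist x y) := by
  have hdist : infDist y E ≤ infDist x E + dist x y :=
    dist_comm x y ▸ infDist_le_infDist_add_dist
  have hx : 0 ≤ infDist x E := infDist_nonneg
  calc stretchWeight E y ≤ min 1 (4 * infDist x E + 4 * dist x y) :=
        min_le_min le_rfl (by linarith)
    _ ≤ stretchWeight E x + min 1 (4 * dist x y) := min_one_add_le (by positivity) (by positivity)
    _ ≤ stretchWeight E x + 4 * min 1 (dist x y) := by
        rw [mul_min_of_nonneg _ _ (by norm_num : (0 : ℝ) ≤ 4)]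
        gcongr
        norm_num

lemma IsSoleCenter.stretchWeight_eq {e x : X} (h : IsSoleCenter E e x) :
    stretchWeight E x = min 1 (4 * dist x e) := by
  have hupper : infDist x E ≤ dist x e := infDist_le_dist_of_mem h.1
  have hlower : min (1 / 4) (dist x e) ≤ infDist x E := by
    refine (le_infDist ⟨e, h.1⟩).2 fun e' he' => ?_
    rcases eq_or_ne e' e with rfl | hne
    · exact min_le_right _ _
    · exact (min_le_left _ _).trans (h.2 e' he' hne)
  unfold stretchWeight
  rcases le_total (1 / 4) (dist x e) with hx | hx
  · rw [min_eq_left hx] at hlower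
    rw [min_eq_left (by linarith), min_eq_left (by linarith)]
  · rw [min_eq_right hx] at hlower
    rw [le_antisymm hupper hlower]

lemma IsSoleCenter.min_one_dist_le {e x y : X} (hx : IsSoleCenter E e x)
    (hy : IsSoleCenter E e y) : min 1 (dist x y) ≤ stretchWeight E x + stretchWeight E y := by
  rw [hx.stretchWeight_eq, hy.stretchWeight_eq]
  have htri := dist_triangle_right x y e
  have hxe : 0 ≤ dist x e := dist_nonneg
  have hye : 0 ≤ dist y e := dist_nonneg
  exact (min_le_min le_rfl (by linarith)).trans
    (min_one_add_le (by positivity) (by positivity))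

lemma isSoleCenter_of_dist_le (hsep : E.Pairwise fun x y => 1 ≤ dist x y) {e x : X}
    (he : e ∈ E) (hx : dist x e ≤ 3 / 4) : IsSoleCenter E e x := by
  refine ⟨he, fun e' he' hne => ?_⟩
  linarith [hsep he' he hne, dist_triangle_left e' e x]

lemma exists_isSoleCenter_or (hsep : E.Pairwise fun x y => 1 ≤ dist x y) (hne : E.Nonempty)
    (x y : X) :
    (∃ e, IsSoleCenter E e x ∧ IsSoleCenter E e y) ∨
      ∃ e ∈ E, ∃ e' ∈ E, e ≠ e' ∧ dist x e < 1 / 4 ∧ dist y e' < 1 / 4 := by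
  by_cases hx : ∃ e ∈ E, dist x e < 1 / 4
  · obtain ⟨e, he, hxe⟩ := hx
    by_cases hy : ∃ e' ∈ E, e' ≠ e ∧ dist y e' < 1 / 4
    · obtain ⟨e', he', hne', hye'⟩ := hy
      exact Or.inr ⟨e, he, e', he', hne'.symm, hxe, hye'⟩
    · push Not at hy
      exact Or.inl ⟨e, isSoleCenter_of_dist_le hsep he (by linarith), he, hy⟩
  · push Not at hx
    by_cases hy : ∃ e' ∈ E, dist y e' < 1 / 4
    · obtain ⟨e', he', hye'⟩ := hy
      exact Or.inl ⟨e', ⟨he', fun e he _ => hx e he⟩,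
        isSoleCenter_of_dist_le hsep he' (by linarith)⟩
    · push Not at hy
      obtain ⟨e, he⟩ := hne
      exact Or.inl ⟨e, ⟨he, fun e' h _ => hx e' h⟩, he, fun e' h _ => hy e' h⟩

lemma stretchGauge_mul_le (x : X) {s τ : ℝ} (hs : 0 ≤ s) (hτ : 0 ≤ τ) :
    stretchGauge E x (τ * s) ≤ (τ + τ ^ 2) * stretchGauge E x s := by
  have hw := stretchWeight_nonneg (E := E) x
  have hmin : min 1 (τ * s) ≤ (1 + τ) * min 1 s := by
    rw [mul_min_of_nonneg _ _ (by positivity)]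
    exact min_le_min (by linarith) (by linarith)
  calc stretchGauge E x (τ * s)
      ≤ τ * s * ((1 + τ) * stretchWeight E x + (1 + τ) * min 1 s) := by
        unfold stretchGauge
        gcongr
        nlinarith
    _ = (τ + τ ^ 2) * stretchGauge E x s := by unfold stretchGauge; ring

end Weight

section Normed

variable {V : Type*} [NormedAddCommGroup V] [NormedSpace ℝ V] {E : Set V} {e x : V}

lemma norm_radialStretch_sub_le (x y : V) :
    ‖radialStretch x - radialStretch y‖ ≤ (min 1 (4 * ‖x‖) + min 1 (4 * ‖y‖)) * ‖x - y‖ := by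
  wlog h : ‖y‖ ≤ ‖x‖ generalizing x y
  · have := this y x (not_le.1 h).le
    rwa [norm_sub_rev, norm_sub_rev y x, add_comm] at this
  unfold radialStretch
  set a := min 1 (4 * ‖x‖) with ha
  set b := min 1 (4 * ‖y‖) with hb
  have ha0 : 0 ≤ a := le_min zero_le_one (by positivity)
  have hab : b ≤ a := min_le_min le_rfl (by linarith)
  have hrescale : (a - b) * ‖y‖ ≤ b * ‖x - y‖ := by
    have htri : ‖x‖ - ‖y‖ ≤ ‖x - y‖ := norm_sub_norm_le x y
    rcases le_total 1 (4 * ‖y‖) with hy | hy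
    · rw [ha, hb, min_eq_left hy, min_eq_left (by linarith)]
      simp
    · rw [hb, min_eq_right hy]
      nlinarith [norm_nonneg y, min_le_right 1 (4 * ‖x‖)]
  calc ‖a • x - b • y‖ = ‖a • (x - y) + (a - b) • y‖ := by congr 1; module
    _ ≤ ‖a • (x - y)‖ + ‖(a - b) • y‖ := norm_add_le _ _
    _ = a * ‖x - y‖ + (a - b) * ‖y‖ := by
        rw [norm_smul, norm_smul, Real.norm_of_nonneg ha0, Real.norm_of_nonneg (by linarith)]
    _ ≤ (a + b) * ‖x - y‖ := by linarith

lemma stretch_eq_self (hx : ∀ e ∈ E, 1 / 4 ≤ dist x e) : stretch E x = x :=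
  dif_neg (by push Not; exact hx)

lemma IsSoleCenter.stretch_eq (h : IsSoleCenter E e x) :
    stretch E x = e + radialStretch (x - e) := by
  by_cases hx : ∃ e ∈ E, dist x e < 1 / 4
  · have hchoose : hx.choose = e := by
      by_contra hne
      exact (h.2 _ hx.choose_spec.1 hne).not_gt hx.choose_spec.2
    rw [stretch, dif_pos hx, hchoose]
  · push Not at hx
    have hxe := hx e h.1
    rw [dist_eq_norm] at hxe
    rw [stretch_eq_self hx, radialStretch, min_eq_left (by linarith), one_smul,
      add_sub_cancel]

lemma IsSoleCenter.dist_stretch {y : V} (hx : IsSoleCenter E e x) (hy : IsSoleCenter E e y) :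
    dist (stretch E x) (stretch E y) = ‖radialStretch (x - e) - radialStretch (y - e)‖ := by
  rw [hx.stretch_eq, hy.stretch_eq, dist_add_left, dist_eq_norm]

lemma stretch_of_dist_le (hsep : E.Pairwise fun x y => 1 ≤ dist x y) (he : e ∈ E)
    (hx : dist x e ≤ 1 / 4) : stretch E x = e + (4 * dist x e) • (x - e) := by
  rw [(isSoleCenter_of_dist_le hsep he (by linarith)).stretch_eq, radialStretch,
    ← dist_eq_norm, min_eq_right (by linarith)]

lemma dist_stretch_self_le (hsep : E.Pairwise fun x y => 1 ≤ dist x y) (he : e ∈ E)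
    (hx : dist x e ≤ 1 / 4) : dist (stretch E x) x ≤ 1 / 16 := by
  have hsub : stretch E x - x = (4 * ‖x - e‖ - 1) • (x - e) := by
    rw [stretch_of_dist_le hsep he hx, dist_eq_norm]
    module
  rw [dist_eq_norm] at hx
  rw [dist_eq_norm, hsub, norm_smul, Real.norm_of_nonpos (by linarith)]
  nlinarith [sq_nonneg (‖x - e‖ - 1 / 8)]

/-- Points in two different balls `B(e, 1/4)` are far apart and hardly moved. -/
lemma dist_stretch_mem_Icc_of_ne (hsep : E.Pairwise fun x y => 1 ≤ dist x y) {e' y : V}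
    (he : e ∈ E) (he' : e' ∈ E) (hne : e ≠ e') (hx : dist x e ≤ 1 / 4) (hy : dist y e' ≤ 1 / 4) :
    dist (stretch E x) (stretch E y) ∈
      Icc (stretchGauge E x (dist x y) / 4) (4 * stretchGauge E x (dist x y)) := by
  have hee' := hsep he he' hne
  have hx' := dist_stretch_self_le hsep he hx
  have hy' := dist_stretch_self_le hsep he' hy
  have hxy : 1 / 2 ≤ dist x y := by
    linarith [dist_triangle4 e x y e', dist_comm e x]
  have hlower := dist_triangle4 x (stretch E x) (stretch E y) y
  have hupper := dist_triangle4 (stretch E x) x y (stretch E y)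
  rw [dist_comm x (stretch E x)] at hlower
  rw [dist_comm y (stretch E y)] at hupper
  have hw0 := stretchWeight_nonneg (E := E) x
  have hw1 := stretchWeight_le_one (E := E) x
  have hmin : 1 / 2 ≤ min 1 (dist x y) := le_min (by norm_num) hxy
  have hmin1 : min 1 (dist x y) ≤ 1 := min_le_left _ _
  unfold stretchGauge
  constructor <;> nlinarith

/-- The preimage of `e + z` is `e + z / (2 √|z|)`. -/
lemma stretch_surjective (hsep : E.Pairwise fun x y => 1 ≤ dist x y) :
    Function.Surjective (stretch E) := by
  intro y
  by_cases! hy : ∃ e ∈ E, dist y e < 1 / 4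
  · obtain ⟨e, he, hye⟩ := hy
    rcases eq_or_ne y e with rfl | hne
    · exact ⟨y, by rw [stretch_of_dist_le hsep he (by simp)]; simp⟩
    have hd : 0 < ‖y - e‖ := norm_pos_iff.2 (sub_ne_zero.2 hne)
    rw [dist_eq_norm] at hye
    set q := √‖y - e‖
    have hq0 : 0 < q := Real.sqrt_pos.2 hd
    have hqq : q * q = ‖y - e‖ := Real.mul_self_sqrt hd.le
    have hdist : dist (e + (1 / (2 * q)) • (y - e)) e = q / 2 := by
      rw [dist_eq_norm, add_sub_cancel_left, norm_smul, Real.norm_of_nonneg (by positivity), ← hqq]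
      field_simp
    refine ⟨e + (1 / (2 * q)) • (y - e), ?_⟩
    rw [stretch_of_dist_le hsep he (by rw [hdist]; nlinarith), hdist, add_sub_cancel_left,
      smul_smul]
    have hcancel : 4 * (q / 2) * (1 / (2 * q)) = 1 := by field_simp; norm_num
    rw [hcancel, one_smul, add_sub_cancel]
  · exact ⟨y, stretch_eq_self hy⟩

end Normed

section InnerProduct

variable {V : Type*} [NormedAddCommGroup V] [InnerProductSpace ℝ V] {E : Set V}

lemma inner_smul_sub_smul_sub (a b : ℝ) (x y : V) :
    inner ℝ (a • x - b • y) (x - y)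
      = (a + b) / 2 * ‖x - y‖ ^ 2 + (a - b) * (‖x‖ ^ 2 - ‖y‖ ^ 2) / 2 := by
  rw [norm_sub_sq_real]
  simp only [inner_sub_left, inner_sub_right, real_inner_smul_left,
    real_inner_self_eq_norm_sq, real_inner_comm x y]
  ring

lemma mul_norm_sub_le_norm_smul_sub_smul {a b : ℝ} {x y : V}
    (h : 0 ≤ (a - b) * (‖x‖ ^ 2 - ‖y‖ ^ 2)) :
    (a + b) / 2 * ‖x - y‖ ≤ ‖a • x - b • y‖ := by
  rcases eq_or_ne x y with rfl | hxy
  · simp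
  refine le_of_mul_le_mul_right ?_ (norm_pos_iff.2 (sub_ne_zero.2 hxy))
  calc (a + b) / 2 * ‖x - y‖ * ‖x - y‖ ≤ inner ℝ (a • x - b • y) (x - y) := by
        rw [inner_smul_sub_smul_sub]; linarith
    _ ≤ ‖a • x - b • y‖ * ‖x - y‖ := real_inner_le_norm _ _

lemma le_norm_radialStretch_sub (x y : V) :
    (min 1 (4 * ‖x‖) + min 1 (4 * ‖y‖)) / 2 * ‖x - y‖
      ≤ ‖radialStretch x - radialStretch y‖ := by
  refine mul_norm_sub_le_norm_smul_sub_smul ?_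
  rcases le_total ‖x‖ ‖y‖ with h | h
  · exact mul_nonneg_of_nonpos_of_nonpos
      (sub_nonpos.2 (min_le_min le_rfl (by linarith))) (sub_nonpos.2 (by gcongr))
  · exact mul_nonneg
      (sub_nonneg.2 (min_le_min le_rfl (by linarith))) (sub_nonneg.2 (by gcongr))

lemma IsSoleCenter.dist_stretch_mem_Icc {e x y : V} (hx : IsSoleCenter E e x)
    (hy : IsSoleCenter E e y) :
    dist (stretch E x) (stretch E y) ∈
      Icc (stretchGauge E x (dist x y) / 4) (4 * stretchGauge E x (dist x y)) := by
  have hlower := le_norm_radialStretch_sub (x - e) (y - e)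
  have hupper := norm_radialStretch_sub_le (x - e) (y - e)
  rw [sub_sub_sub_cancel_right, ← dist_eq_norm x y, ← dist_eq_norm x e, ← dist_eq_norm y e,
    ← hx.stretchWeight_eq, ← hy.stretchWeight_eq, ← hx.dist_stretch hy] at hlower hupper
  have hmin := hx.min_one_dist_le hy
  have hcompare := stretchWeight_le_add (E := E) x y
  have hwx := stretchWeight_nonneg (E := E) x
  have hwy := stretchWeight_nonneg (E := E) y
  have ht : 0 ≤ dist x y := dist_nonneg
  unfold stretchGauge
  constructor
  · refine le_trans ?_ hlower
    nlinarith [mul_nonneg ht (sub_nonneg.2 hmin), mul_nonneg ht hwy]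
  · refine hupper.trans ?_
    nlinarith [mul_nonneg ht (sub_nonneg.2 hcompare), mul_nonneg ht hwx]

lemma dist_stretch_mem_Icc (hsep : E.Pairwise fun x y => 1 ≤ dist x y) (hne : E.Nonempty)
    (x y : V) :
    dist (stretch E x) (stretch E y) ∈
      Icc (stretchGauge E x (dist x y) / 4) (4 * stretchGauge E x (dist x y)) := by
  rcases exists_isSoleCenter_or hsep hne x y with ⟨e, hx, hy⟩ | ⟨e, he, e', he', hee', hx, hy⟩
  · exact hx.dist_stretch_mem_Icc hy
  · exact dist_stretch_mem_Icc_of_ne hsep he he' hee' hx.le hy.le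

lemma lipschitzWith_stretch (hsep : E.Pairwise fun x y => 1 ≤ dist x y) (hne : E.Nonempty) :
    LipschitzWith 8 (stretch E) := by
  refine LipschitzWith.of_dist_le_mul fun x y => ?_
  have h := (dist_stretch_mem_Icc hsep hne x y).2
  unfold stretchGauge at h
  push_cast
  nlinarith [stretchWeight_le_one (E := E) x, min_le_left 1 (dist x y),
    dist_nonneg (x := x) (y := y)]

lemma mul_min_one_dist_le_dist_stretch (hsep : E.Pairwise fun x y => 1 ≤ dist x y)
    (hne : E.Nonempty) (x y : V) :
    dist x y * min 1 (dist x y) / 4 ≤ dist (stretch E x) (stretch E y) := by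
  have h := (dist_stretch_mem_Icc hsep hne x y).1
  unfold stretchGauge at h
  nlinarith [stretchWeight_nonneg (E := E) x, dist_nonneg (x := x) (y := y)]

lemma isUniformEmbedding_stretch (hsep : E.Pairwise fun x y => 1 ≤ dist x y)
    (hne : E.Nonempty) : IsUniformEmbedding (stretch E) := by
  refine Metric.isUniformEmbedding_iff'.2
    ⟨Metric.uniformContinuous_iff.1 (lipschitzWith_stretch hsep hne).uniformContinuous,
      fun δ hδ => ?_⟩
  refine ⟨δ * min 1 δ / 4, by positivity, fun {x y} hxy => ?_⟩
  by_contra! hcon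
  have hlower := mul_min_one_dist_le_dist_stretch hsep hne x y
  have hmono : δ * min 1 δ ≤ dist x y * min 1 (dist x y) := by gcongr
  linarith

end InnerProduct

/-- `stretch E` as a homeomorphism, for a nonempty `1`-separated set `E`. -/
def stretchHomeo {V : Type*} [NormedAddCommGroup V] [InnerProductSpace ℝ V] (E : Set V)
    (hsep : E.Pairwise fun x y => 1 ≤ dist x y) (hne : E.Nonempty) : V ≃ₜ V :=
  (Equiv.ofBijective (stretch E)
    ⟨(isUniformEmbedding_stretch hsep hne).injective,
      stretch_surjective hsep⟩).toHomeomorphOfIsInducing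
    (isUniformEmbedding_stretch hsep hne).isInducing

lemma strictMono_stretchDistortion : StrictMono fun τ : ℝ≥0 => 16 * (τ + τ ^ 2) :=
  fun a b h => by dsimp only; gcongr

lemma surjective_stretchDistortion :
    Function.Surjective fun τ : ℝ≥0 => 16 * (τ + τ ^ 2) := by
  intro y
  have hy : y ≤ 16 * (y + y ^ 2) :=
    calc y ≤ y + (15 * y + 16 * y ^ 2) := le_self_add
      _ = 16 * (y + y ^ 2) := by ring
  obtain ⟨x, -, hx⟩ := intermediate_value_Icc (f := fun τ : ℝ≥0 => 16 * (τ + τ ^ 2))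
    (zero_le (a := y)) (by fun_prop) ⟨by simp, hy⟩
  exact ⟨x, hx⟩

/-- The distortion function `16 (τ + τ²)` of `stretch E`, as an order isomorphism of `[0, ∞)`. -/
def stretchDistortion : ℝ≥0 ≃o ℝ≥0 :=
  strictMono_stretchDistortion.orderIsoOfSurjective _ surjective_stretchDistortion

lemma isQS_stretch {n : ℕ} {E : Set (Pt n)} (hsep : E.Pairwise fun x y => 1 ≤ dist x y)
    (hne : E.Nonempty) : IsQS (stretch E) stretchDistortion := by
  intro x a b hxb
  set s := dist x b
  set τ := dist x a / dist x b
  have hs : 0 < s := dist_pos.2 hxb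
  have hτ : 0 ≤ τ := by positivity
  change dist (stretch E x) (stretch E a) ≤ 16 * (τ + τ ^ 2) * dist (stretch E x) (stretch E b)
  calc dist (stretch E x) (stretch E a) ≤ 4 * stretchGauge E x (τ * s) := by
        rw [div_mul_cancel₀ _ hs.ne']
        exact (dist_stretch_mem_Icc hsep hne x a).2
    _ ≤ 4 * ((τ + τ ^ 2) * stretchGauge E x s) := by
        gcongr
        exact stretchGauge_mul_le x hs.le hτ
    _ = 16 * (τ + τ ^ 2) * (stretchGauge E x s / 4) := by ring
    _ ≤ 16 * (τ + τ ^ 2) * dist (stretch E x) (stretch E b) := by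
        gcongr
        exact (dist_stretch_mem_Icc hsep hne x b).1

/-! ### The Jacobian of the stretch -/

section RadialDerivative

variable {V : Type*} [NormedAddCommGroup V] [InnerProductSpace ℝ V]

/-- The derivative `h ↦ 4|z| (h + ⟨z, h⟩ z / |z|²)` of `z ↦ 4|z| z`, away from the origin. -/
def radialStretchDeriv (z : V) : V →L[ℝ] V :=
  (4 * ‖z‖) • (ContinuousLinearMap.id ℝ V + ((‖z‖ ^ 2)⁻¹ • innerSL ℝ z).smulRight z)

lemma hasFDerivAt_norm {z : V} (hz : z ≠ 0) :
    HasFDerivAt (fun z : V => ‖z‖) (‖z‖⁻¹ • innerSL ℝ z) z := by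
  have hsqrt := (hasStrictFDerivAt_norm_sq z).hasFDerivAt.sqrt
    (pow_ne_zero 2 (norm_ne_zero_iff.2 hz))
  simp only [Real.sqrt_sq (norm_nonneg _)] at hsqrt
  refine hsqrt.congr_fderiv ?_
  ext1 h
  simp only [smul_apply, smul_eq_mul, nsmul_eq_mul]
  field_simp
  norm_num

lemma hasFDerivAt_norm_smul {z : V} (hz : z ≠ 0) :
    HasFDerivAt (fun z : V => (4 * ‖z‖) • z) (radialStretchDeriv z) z := by
  have := norm_ne_zero_iff.2 hz
  refine (((hasFDerivAt_norm hz).const_mul 4).smul (hasFDerivAt_id z)).congr_fderiv ?_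
  ext1 h
  simp only [radialStretchDeriv, add_apply, smul_apply, ContinuousLinearMap.smulRight_apply,
    ContinuousLinearMap.id_apply, id_eq, smul_eq_mul, smul_add, smul_smul]
  congr 2
  field_simp

lemma det_radialStretchDeriv [FiniteDimensional ℝ V] {z : V} (hz : z ≠ 0) :
    (radialStretchDeriv z).det = 2 * (4 * ‖z‖) ^ Module.finrank ℝ V := by
  have : ‖z‖ ≠ 0 := norm_ne_zero_iff.2 hz
  have htransvection : (radialStretchDeriv z : V →ₗ[ℝ] V) = (4 * ‖z‖) • LinearMap.transvection
      (((‖z‖ ^ 2)⁻¹ • innerSL ℝ z : V →L[ℝ] ℝ) : V →ₗ[ℝ] ℝ) z := by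
    ext1 h
    simp [radialStretchDeriv, LinearMap.transvection]
  rw [ContinuousLinearMap.det, htransvection, LinearMap.det_smul, LinearMap.transvection.det]
  simp only [ContinuousLinearMap.coe_coe, smul_apply, innerSL_apply_apply,
    real_inner_self_eq_norm_sq, smul_eq_mul]
  rw [inv_mul_cancel₀ (by positivity)]
  ring

end RadialDerivative

section Jacobian

variable {n : ℕ} {E : Set (Pt n)}

/-- The Jacobian `|det Df|` of `f = stretch E`: it is `2 (4|x - e|)ⁿ` on `B(e, 1/4)`, and `1` off
these balls. -/
def stretchJacobian (E : Set (Pt n)) (x : Pt n) : ℝ :=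
  if stretchWeight E x < 1 then 2 * stretchWeight E x ^ n else 1

/-- The null set off which `stretch E` is differentiable: the points of `E` and the spheres of
radius `1/4` about them. -/
def stretchSingularSet (E : Set (Pt n)) : Set (Pt n) := ⋃ e ∈ E, ({e} ∪ sphere e (1 / 4))

lemma volume_stretchSingularSet [NeZero n] (hc : E.Countable) :
    volume (stretchSingularSet E) = 0 :=
  (measure_biUnion_null_iff hc).2 fun _ _ => measure_union_null (measure_singleton _)
    (Measure.addHaar_sphere_of_ne_zero _ _ (by norm_num))

lemma measurableSet_stretchSingularSet (hc : E.Countable) :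
    MeasurableSet (stretchSingularSet E) :=
  MeasurableSet.biUnion hc fun _ _ =>
    (measurableSet_singleton _).union isClosed_sphere.measurableSet

lemma notMem_stretchSingularSet {x : Pt n} :
    x ∉ stretchSingularSet E ↔ ∀ e ∈ E, x ≠ e ∧ dist x e ≠ 1 / 4 := by
  simp only [stretchSingularSet, mem_iUnion, mem_union, mem_singleton_iff, mem_sphere, not_exists,
    not_or]

lemma stretch_eq_self_of_mem_singularSet (hsep : E.Pairwise fun x y => 1 ≤ dist x y) {x : Pt n}
    (hx : x ∈ stretchSingularSet E) : stretch E x = x := by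
  simp only [stretchSingularSet, mem_iUnion, mem_union, mem_singleton_iff, mem_sphere] at hx
  obtain ⟨e, he, rfl | h⟩ := hx
  · rw [stretch_of_dist_le hsep he (by simp)]; simp
  · rw [stretch_of_dist_le hsep he h.le, h]; norm_num

lemma hasFDerivAt_stretch_of_dist_lt (hsep : E.Pairwise fun x y => 1 ≤ dist x y) {e x : Pt n}
    (he : e ∈ E) (hxe : x ≠ e) (hx : dist x e < 1 / 4) :
    HasFDerivAt (stretch E) (radialStretchDeriv (x - e)) x ∧
      stretchJacobian E x = |(radialStretchDeriv (x - e)).det| := by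
  have hz : x - e ≠ 0 := sub_ne_zero.2 hxe
  have hD : HasFDerivAt (fun y : Pt n => e + (4 * ‖y - e‖) • (y - e))
      (radialStretchDeriv (x - e)) x := by
    have hcomp := (hasFDerivAt_norm_smul hz).comp x ((hasFDerivAt_id x).sub_const e)
    exact (hcomp.const_add e).congr_fderiv (by ext1; simp)
  constructor
  · refine hD.congr_of_eventuallyEq ?_
    filter_upwards [isOpen_ball.mem_nhds (mem_ball.2 hx)] with y hy
    rw [stretch_of_dist_le hsep he (mem_ball.1 hy).le, dist_eq_norm]
  · rw [det_radialStretchDeriv hz, finrank_euclideanSpace, Fintype.card_fin, ← dist_eq_norm,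
      abs_of_nonneg (by positivity), stretchJacobian,
      (isSoleCenter_of_dist_le hsep he (by linarith)).stretchWeight_eq,
      min_eq_right (by linarith), if_pos (by linarith)]

lemma hasFDerivAt_stretch_of_lt_infDist {x : Pt n} (hx : 1 / 4 < infDist x E) :
    HasFDerivAt (stretch E) (ContinuousLinearMap.id ℝ (Pt n)) x ∧
      stretchJacobian E x = |(ContinuousLinearMap.id ℝ (Pt n)).det| := by
  constructor
  · refine (hasFDerivAt_id x).congr_of_eventuallyEq ?_
    have hopen : IsOpen {y : Pt n | 1 / 4 < infDist y E} :=
      isOpen_lt continuous_const (continuous_infDist_pt E)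
    filter_upwards [hopen.mem_nhds hx] with y hy
    exact stretch_eq_self fun e he => (le_of_lt hy).trans (infDist_le_dist_of_mem he)
  · rw [stretchJacobian, stretchWeight, min_eq_left (by linarith)]
    simp [ContinuousLinearMap.det]

lemma exists_hasFDerivAt_stretch (hsep : E.Pairwise fun x y => 1 ≤ dist x y) (hne : E.Nonempty)
    {x : Pt n} (hx : x ∉ stretchSingularSet E) :
    ∃ D : Pt n →L[ℝ] Pt n, HasFDerivAt (stretch E) D x ∧ stretchJacobian E x = |D.det| := by
  rw [notMem_stretchSingularSet] at hx
  by_cases! h : ∃ e ∈ E, dist x e < 1 / 4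
  · obtain ⟨e, he, hxe⟩ := h
    exact ⟨_, hasFDerivAt_stretch_of_dist_lt hsep he (hx e he).1 hxe⟩
  · obtain ⟨e, he, hdist⟩ :=
      (isClosed_of_pairwise_le_dist one_pos hsep).exists_infDist_eq_dist hne x
    have hlt : 1 / 4 < infDist x E := hdist ▸ (h e he).lt_of_ne' (hx e he).2
    exact ⟨_, hasFDerivAt_stretch_of_lt_infDist hlt⟩

lemma jacobianCOV_of_bijective {f : Pt n → Pt n} {J : Pt n → ℝ} {N : Set (Pt n)}
    (hf : Function.Bijective f) (hN : MeasurableSet N) (hN0 : volume N = 0)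
    (hfN : volume (f '' N) = 0)
    (hD : ∀ x ∉ N, ∃ D : Pt n →L[ℝ] Pt n, HasFDerivAt f D x ∧ J x = |D.det|) :
    JacobianCOV f J := by
  have hae {S : Set (Pt n)} (hS : volume S = 0) : ∀ᵐ x, x ∈ Sᶜ :=
    measure_eq_zero_iff_ae_notMem.1 hS
  refine ⟨(hae hN0).mono hD, fun g _ => ?_⟩
  choose! D hD using hD
  calc ∫⁻ x, g (f x) * ENNReal.ofReal (J x) = ∫⁻ x in Nᶜ, g (f x) * ENNReal.ofReal (J x) := by
        rw [Measure.restrict_eq_self_of_ae_mem (hae hN0)]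
    _ = ∫⁻ x in Nᶜ, ENNReal.ofReal |(D x).det| * g (f x) :=
        setLIntegral_congr_fun hN.compl fun x hx => by rw [(hD x hx).2, mul_comm]
    _ = ∫⁻ y in f '' Nᶜ, g y :=
        (lintegral_image_eq_lintegral_abs_det_fderiv_mul volume hN.compl
          (fun x hx => (hD x hx).1.hasFDerivWithinAt) hf.injective.injOn g).symm
    _ = ∫⁻ y, g y := by
        rw [image_compl_eq hf, Measure.restrict_eq_self_of_ae_mem (hae hfN)]

lemma jacobianCOV_stretch [NeZero n] (hsep : E.Pairwise fun x y => 1 ≤ dist x y)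
    (hne : E.Nonempty) (hc : E.Countable) : JacobianCOV (stretch E) (stretchJacobian E) := by
  have himage : stretch E '' stretchSingularSet E = stretchSingularSet E :=
    (image_congr fun x hx => stretch_eq_self_of_mem_singularSet hsep hx).trans (image_id' _)
  exact jacobianCOV_of_bijective (stretchHomeo E hsep hne).bijective
    (measurableSet_stretchSingularSet hc) (volume_stretchSingularSet hc)
    (by rw [himage, volume_stretchSingularSet hc])
    fun x hx => exists_hasFDerivAt_stretch hsep hne hx

lemma stretchJacobian_mem_Icc (x : Pt n) :
    stretchJacobian E x ∈ Icc (stretchWeight E x ^ n) (2 * stretchWeight E x ^ n) := by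
  have hpow : 0 ≤ stretchWeight E x ^ n := pow_nonneg (stretchWeight_nonneg x) n
  unfold stretchJacobian
  split_ifs with h
  · constructor <;> linarith
  · simp [le_antisymm (stretchWeight_le_one x) (not_lt.1 h)]

lemma memA1_of_forall_mem_Icc {w : Pt n → ℝ} {S : Set (Pt n)} {C : ℝ} (hC : 0 < C)
    (h : ∀ x₀ r, 0 < r → ENNReal.ofReal (2 * r) < infEDist x₀ S →
      ∃ m, 0 ≤ m ∧ ∀ x ∈ ball x₀ r, w x ∈ Icc m (C * m)) : MemA1 w S := by
  refine ⟨C, hC, fun x₀ r hr hdist => ?_⟩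
  obtain ⟨m, hm, hw⟩ := h x₀ r hr hdist
  have hne : (ae (volume.restrict (ball x₀ r))).NeBot := by
    rw [ae_neBot, Ne, Measure.restrict_eq_zero]
    exact (measure_ball_pos _ _ hr).ne'
  have hae : ∀ᵐ x ∂volume.restrict (ball x₀ r), w x ∈ Icc m (C * m) :=
    (ae_restrict_mem measurableSet_ball).mono hw
  have hinf : m ≤ essInf w (volume.restrict (ball x₀ r)) := by
    refine le_essInf_of_ae_le _ (hae.mono fun x hx => hx.1) ?_
    exact IsBoundedUnder.isCoboundedUnder_ge
      ⟨C * m, eventually_map.2 (hae.mono fun x hx => hx.2)⟩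
  have havg : ⨍ x in ball x₀ r, w x ∂volume ≤ C * m := by
    have hfin : volume (ball x₀ r) ≠ ⊤ := measure_ball_lt_top.ne
    have hpos : 0 < volume.real (ball x₀ r) :=
      ENNReal.toReal_pos (measure_ball_pos _ _ hr).ne' hfin
    rw [setAverage_eq, smul_eq_mul, inv_mul_le_iff₀ hpos]
    calc ∫ x in ball x₀ r, w x ≤ ∫ _ in ball x₀ r, C * m :=
          integral_mono_of_nonneg (hae.mono fun x hx => hm.trans hx.1)
            (integrableOn_const hfin) (hae.mono fun x hx => hx.2)
      _ = volume.real (ball x₀ r) * (C * m) := by rw [setIntegral_const, smul_eq_mul]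
  exact havg.trans (by gcongr)

lemma stretchWeight_mem_Icc_of_mem_ball {x₀ x : Pt n} {r : ℝ} (hr : 2 * r < infDist x₀ E)
    (hx : x ∈ ball x₀ r) :
    stretchWeight E x ∈ Icc (stretchWeight E x₀ / 2) (3 / 2 * stretchWeight E x₀) := by
  have hx := mem_ball.1 hx
  have hupper : infDist x E ≤ infDist x₀ E + dist x x₀ := infDist_le_infDist_add_dist
  have hlower : infDist x₀ E ≤ infDist x E + dist x x₀ :=
    dist_comm x₀ x ▸ infDist_le_infDist_add_dist
  unfold stretchWeight
  rcases le_total 1 (4 * infDist x₀ E) with h | h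
  · rw [min_eq_left h]
    exact ⟨le_min (by norm_num) (by linarith), (min_le_left _ _).trans (by norm_num)⟩
  · rw [min_eq_right h]
    exact ⟨le_min (by linarith) (by linarith), (min_le_right _ _).trans (by linarith)⟩

lemma memA1_stretchJacobian (hne : E.Nonempty) : MemA1 (stretchJacobian E) (closure E) := by
  refine memA1_of_forall_mem_Icc (C := 2 * 3 ^ n) (by positivity) fun x₀ r hr hdist => ?_
  rw [infEDist_closure] at hdist
  replace hdist : 2 * r < infDist x₀ E := by
    rwa [infDist, ← ENNReal.ofReal_lt_iff_lt_toReal (by positivity) (infEDist_ne_top hne)]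
  have hw : 0 ≤ stretchWeight E x₀ := stretchWeight_nonneg _
  refine ⟨(stretchWeight E x₀ / 2) ^ n, by positivity, fun x hx => ?_⟩
  have hcomp := stretchWeight_mem_Icc_of_mem_ball hdist hx
  obtain ⟨hlower, hupper⟩ := stretchJacobian_mem_Icc (E := E) x
  refine ⟨(pow_le_pow_left₀ (by positivity) hcomp.1 n).trans hlower, ?_⟩
  calc stretchJacobian E x ≤ 2 * stretchWeight E x ^ n := hupper
    _ ≤ 2 * (3 / 2 * stretchWeight E x₀) ^ n := by
        gcongr
        · exact stretchWeight_nonneg x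
        · exact hcomp.2
    _ = 2 * 3 ^ n * (stretchWeight E x₀ / 2) ^ n := by rw [mul_assoc, ← mul_pow]; congr 2; ring

end Jacobian

/-! ### Energy estimates -/

/-- The double integral over `B(x₀, r) × B(x₀, r)` in the definition of the `Q_α`-norm. -/
def energy {n : ℕ} (α : ℝ) (u : Pt n → ℝ) (x₀ : Pt n) (r : ℝ) : ℝ≥0∞ :=
  ∫⁻ x in ball x₀ r, ∫⁻ y in ball x₀ r,
    ENNReal.ofReal (|u x - u y| ^ 2 / ‖x - y‖ ^ ((n : ℝ) + 2 * α))

/-- The kernel `min(1, (|h|/t)²) / |h|^{n+2α}`, which dominates the integrand of the energy of a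
`1/t`-Lipschitz function of oscillation at most `1`. -/
def bumpKernel (n : ℕ) (α t : ℝ) (h : Pt n) : ℝ :=
  min 1 ((‖h‖ / t) ^ 2) / ‖h‖ ^ ((n : ℝ) + 2 * α)

/-- The total mass of `bumpKernel` at scale `1`. -/
def bumpKernelMass (n : ℕ) (α : ℝ) : ℝ≥0∞ := ∫⁻ h : Pt n, ENNReal.ofReal (bumpKernel n α 1 h)

lemma volume_ball_eq {n : ℕ} (x : Pt n) {r : ℝ} (hr : 0 < r) :
    volume (ball x r) = ENNReal.ofReal (r ^ n) * volume (ball (0 : Pt n) 1) := by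
  rw [Measure.addHaar_ball_of_pos volume x hr, finrank_euclideanSpace, Fintype.card_fin]

section Kernel

variable {n : ℕ} {α t : ℝ}

lemma bumpKernel_nonneg (h : Pt n) : 0 ≤ bumpKernel n α t h := by
  unfold bumpKernel; positivity

lemma measurable_bumpKernel : Measurable (bumpKernel n α t) := by
  unfold bumpKernel; fun_prop

lemma bumpKernel_sub_comm (x y : Pt n) : bumpKernel n α t (x - y) = bumpKernel n α t (y - x) := by
  simp only [bumpKernel, norm_sub_rev]

lemma integrableOn_Ioi_bumpProfile [NeZero n] (h0 : 0 < α) (h1 : α < 1) : IntegrableOn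
    (fun y : ℝ => y ^ (n - 1) • (min 1 (y ^ 2) / y ^ ((n : ℝ) + 2 * α))) (Ioi 0) := by
  have hcast : ((n - 1 : ℕ) : ℝ) = n - 1 := by simp [Nat.cast_sub NeZero.one_le]
  rw [← Ioo_union_Ici_eq_Ioi (zero_lt_one' ℝ), integrableOn_union,
    integrableOn_Ici_iff_integrableOn_Ioi]
  constructor
  · have hpow : IntegrableOn (fun y : ℝ => y ^ (1 - 2 * α)) (Ioo 0 1) :=
      (intervalIntegral.integrableOn_Ioo_rpow_iff one_pos).2 (by linarith)
    refine hpow.congr_fun (fun y ⟨hy, hy1⟩ => ?_) measurableSet_Ioo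
    dsimp only
    rw [smul_eq_mul, min_eq_right (pow_le_one₀ hy.le hy1.le), ← Real.rpow_natCast y 2,
      ← Real.rpow_natCast, ← Real.rpow_sub hy, ← Real.rpow_add hy, hcast]
    congr 1
    push_cast
    ring
  · have hpow : IntegrableOn (fun y : ℝ => y ^ (-1 - 2 * α)) (Ioi 1) :=
      integrableOn_Ioi_rpow_of_lt (by linarith) one_pos
    refine hpow.congr_fun (fun y (hy1 : 1 < y) => ?_) measurableSet_Ioi
    have hy : 0 < y := one_pos.trans hy1
    dsimp only
    rw [smul_eq_mul, min_eq_left (one_le_pow₀ hy1.le), one_div, ← Real.rpow_neg hy.le,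
      ← Real.rpow_natCast, ← Real.rpow_add hy, hcast]
    congr 1
    ring

lemma bumpKernelMass_lt_top [NeZero n] (h0 : 0 < α) (h1 : α < 1) : bumpKernelMass n α < ⊤ := by
  have hint : Integrable (bumpKernel n α 1) := by
    refine ((integrable_fun_norm_addHaar volume
      (f := fun y : ℝ => min 1 (y ^ 2) / y ^ ((n : ℝ) + 2 * α))).2 ?_).congr
        (ae_of_all _ fun h => by simp only [bumpKernel, div_one])
    rw [finrank_euclideanSpace, Fintype.card_fin]
    exact integrableOn_Ioi_bumpProfile h0 h1
  exact (hasFiniteIntegral_iff_ofReal (Eventually.of_forall bumpKernel_nonneg)).1 hint.2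

lemma bumpKernel_eq_rpow_mul (ht : 0 < t) (h : Pt n) :
    bumpKernel n α t h = t ^ (-((n : ℝ) + 2 * α)) * bumpKernel n α 1 (t⁻¹ • h) := by
  have hpow := (Real.rpow_pos_of_pos ht ((n : ℝ) + 2 * α)).ne'
  simp only [bumpKernel, norm_smul, norm_inv, Real.norm_of_nonneg ht.le, div_one]
  rw [Real.mul_rpow (by positivity) (norm_nonneg _), Real.inv_rpow ht.le, Real.rpow_neg ht.le,
    inv_mul_eq_div t]
  field_simp

lemma lintegral_bumpKernel (ht : 0 < t) : ∫⁻ h : Pt n, ENNReal.ofReal (bumpKernel n α t h) =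
    ENNReal.ofReal (t ^ (-(2 * α))) * bumpKernelMass n α := by
  have hscale : ∫⁻ h : Pt n, ENNReal.ofReal (bumpKernel n α 1 (t⁻¹ • h)) =
      ENNReal.ofReal (t ^ (n : ℝ)) * bumpKernelMass n α := by
    rw [← lintegral_map (f := fun h => ENNReal.ofReal (bumpKernel n α 1 h))
      measurable_bumpKernel.ennreal_ofReal (measurable_const_smul t⁻¹),
      Measure.map_addHaar_smul _ (inv_ne_zero ht.ne'), lintegral_smul_measure, smul_eq_mul,
      finrank_euclideanSpace, Fintype.card_fin, inv_pow, inv_inv, abs_of_pos (by positivity),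
      Real.rpow_natCast, bumpKernelMass]
  simp_rw [bumpKernel_eq_rpow_mul ht, ENNReal.ofReal_mul (Real.rpow_nonneg ht.le _)]
  rw [lintegral_const_mul' _ _ ENNReal.ofReal_ne_top, hscale, ← mul_assoc,
    ← ENNReal.ofReal_mul (by positivity), ← Real.rpow_add ht]
  congr 3
  ring

lemma lintegral_bumpKernel_sub (ht : 0 < t) (x : Pt n) :
    ∫⁻ y : Pt n, ENNReal.ofReal (bumpKernel n α t (x - y)) =
      ENNReal.ofReal (t ^ (-(2 * α))) * bumpKernelMass n α := by
  rw [← lintegral_bumpKernel ht,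
    lintegral_sub_left_eq_self (fun h => ENNReal.ofReal (bumpKernel n α t h)) x]

end Kernel

section General

variable {X : Type*} [MeasurableSpace X] {μ : Measure X}

lemma lintegral_lintegral_le_of_eq_zero [SFinite μ] {S : Set X} (hS : MeasurableSet S)
    {f g : X → X → ℝ≥0∞} {M : ℝ≥0∞} (hg : Measurable (Function.uncurry g))
    (hfg : ∀ x y, f x y ≤ g x y) (hf : ∀ x ∉ S, ∀ y ∉ S, f x y = 0)
    (hM : ∀ x, ∫⁻ y, g x y ∂μ ≤ M) (hM' : ∀ y, ∫⁻ x, g x y ∂μ ≤ M) :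
    ∫⁻ x, ∫⁻ y, f x y ∂μ ∂μ ≤ 2 * (μ S * M) := by
  have hgx : Measurable fun x => ∫⁻ y, g x y ∂μ := hg.lintegral_prod_right
  have hsplit (x : X) :
      ∫⁻ y, f x y ∂μ ≤ S.indicator (fun x => ∫⁻ y, g x y ∂μ) x + ∫⁻ y in S, g x y ∂μ := by
    by_cases hx : x ∈ S
    · rw [indicator_of_mem hx]
      exact (lintegral_mono (hfg x)).trans le_self_add
    · rw [indicator_of_notMem hx, zero_add, ← lintegral_indicator hS]
      refine lintegral_mono fun y => ?_
      by_cases hy : y ∈ S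
      · exact (hfg x y).trans_eq (indicator_of_mem hy _).symm
      · exact (hf x hx y hy).trans_le zero_le
  calc ∫⁻ x, ∫⁻ y, f x y ∂μ ∂μ
      ≤ ∫⁻ x, (S.indicator (fun x => ∫⁻ y, g x y ∂μ) x + ∫⁻ y in S, g x y ∂μ) ∂μ :=
        lintegral_mono hsplit
    _ = (∫⁻ x in S, ∫⁻ y, g x y ∂μ ∂μ) + ∫⁻ y in S, ∫⁻ x, g x y ∂μ ∂μ := by
        rw [lintegral_add_left (hgx.indicator hS), lintegral_indicator hS]
        exact congrArg _ (lintegral_lintegral_swap hg.aemeasurable)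
    _ ≤ (∫⁻ _ in S, M ∂μ) + ∫⁻ _ in S, M ∂μ := by gcongr <;> simp only [hM, hM']
    _ = 2 * (μ S * M) := by rw [setLIntegral_const, two_mul, mul_comm M]

lemma card_mul_le_lintegral {ι : Type*} {F : Finset ι} {s : ι → Set X} {B : Set X}
    {f : X → ℝ≥0∞} {m M : ℝ≥0∞} (hdisj : (F : Set ι).PairwiseDisjoint s)
    (hmeas : ∀ i ∈ F, MeasurableSet (s i)) (hsub : ∀ i ∈ F, s i ⊆ B)
    (hm : ∀ i ∈ F, μ (s i) = m) (hM : ∀ i ∈ F, ∀ x ∈ s i, M ≤ f x) :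
    F.card * (M * m) ≤ ∫⁻ x in B, f x ∂μ :=
  calc F.card * (M * m) = ∑ i ∈ F, ∫⁻ _ in s i, M ∂μ := by
        simp only [setLIntegral_const, Finset.sum_congr rfl fun i hi => congrArg (M * ·) (hm i hi),
          Finset.sum_const, nsmul_eq_mul]
    _ ≤ ∑ i ∈ F, ∫⁻ x in s i, f x ∂μ :=
        Finset.sum_le_sum fun i hi => setLIntegral_mono' (hmeas i hi) (hM i hi)
    _ = ∫⁻ x in ⋃ i ∈ F, s i, f x ∂μ := (lintegral_biUnion_finset hdisj hmeas f).symm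
    _ ≤ ∫⁻ x in B, f x ∂μ := lintegral_mono_set (iUnion₂_subset hsub)

end General

section EnergyBounds

variable {n : ℕ} {α ε : ℝ} {u : Pt n → ℝ}

lemma energy_le_of_support (hε : 0 < ε) {S : Set (Pt n)} (hS : MeasurableSet S)
    (hosc : ∀ x y, |u x - u y| ≤ 1) (hlip : ∀ x y, |u x - u y| ≤ ‖x - y‖ / ε)
    (hsupp : ∀ x ∉ S, u x = 0) (x₀ : Pt n) (r : ℝ) :
    energy α u x₀ r ≤
      2 * (volume (S ∩ ball x₀ r) * (ENNReal.ofReal (ε ^ (-(2 * α))) * bumpKernelMass n α)) := by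
  rw [← Measure.restrict_apply hS]
  refine lintegral_lintegral_le_of_eq_zero hS
    (g := fun x y => ENNReal.ofReal (bumpKernel n α ε (x - y)))
    (measurable_bumpKernel.comp (measurable_fst.sub measurable_snd)).ennreal_ofReal
    (fun x y => ENNReal.ofReal_le_ofReal ?_) (fun x hx y hy => by simp [hsupp x hx, hsupp y hy])
    (fun x => ?_) fun y => ?_
  · unfold bumpKernel
    gcongr
    exact le_min (pow_le_one₀ (abs_nonneg _) (hosc x y))
      (pow_le_pow_left₀ (abs_nonneg _) (hlip x y) 2)
  · exact (setLIntegral_le_lintegral _ _).trans_eq (lintegral_bumpKernel_sub hε x)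
  · simp only [bumpKernel_sub_comm _ y]
    exact (setLIntegral_le_lintegral _ _).trans_eq (lintegral_bumpKernel_sub hε y)

lemma energy_le_of_lipschitz (hε : 0 < ε) (hlip : ∀ x y, |u x - u y| ≤ ‖x - y‖ / ε) (x₀ : Pt n)
    {r : ℝ} (hr : 0 < r) :
    energy α u x₀ r ≤ ENNReal.ofReal ((2 * r / ε) ^ 2) *
      (ENNReal.ofReal ((2 * r) ^ (-(2 * α))) * bumpKernelMass n α) * volume (ball x₀ r) := by
  have hpoint : ∀ x ∈ ball x₀ r, ∀ y ∈ ball x₀ r,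
      |u x - u y| ^ 2 / ‖x - y‖ ^ ((n : ℝ) + 2 * α) ≤
        (2 * r / ε) ^ 2 * bumpKernel n α (2 * r) (x - y) := fun x hx y hy => by
    have hxy : ‖x - y‖ ≤ 2 * r := by
      rw [← dist_eq_norm]
      linarith [dist_triangle_right x y x₀, mem_ball.1 hx, mem_ball.1 hy]
    have hle : ‖x - y‖ / (2 * r) ≤ 1 := by rwa [div_le_one (by positivity)]
    unfold bumpKernel
    rw [min_eq_right (pow_le_one₀ (by positivity) hle), mul_div_assoc', ← mul_pow]
    gcongr
    exact (hlip x y).trans_eq (by field_simp)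
  rw [energy, ← setLIntegral_const]
  refine setLIntegral_mono' measurableSet_ball fun x hx => ?_
  rw [← lintegral_bumpKernel_sub (by positivity) x,
    ← lintegral_const_mul' _ _ ENNReal.ofReal_ne_top]
  refine (setLIntegral_mono' measurableSet_ball fun y hy => ?_).trans
    (setLIntegral_le_lintegral _ _)
  rw [← ENNReal.ofReal_mul (by positivity)]
  exact ENNReal.ofReal_le_ofReal (hpoint x hx y hy)

/-- The function `v` has a bump of radius `δ` at `e`, separated from its other bumps: it is at
least `1/2` on `B(e, δ/2)` and vanishes on the annulus `δ ≤ |x - e| ≤ 3δ`. -/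
structure IsBumpAt {X : Type*} [PseudoMetricSpace X] (v : X → ℝ) (e : X) (δ : ℝ) : Prop where
  half_le : ∀ x, dist x e ≤ δ / 2 → 1 / 2 ≤ v x
  eq_zero : ∀ x, δ ≤ dist x e → dist x e ≤ 3 * δ → v x = 0

variable {v : Pt n → ℝ} {δ : ℝ}

lemma le_lintegral_of_eq_zero_on_ball (hα : 0 ≤ α) {x z : Pt n} {B : Set (Pt n)}
    (hB : ball z δ ⊆ B) (hx : 1 / 2 ≤ v x) (hxz : dist x z ≤ 3 * δ)
    (hz : ∀ y ∈ ball z δ, v y = 0) :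
    ENNReal.ofReal (4⁻¹ / (4 * δ) ^ ((n : ℝ) + 2 * α)) * volume (ball z δ) ≤
      ∫⁻ y in B, ENNReal.ofReal (|v x - v y| ^ 2 / ‖x - y‖ ^ ((n : ℝ) + 2 * α)) := by
  rw [← setLIntegral_const]
  refine (setLIntegral_mono' measurableSet_ball fun y hy => ENNReal.ofReal_le_ofReal ?_).trans
    (lintegral_mono_set hB)
  have hne : x ≠ y := by rintro rfl; linarith [hz x hy]
  have hpos : 0 < ‖x - y‖ := norm_pos_iff.2 (sub_ne_zero.2 hne)
  have hle : ‖x - y‖ ≤ 4 * δ := by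
    rw [← dist_eq_norm]
    linarith [dist_triangle_right x y z, mem_ball.1 hy]
  have hsq : (4⁻¹ : ℝ) ≤ |v x - v y| ^ 2 := by
    rw [hz y hy, sub_zero, sq_abs]
    nlinarith
  gcongr

lemma le_energy_of_isBumpAt [NeZero n] (hα : 0 ≤ α) (hδ : 0 < δ) (hδ1 : δ ≤ 1 / 3)
    {F : Finset (Pt n)} (hsep : (F : Set (Pt n)).Pairwise fun x y => 1 ≤ dist x y) {x₀ : Pt n}
    {r : ℝ} (hr : ∀ e ∈ F, ball e 1 ⊆ ball x₀ r) (hv : ∀ e ∈ F, IsBumpAt v e δ) :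
    F.card * (ENNReal.ofReal (4⁻¹ / (4 * δ) ^ ((n : ℝ) + 2 * α) * δ ^ n * (δ / 2) ^ n) *
      volume (ball (0 : Pt n) 1) ^ 2) ≤ energy α v x₀ r := by
  obtain ⟨ξ, hξ⟩ := exists_norm_eq (Pt n) zero_le_one
  have hinner : ∀ e ∈ F, ∀ x ∈ ball e (δ / 2),
      ENNReal.ofReal (4⁻¹ / (4 * δ) ^ ((n : ℝ) + 2 * α) * δ ^ n) * volume (ball (0 : Pt n) 1) ≤
      ∫⁻ y in ball x₀ r, ENNReal.ofReal (|v x - v y| ^ 2 / ‖x - y‖ ^ ((n : ℝ) + 2 * α)) := by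
    intro e he x hx
    set z := e + (2 * δ) • ξ
    have hze : dist z e = 2 * δ := by
      simp [z, norm_smul, hξ, abs_of_pos hδ]
    have hannulus : ∀ y ∈ ball z δ, δ ≤ dist y e ∧ dist y e ≤ 3 * δ := fun y hy => by
      have hy := mem_ball.1 hy
      constructor <;> linarith [dist_triangle y z e, dist_triangle_left z e y]
    rw [ENNReal.ofReal_mul (by positivity), mul_assoc, ← volume_ball_eq z hδ]
    refine le_lintegral_of_eq_zero_on_ball hα (fun y hy => ?_)
      ((hv e he).half_le x (mem_ball.1 hx).le) ?_
      fun y hy => (hv e he).eq_zero y (hannulus y hy).1 (hannulus y hy).2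
    · refine hr e he (mem_ball.2 ?_)
      linarith [dist_triangle y z e, mem_ball.1 hy]
    · linarith [dist_triangle_right x z e, mem_ball.1 hx]
  have hdisj : (F : Set (Pt n)).PairwiseDisjoint fun e => ball e (δ / 2) := fun e he e' he' hne =>
    ball_disjoint_ball (by linarith [hsep he he' hne])
  calc F.card * (ENNReal.ofReal (4⁻¹ / (4 * δ) ^ ((n : ℝ) + 2 * α) * δ ^ n * (δ / 2) ^ n) *
        volume (ball (0 : Pt n) 1) ^ 2)
      = F.card * (ENNReal.ofReal (4⁻¹ / (4 * δ) ^ ((n : ℝ) + 2 * α) * δ ^ n) *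
          volume (ball (0 : Pt n) 1) *
          (ENNReal.ofReal ((δ / 2) ^ n) * volume (ball (0 : Pt n) 1))) := by
        rw [ENNReal.ofReal_mul (by positivity)]
        ring
    _ ≤ energy α v x₀ r :=
        card_mul_le_lintegral hdisj (fun _ _ => measurableSet_ball)
          (fun e he => (ball_subset_ball (by linarith)).trans (hr e he))
          (fun e _ => volume_ball_eq e (half_pos hδ)) hinner

end EnergyBounds

/-! ### Tent functions -/

/-- The function `max(0, 1 - dist(x, S)/ε)`, a real-valued `thickenedIndicator`: for a
`2ε`-separated set `S` it is a sum of disjoint bumps of height `1` and radius `ε`. -/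
def tent {X : Type*} [PseudoEMetricSpace X] {ε : ℝ} (hε : 0 < ε) (S : Set X) (x : X) : ℝ :=
  thickenedIndicator hε S x

section Tent

variable {X : Type*} [PseudoMetricSpace X] {ε : ℝ} {S : Set X}

lemma continuous_tent (hε : 0 < ε) : Continuous (tent hε S) :=
  NNReal.continuous_coe.comp (thickenedIndicator hε S).continuous

lemma abs_tent_sub_le_one (hε : 0 < ε) (x y : X) : |tent hε S x - tent hε S y| ≤ 1 :=
  abs_sub_le_of_nonneg_of_le (NNReal.coe_nonneg _) (thickenedIndicator_le_one hε S x)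
    (NNReal.coe_nonneg _) (thickenedIndicator_le_one hε S y)

lemma abs_tent_sub_le (hε : 0 < ε) (x y : X) : |tent hε S x - tent hε S y| ≤ dist x y / ε := by
  have hlip := (lipschitzWith_thickenedIndicator hε S).dist_le_mul x y
  rwa [NNReal.dist_eq, NNReal.coe_inv, Real.coe_toNNReal ε hε.le, inv_mul_eq_div] at hlip

lemma tent_eq_zero (hε : 0 < ε) {x : X} (hx : x ∉ thickening ε S) : tent hε S x = 0 :=
  NNReal.coe_eq_zero.2 (thickenedIndicator_zero hε S hx)

lemma half_le_tent (hε : 0 < ε) {e x : X} (he : e ∈ S) (hx : dist x e ≤ ε / 2) :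
    1 / 2 ≤ tent hε S x := by
  have hone : tent hε S e = 1 := NNReal.coe_eq_one.2 (thickenedIndicator_one hε S he)
  have hlip : tent hε S e - tent hε S x ≤ dist e x / ε :=
    (le_abs_self _).trans (abs_tent_sub_le hε e x)
  have hdist : dist e x / ε ≤ 1 / 2 := by
    rw [dist_comm, div_le_iff₀ hε]
    linarith
  linarith

lemma tent_eq_zero_of_le_dist (hsep : S.Pairwise fun x y => 1 ≤ dist x y) (hε : 0 < ε)
    (hε1 : ε ≤ 1 / 4) {e x : X} (he : e ∈ S) (hx : ε ≤ dist x e) (hx' : dist x e ≤ 3 / 4) :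
    tent hε S x = 0 := by
  refine tent_eq_zero hε fun hmem => ?_
  obtain ⟨e', he', hxe'⟩ := mem_thickening_iff.1 hmem
  have hne : e' ≠ e := by rintro rfl; linarith
  linarith [hsep he' he hne, dist_triangle_left e' e x]

lemma isBumpAt_tent (hsep : S.Pairwise fun x y => 1 ≤ dist x y) (hε : 0 < ε) (hε1 : ε ≤ 1 / 4)
    {e : X} (he : e ∈ S) : IsBumpAt (tent hε S) e ε where
  half_le _ := half_le_tent hε he
  eq_zero _ hx hx' := tent_eq_zero_of_le_dist hsep hε hε1 he hx (by linarith)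

end Tent

lemma dist_stretch_eq_of_dist_le {V : Type*} [NormedAddCommGroup V] [NormedSpace ℝ V]
    {E : Set V} (hsep : E.Pairwise fun x y => 1 ≤ dist x y) {e x : V} (he : e ∈ E)
    (hx : dist x e ≤ 1 / 4) : dist (stretch E x) e = 4 * dist x e ^ 2 := by
  rw [stretch_of_dist_le hsep he hx, dist_eq_norm, add_sub_cancel_left, norm_smul, ← dist_eq_norm,
    Real.norm_of_nonneg (by positivity)]
  ring

/-- Since `|f(x) - e| = 4|x - e|²`, the stretch turns bumps of radius `ρ²` into bumps of radius
`ρ/2`. -/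
lemma isBumpAt_tent_comp_stretch {V : Type*} [NormedAddCommGroup V] [NormedSpace ℝ V]
    {E S : Set V} (hsep : E.Pairwise fun x y => 1 ≤ dist x y) (hS : S ⊆ E) {ρ : ℝ} (hρ : 0 < ρ)
    (hρ1 : ρ ≤ 1 / 6) {e : V} (he : e ∈ S) :
    IsBumpAt (tent (pow_pos hρ 2) S ∘ stretch E) e (ρ / 2) where
  half_le x hx := half_le_tent _ he <| by
    rw [dist_stretch_eq_of_dist_le hsep (hS he) (by linarith)]
    nlinarith [pow_le_pow_left₀ dist_nonneg hx 2]
  eq_zero x hx hx' := by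
    have hdist := dist_stretch_eq_of_dist_le hsep (hS he) (x := x) (by linarith)
    refine tent_eq_zero_of_le_dist (hsep.mono hS) _ (by nlinarith) he ?_ ?_ <;> rw [hdist]
    · nlinarith [pow_le_pow_left₀ (half_pos hρ).le hx 2]
    · nlinarith [pow_le_pow_left₀ dist_nonneg hx' 2]

/-! ### Norms of tent functions -/

section UpperBound

variable {n : ℕ} {α ε : ℝ}

lemma Qnorm_le {u : Pt n → ℝ} {A : ℝ≥0∞} (h : ∀ x₀ : Pt n, ∀ r : ℝ, 0 < r →
      ENNReal.ofReal (r ^ (-((n : ℝ) - 2 * α))) * energy α u x₀ r ≤ A) :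
    Qnorm α u ≤ A ^ (1 / 2 : ℝ) := by
  refine iSup_le fun x₀ => iSup_le fun r => iSup_le fun hr => ?_
  rw [← neg_sub]
  exact ENNReal.rpow_le_rpow (h x₀ r hr) (by norm_num)

lemma le_Qnorm (u : Pt n → ℝ) (x₀ : Pt n) {r : ℝ} (hr : 0 < r) :
    (ENNReal.ofReal (r ^ (-((n : ℝ) - 2 * α))) * energy α u x₀ r) ^ (1 / 2 : ℝ) ≤ Qnorm α u := by
  rw [neg_sub]
  exact le_iSup_of_le x₀ (le_iSup_of_le r (le_iSup_of_le hr le_rfl))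

lemma ofReal_rpow_mul_energy_le_of_le {u : Pt n → ℝ} (hα : 0 ≤ α) (hε : 0 < ε)
    (hlip : ∀ x y, |u x - u y| ≤ ‖x - y‖ / ε) (x₀ : Pt n) {r : ℝ} (hr : 0 < r) (hrε : r ≤ ε) :
    ENNReal.ofReal (r ^ (-((n : ℝ) - 2 * α))) * energy α u x₀ r ≤
      4 * (bumpKernelMass n α * volume (ball (0 : Pt n) 1)) := by
  have hpow : r ^ (-((n : ℝ) - 2 * α)) * (2 * r) ^ (-(2 * α)) * r ^ n ≤ 1 :=
    calc r ^ (-((n : ℝ) - 2 * α)) * (2 * r) ^ (-(2 * α)) * r ^ n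
        = 2 ^ (-(2 * α)) * (r ^ (-((n : ℝ) - 2 * α)) * r ^ (-(2 * α)) * r ^ (n : ℝ)) := by
          rw [Real.mul_rpow zero_le_two hr.le, Real.rpow_natCast]
          ring
      _ = 2 ^ (-(2 * α)) := by
          rw [← Real.rpow_add hr, ← Real.rpow_add hr]
          ring_nf
          rw [Real.rpow_zero, mul_one]
      _ ≤ 1 := Real.rpow_le_one_of_one_le_of_nonpos one_le_two (by linarith)
  have hsq : (2 * r / ε) ^ 2 ≤ 4 := by
    have hle : 2 * r / ε ≤ 2 := by rw [div_le_iff₀ hε]; linarith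
    calc (2 * r / ε) ^ 2 ≤ 2 ^ 2 := pow_le_pow_left₀ (by positivity) hle 2
      _ = 4 := by norm_num
  calc ENNReal.ofReal (r ^ (-((n : ℝ) - 2 * α))) * energy α u x₀ r
      ≤ ENNReal.ofReal (r ^ (-((n : ℝ) - 2 * α))) * (ENNReal.ofReal ((2 * r / ε) ^ 2) *
          (ENNReal.ofReal ((2 * r) ^ (-(2 * α))) * bumpKernelMass n α) * volume (ball x₀ r)) := by
        gcongr
        exact energy_le_of_lipschitz hε hlip x₀ hr
    _ = ENNReal.ofReal
          (r ^ (-((n : ℝ) - 2 * α)) * (2 * r) ^ (-(2 * α)) * r ^ n * (2 * r / ε) ^ 2) *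
          (bumpKernelMass n α * volume (ball (0 : Pt n) 1)) := by
        rw [volume_ball_eq x₀ hr, ENNReal.ofReal_mul (by positivity),
          ENNReal.ofReal_mul (by positivity), ENNReal.ofReal_mul (by positivity)]
        ring
    _ ≤ 4 * (bumpKernelMass n α * volume (ball (0 : Pt n) 1)) := by
        gcongr
        rw [← ENNReal.ofReal_ofNat]
        refine ENNReal.ofReal_le_ofReal ?_
        nlinarith [sq_nonneg (2 * r / ε)]

lemma volume_thickening_inter_ball_le (hε : 0 < ε) {F G : Finset (Pt n)} {x₀ : Pt n} {r : ℝ}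
    (hG : ∀ e ∈ F, e ∈ ball x₀ (r + ε) → e ∈ G) :
    volume (thickening ε (F : Set (Pt n)) ∩ ball x₀ r) ≤
      G.card * (ENNReal.ofReal (ε ^ n) * volume (ball (0 : Pt n) 1)) := by
  have hsub : thickening ε (F : Set (Pt n)) ∩ ball x₀ r ⊆ ⋃ e ∈ G, ball e ε := by
    rintro x ⟨hx, hxr⟩
    obtain ⟨e, he, hxe⟩ := mem_thickening_iff.1 hx
    refine mem_biUnion (hG e he (mem_ball.2 ?_)) (mem_ball.2 hxe)
    linarith [dist_triangle_left e x₀ x, mem_ball.1 hxr]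
  calc volume (thickening ε (F : Set (Pt n)) ∩ ball x₀ r)
      ≤ ∑ e ∈ G, volume (ball e ε) := (measure_mono hsub).trans (measure_biUnion_finset_le G _)
    _ = G.card * (ENNReal.ofReal (ε ^ n) * volume (ball (0 : Pt n) 1)) := by
        simp only [volume_ball_eq _ hε, Finset.sum_const, nsmul_eq_mul]

/-- The worst radius is `r = R`, where `c` is of order `R ^ s`. -/
lemma rpow_neg_mul_mul_rpow_le {K R c r q s : ℝ} (hq : 0 ≤ q) (hqs : q ≤ s) (hK : 0 ≤ K)
    (hR : 1 ≤ R) (hε : 0 < ε) (hεr : ε ≤ r) (hεR : R ^ (s - q) * ε ^ q ≤ 1)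
    (hc0 : 0 ≤ c) (hc : c ≤ K * (2 * max r 1) ^ s) (hcR : c ≤ K * R ^ s) :
    r ^ (-q) * c * ε ^ q ≤ K * 2 ^ s := by
  have hr : 0 < r := hε.trans_le hεr
  have htwo : (1 : ℝ) ≤ 2 ^ s := Real.one_le_rpow one_le_two (hq.trans hqs)
  rcases le_total r 1 with h | h
  · rw [max_eq_right h, mul_one] at hc
    calc r ^ (-q) * c * ε ^ q ≤ r ^ (-q) * (K * 2 ^ s) * r ^ q := by gcongr
      _ = K * 2 ^ s := by rw [mul_comm (r ^ (-q)), mul_assoc, ← Real.rpow_add hr]; simp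
  · rw [max_eq_left h] at hc
    set m := min r R
    have hm : 0 < m := lt_min hr (by linarith)
    have hcm : c ≤ K * (2 * m) ^ s := by
      rcases min_choice r R with hmin | hmin <;> simp only [m, hmin]
      · exact hc
      · exact hcR.trans (by gcongr <;> linarith)
    calc r ^ (-q) * c * ε ^ q ≤ m ^ (-q) * (K * (2 * m) ^ s) * ε ^ q := by
          have hpow : r ^ (-q) ≤ m ^ (-q) :=
            Real.rpow_le_rpow_of_nonpos hm (min_le_left r R) (by linarith)
          gcongr
      _ = K * 2 ^ s * (m ^ (s - q) * ε ^ q) := by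
          rw [Real.mul_rpow zero_le_two hm.le, sub_eq_add_neg, Real.rpow_add hm]
          ring
      _ ≤ K * 2 ^ s * (R ^ (s - q) * ε ^ q) := by
          gcongr
          exact min_le_right r R
      _ ≤ K * 2 ^ s := mul_le_of_le_one_right (by positivity) hεR

variable {E : Set (Pt n)} {s K k R : ℝ} {F : Finset (Pt n)}

lemma ofReal_rpow_mul_energy_tent_le (hE : IsRegularLattice E s K k) (hq : 2 * α ≤ n)
    (hqs : n - 2 * α ≤ s) (hR : 1 ≤ R) (hF : (F : Set (Pt n)) ⊆ E ∩ ball 0 R) (hε : 0 < ε)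
    (hεR : R ^ (s - (n - 2 * α)) * ε ^ (n - 2 * α) ≤ 1) (x₀ : Pt n) {r : ℝ} (hεr : ε ≤ r) :
    ENNReal.ofReal (r ^ (-((n : ℝ) - 2 * α))) * energy α (tent hε (F : Set (Pt n))) x₀ r ≤
      ENNReal.ofReal (2 * (K * 2 ^ s)) * (bumpKernelMass n α * volume (ball (0 : Pt n) 1)) := by
  classical
  have hr : 0 < r := hε.trans_le hεr
  set G := F.filter (· ∈ ball x₀ (2 * max r 1))
  have hG : ∀ e ∈ F, e ∈ ball x₀ (r + ε) → e ∈ G := fun e he hball =>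
    Finset.mem_filter.2 ⟨he, ball_subset_ball (by linarith [le_max_left r 1]) hball⟩
  have hcard : (G.card : ℝ) ≤ K * (2 * max r 1) ^ s :=
    hE.card_le (by linarith [le_max_right r 1]) fun e he =>
      have he := Finset.mem_filter.1 (Finset.mem_coe.1 he)
      ⟨(hF he.1).1, he.2⟩
  have hcard' : (G.card : ℝ) ≤ K * R ^ s :=
    hE.card_le hR fun e he => hF (Finset.mem_filter.1 (Finset.mem_coe.1 he)).1
  have hreal := rpow_neg_mul_mul_rpow_le (sub_nonneg.2 hq) hqs (by linarith [hE.one_le_upper]) hR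
    hε hεr hεR (Nat.cast_nonneg _) hcard hcard'
  calc ENNReal.ofReal (r ^ (-((n : ℝ) - 2 * α))) * energy α (tent hε (F : Set (Pt n))) x₀ r
      ≤ ENNReal.ofReal (r ^ (-((n : ℝ) - 2 * α))) *
          (2 * (G.card * (ENNReal.ofReal (ε ^ n) * volume (ball (0 : Pt n) 1)) *
            (ENNReal.ofReal (ε ^ (-(2 * α))) * bumpKernelMass n α))) := by
        gcongr
        refine (energy_le_of_support hε isOpen_thickening.measurableSet (abs_tent_sub_le_one hε)
          (fun x y => ?_) (fun x => tent_eq_zero hε) x₀ r).trans ?_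
        · exact dist_eq_norm x y ▸ abs_tent_sub_le hε x y
        · gcongr
          exact volume_thickening_inter_ball_le hε hG
    _ = ENNReal.ofReal (2 * (r ^ (-((n : ℝ) - 2 * α)) * G.card * ε ^ (n - 2 * α))) *
          (bumpKernelMass n α * volume (ball (0 : Pt n) 1)) := by
        rw [sub_eq_add_neg (n : ℝ), Real.rpow_add hε, Real.rpow_natCast,
          ENNReal.ofReal_mul (by positivity), ENNReal.ofReal_mul (by positivity),
          ENNReal.ofReal_mul (by positivity), ENNReal.ofReal_mul (by positivity),
          ENNReal.ofReal_natCast, ENNReal.ofReal_ofNat]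
        ring
    _ ≤ _ := by gcongr

lemma exists_Qnorm_tent_le [NeZero n] (hα : 0 < α) (hα1 : α < 1) (hE : IsRegularLattice E s K k)
    (hq : 2 * α ≤ n) (hqs : n - 2 * α ≤ s) : ∃ A : ℝ≥0, ∀ R, 1 ≤ R → ∀ F : Finset (Pt n),
      (F : Set (Pt n)) ⊆ E ∩ ball 0 R → ∀ ε (hε : 0 < ε),
      R ^ (s - (n - 2 * α)) * ε ^ (n - 2 * α) ≤ 1 → Qnorm α (tent hε (F : Set (Pt n))) ≤ A := by
  set B := (4 + ENNReal.ofReal (2 * (K * 2 ^ s))) *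
    (bumpKernelMass n α * volume (ball (0 : Pt n) 1)) with hB
  have hBtop : B ≠ ⊤ := by
    finiteness [(bumpKernelMass_lt_top (n := n) hα hα1).ne,
      (measure_ball_lt_top (μ := volume) (x := (0 : Pt n)) (r := 1)).ne]
  refine ⟨(B ^ (1 / 2 : ℝ)).toNNReal, fun R hR F hF ε hε hεR => ?_⟩
  rw [ENNReal.coe_toNNReal (ENNReal.rpow_ne_top_of_nonneg (by norm_num) hBtop)]
  refine Qnorm_le fun x₀ r hr => ?_
  rw [hB, add_mul]
  rcases le_total r ε with hrε | hεr
  · exact (ofReal_rpow_mul_energy_le_of_le hα.le hε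
      (fun x y => dist_eq_norm x y ▸ abs_tent_sub_le hε x y) x₀ hr hrε).trans le_self_add
  · exact (ofReal_rpow_mul_energy_tent_le hE hq hqs hR hF hε hεR x₀ hεr).trans le_add_self

end UpperBound

section LowerBound

variable {n : ℕ} {α : ℝ}

lemma exists_le_Qnorm_of_isBumpAt [NeZero n] (hα : 0 ≤ α) : ∃ c > 0, ∀ R, 1 ≤ R →
    ∀ F : Finset (Pt n), (F : Set (Pt n)) ⊆ ball 0 R →
    (F : Set (Pt n)).Pairwise (fun x y => 1 ≤ dist x y) → ∀ δ, 0 < δ → δ ≤ 1 / 3 →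
    ∀ v : Pt n → ℝ, (∀ e ∈ F, IsBumpAt v e δ) →
    ENNReal.ofReal √(c * (R ^ (-((n : ℝ) - 2 * α)) * F.card * δ ^ ((n : ℝ) - 2 * α))) ≤
      Qnorm α v := by
  have hω : 0 < volume.real (ball (0 : Pt n) 1) :=
    ENNReal.toReal_pos (measure_ball_pos _ _ one_pos).ne' measure_ball_lt_top.ne
  refine ⟨2 ^ (-((n : ℝ) - 2 * α)) * (4⁻¹ / 4 ^ ((n : ℝ) + 2 * α) / 2 ^ n) *
    volume.real (ball (0 : Pt n) 1) ^ 2, by positivity, fun R hR F hF hsep δ hδ hδ1 v hv => ?_⟩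
  have hball : ∀ e ∈ F, ball e 1 ⊆ ball 0 (2 * R) := fun e he =>
    ball_subset_ball' (by linarith [mem_ball.1 (hF he)])
  refine le_trans ?_ (le_Qnorm v 0 (by linarith : 0 < 2 * R))
  rw [Real.sqrt_eq_rpow, ← ENNReal.ofReal_rpow_of_nonneg (by positivity) (by norm_num)]
  refine ENNReal.rpow_le_rpow ?_ (by norm_num)
  refine le_trans (le_of_eq ?_)
    (mul_le_mul_right (le_energy_of_isBumpAt hα hδ hδ1 hsep hball hv) _)
  have hpow : (2 * R) ^ (-((n : ℝ) - 2 * α)) *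
      (4⁻¹ / (4 * δ) ^ ((n : ℝ) + 2 * α) * δ ^ n * (δ / 2) ^ n) =
      2 ^ (-((n : ℝ) - 2 * α)) * (4⁻¹ / 4 ^ ((n : ℝ) + 2 * α) / 2 ^ n) *
        (R ^ (-((n : ℝ) - 2 * α)) * δ ^ ((n : ℝ) - 2 * α)) := by
    have hδpow : δ ^ ((n : ℝ) - 2 * α) = δ ^ n * δ ^ n / δ ^ ((n : ℝ) + 2 * α) := by
      rw [← Real.rpow_natCast, ← Real.rpow_add hδ, ← Real.rpow_sub hδ]
      ring_nf
    rw [hδpow, Real.mul_rpow zero_le_two (by linarith), Real.mul_rpow zero_le_four hδ.le, div_pow]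
    ring
  rw [← ofReal_measureReal, ← ENNReal.ofReal_pow hω.le, ← ENNReal.ofReal_natCast,
    ← ENNReal.ofReal_mul (by positivity), ← ENNReal.ofReal_mul (by positivity),
    ← ENNReal.ofReal_mul (by positivity)]
  congr 1
  linear_combination (-(F.card : ℝ) * volume.real (ball (0 : Pt n) 1) ^ 2) * hpow

end LowerBound

section Unbounded

variable {n : ℕ} {E : Set (Pt n)} {s K k : ℝ}

/-- With `ρ = R ^ (-(s - q) / (2q))` the bumps of radius `ρ²` have bounded norm, while the
right-hand side of the second estimate grows like `R ^ ((s - q) / 2)`. -/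
lemma exists_finset_scale (hE : IsRegularLattice E s K k) {q : ℝ} (hq : 0 < q) (hqs : q < s)
    (T : ℝ) : ∃ R, 1 ≤ R ∧ ∃ F : Finset (Pt n), F.Nonempty ∧ (F : Set (Pt n)) ⊆ E ∩ ball 0 R ∧
      ∃ ρ, 0 < ρ ∧ ρ ≤ 1 / 6 ∧ R ^ (s - q) * (ρ ^ 2) ^ q ≤ 1 ∧
        T < R ^ (-q) * F.card * (ρ / 2) ^ q := by
  set d := (s - q) / 2 with hd
  have hd0 : 0 < d := by linarith
  set c := k / ((n : ℝ) + 1) ^ s / 2 ^ q with hc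
  have hk := hE.lower_pos
  have hc0 : 0 < c := by positivity
  have hRlim : Tendsto (fun b : ℕ => ((n : ℝ) + 1) * 2 ^ b) atTop atTop :=
    (tendsto_pow_atTop_atTop_of_one_lt (one_lt_two (α := ℝ))).const_mul_atTop (by positivity)
  have hT := ((_root_.tendsto_rpow_atTop hd0).comp hRlim).const_mul_atTop hc0
  have hρlim := (tendsto_rpow_neg_atTop (div_pos hd0 hq)).comp hRlim
  obtain ⟨b, hTb, hρb⟩ := ((hT.eventually_gt_atTop T).and
    (hρlim.eventually_le_const (by norm_num : (0 : ℝ) < 1 / 6))).exists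
  obtain ⟨F, hFE, hFcard⟩ := hE.exists_finset b
  set R : ℝ := ((n : ℝ) + 1) * 2 ^ b with hR
  have hR1 : 1 ≤ R := one_le_mul_of_one_le_of_one_le (by simp) (one_le_pow₀ one_le_two)
  have hR0 : 0 < R := by linarith
  have hF : F.Nonempty := by
    have : (0 : ℝ) < F.card := lt_of_lt_of_le (by positivity) hFcard
    exact Finset.card_pos.1 (by exact_mod_cast this)
  have hρq : (R ^ (-(d / q))) ^ q = R ^ (-d) := by
    rw [← Real.rpow_mul hR0.le]
    congr 1
    field_simp
  refine ⟨R, hR1, F, hF, hFE, R ^ (-(d / q)), by positivity, hρb, ?_, ?_⟩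
  · rw [← Real.rpow_pow_comm (by positivity), hρq, ← Real.rpow_natCast, ← Real.rpow_mul hR0.le,
      ← Real.rpow_add hR0]
    have hexp : s - q + -d * (2 : ℕ) = 0 := by rw [hd]; push_cast; ring
    rw [hexp, Real.rpow_zero]
  · have hcount : k / ((n : ℝ) + 1) ^ s * R ^ s ≤ F.card := by
      rwa [hR, Real.mul_rpow (by positivity) (by positivity), ← mul_assoc,
        div_mul_cancel₀ _ (by positivity)]
    calc T < c * R ^ d := hTb
      _ = R ^ (-q) * (k / ((n : ℝ) + 1) ^ s * R ^ s) * (R ^ (-(d / q)) / 2) ^ q := by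
          have hsplit : R ^ d = R ^ (-q) * R ^ s * R ^ (-d) := by
            rw [← Real.rpow_add hR0, ← Real.rpow_add hR0, hd]
            ring_nf
          rw [Real.div_rpow (by positivity) zero_le_two, hρq, hsplit, hc]
          ring
      _ ≤ R ^ (-q) * F.card * (R ^ (-(d / q)) / 2) ^ q := by gcongr

lemma exists_memQ_lt_Qnorm_comp_stretch [NeZero n] (hE : IsRegularLattice E s K k) {α : ℝ}
    (hα : 0 < α) (hα1 : α < 1) (hq : 2 * α < n) (hqs : n - 2 * α < s) {C : ℝ} (hC : 0 < C) :
    ∃ u : Pt n → ℝ, MemQ α u ∧ 0 < Qnorm α u ∧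
      ENNReal.ofReal C * Qnorm α u < Qnorm α (u ∘ stretch E) := by
  obtain ⟨A, hA⟩ := exists_Qnorm_tent_le hα hα1 hE hq.le hqs.le
  obtain ⟨c, hc, hlower⟩ := exists_le_Qnorm_of_isBumpAt (n := n) hα.le
  obtain ⟨R, hR, F, hF, hFE, ρ, hρ, hρ1, hρR, hT⟩ :=
    exists_finset_scale hE (sub_pos.2 hq) hqs ((C * A) ^ 2 / c)
  have hsep := hE.pairwise_one_le_dist
  have hFE' : (F : Set (Pt n)) ⊆ E := hFE.trans inter_subset_left
  have hFR : (F : Set (Pt n)) ⊆ ball 0 R := hFE.trans inter_subset_right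
  have hρ2 : ρ ^ 2 ≤ 1 / 4 := by nlinarith
  have hupper := hA R hR F hFE (ρ ^ 2) (pow_pos hρ 2) hρR
  refine ⟨tent (pow_pos hρ 2) F, ⟨?_, hupper.trans_lt ENNReal.coe_lt_top⟩, ?_, ?_⟩
  · exact ((continuous_tent _).abs.pow 2).locallyIntegrable
  · refine lt_of_lt_of_le ?_ (hlower R hR F hFR (hsep.mono hFE') (ρ ^ 2) (pow_pos hρ 2)
      (by linarith) _ fun e he => isBumpAt_tent (hsep.mono hFE') _ hρ2 he)
    have : (0 : ℝ) < F.card := by exact_mod_cast hF.card_pos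
    rw [ENNReal.ofReal_pos, Real.sqrt_pos]
    positivity
  · calc ENNReal.ofReal C * Qnorm α (tent (pow_pos hρ 2) (F : Set (Pt n)))
        ≤ ENNReal.ofReal C * A := by gcongr
      _ = ENNReal.ofReal (C * A) := by rw [ENNReal.ofReal_mul hC.le, ENNReal.ofReal_coe_nnreal]
      _ < ENNReal.ofReal
            √(c * (R ^ (-((n : ℝ) - 2 * α)) * F.card * (ρ / 2) ^ ((n : ℝ) - 2 * α))) := by
          rw [div_lt_iff₀' hc] at hT
          rw [ENNReal.ofReal_lt_ofReal_iff_of_nonneg (by positivity)]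
          exact (Real.lt_sqrt (by positivity)).2 hT
      _ ≤ _ := hlower R hR F hFR (hsep.mono hFE') (ρ / 2) (half_pos hρ) (by linarith) _
          fun e he => isBumpAt_tent_comp_stretch hsep hFE' hρ hρ1 he

end Unbounded

/-- In dimension one the range of exponents ends at `α = 1/2`: beyond it `Q_α(ℝ)` contains only
constants. -/
theorem exists_unbounded_counterexample_general (n : ℕ) (α₀ : ℝ) (h0 : 0 ≤ α₀)
    (hn : 2 * α₀ < n) :
    ∃ E : Set (Pt n), (∀ x ∈ E, ∀ i, ∃ m : ℤ, x i = (m : ℝ)) ∧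
      ¬ Bornology.IsBounded E ∧
      dimGlob E = (n : ℝ) - 2 * α₀ ∧ dimLoc E = 0 ∧
      ∃ f : Pt n ≃ₜ Pt n,
        (∃ K : ℝ≥0, LipschitzWith K (⇑f)) ∧
        (∃ η : ℝ≥0 ≃o ℝ≥0, IsQS (⇑f) η) ∧
        ∃ Jf : Pt n → ℝ, JacobianCOV (⇑f) Jf ∧ MemA1 Jf (closure E) ∧
          ∀ α ∈ Ioo α₀ (min 1 (n / 2 : ℝ)), ∀ C > (0:ℝ), ∃ u : Pt n → ℝ, MemQ α u ∧
            0 < Qnorm α u ∧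
            ENNReal.ofReal C * Qnorm α u < Qnorm α (u ∘ ⇑f) := by
  have hn0 : (0 : ℝ) < n := by linarith
  have : NeZero n := ⟨by exact_mod_cast hn0.ne'⟩
  have hσ0 : 0 ≤ (n - 2 * α₀) / n := div_nonneg (by linarith) hn0.le
  have hσ1 : (n - 2 * α₀) / n ≤ 1 := (div_le_one hn0).2 (by linarith)
  have hE := (isBalanced_jumpSet hσ0 hσ1).isRegularLattice_latticeSet hσ0 hσ1 n
  rw [mul_div_cancel₀ _ hn0.ne'] at hE
  have hsep := hE.pairwise_one_le_dist
  have hunbdd := hE.not_isBounded (by linarith)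
  have hne : (latticeSet n (jumpSet ((n - 2 * α₀) / n))).Nonempty :=
    nonempty_iff_ne_empty.2 fun h => hunbdd (by rw [h]; exact Bornology.isBounded_empty)
  refine ⟨_, hE.exists_int, hunbdd, hE.dimGlob_eq, hE.dimLoc_eq_zero, stretchHomeo _ hsep hne,
    ⟨8, lipschitzWith_stretch hsep hne⟩, ⟨stretchDistortion, isQS_stretch hsep hne⟩, _,
    jacobianCOV_stretch hsep hne (countable_of_int hE.exists_int), memA1_stretchJacobian hne,
    fun α hα C hC => ?_⟩
  obtain ⟨hα1, hαn⟩ := lt_min_iff.1 hα.2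
  exact exists_memQ_lt_Qnorm_comp_stretch hE (h0.trans_lt hα.1) hα1 (by linarith)
    (by linarith [hα.1]) hC

/-- Theorem 1.6: for `n ≥ 2` and `α₀ ∈ (0,1)` there exist an unbounded set
`E ⊂ ℤⁿ` with `dim_LG E = n - 2α₀` but `dim_L E = 0`, and a Lipschitz quasisymmetric
homeomorphism `f` of `ℝⁿ` with `J_f ∈ A₁(ℝⁿ; closure E)`, such that `u ↦ u ∘ f` is
unbounded on `Q_α(ℝⁿ)` for every `α ∈ (α₀, 1)`. -/
theorem exists_unbounded_counterexample (n : ℕ) (hn : 2 ≤ n) (α₀ : ℝ)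
    (hα₀ : α₀ ∈ Ioo (0:ℝ) 1) :
    ∃ E : Set (Pt n), (∀ x ∈ E, ∀ i, ∃ m : ℤ, x i = (m : ℝ)) ∧
      ¬ Bornology.IsBounded E ∧
      dimGlob E = (n : ℝ) - 2 * α₀ ∧ dimLoc E = 0 ∧
      ∃ f : Pt n ≃ₜ Pt n,
        (∃ K : ℝ≥0, LipschitzWith K (⇑f)) ∧
        (∃ η : ℝ≥0 ≃o ℝ≥0, IsQS (⇑f) η) ∧
        ∃ Jf : Pt n → ℝ, JacobianCOV (⇑f) Jf ∧ MemA1 Jf (closure E) ∧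
          ∀ α ∈ Ioo α₀ (1:ℝ), ∀ C > (0:ℝ), ∃ u : Pt n → ℝ, MemQ α u ∧
            0 < Qnorm α u ∧
            ENNReal.ofReal C * Qnorm α u < Qnorm α (u ∘ ⇑f) := by
  have hn' : (2 : ℝ) ≤ n := by exact_mod_cast hn
  have hmin : min (1 : ℝ) (n / 2) = 1 := min_eq_left (by linarith)
  simpa only [hmin] using
    exists_unbounded_counterexample_general n α₀ hα₀.1.le (by linarith [hα₀.2])

end
end

section
/- Let n ≥ 2, α ∈ (0,1), and let f : ℝⁿ → ℝⁿ be a homeomorphism that is η-quasisymmetric for some homeomorphism η : [0,∞) → [0,∞); assume f and f⁻¹ are differentiable almost everywhere with Jacobians J_f = |det Df| and J_{f⁻¹} = |det D(f⁻¹)| satisfying the change-of-variables formula ∫ g(f(x)) J_f(x) dx = ∫ g(y) dy and ∫ g(f⁻¹(x)) J_{f⁻¹}(x) dx = ∫ g(y) dy for every nonnegative measurable g, and J_f ∈ A_1(ℝⁿ; E) for some closed set E ⊆ ℝⁿ. Then there exists a constant C > 0 such that for every ball B(x₀,r) with dist(x₀, E) ≥ 4r and every u ∈ Q_α(ℝⁿ),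 one has Ψ_{α,2}(u∘f, B(x₀,r)) ≤ C ‖u‖²_{Q_α}. -/
/-!
Fix a pair `(a, b)`. The scales `2⁻ᵏ r` and centres `x ∈ B(x₀, r)` with `a, b ∈ B(x, 2⁻ᵏ r)`
contribute to `Ψ_{α,2}` a factor of at most a constant times `r^{2α-n} |a-b|^{-n-2α}`, and nothing
unless `|a-b| < 2r`. So `Ψ_{α,2}(u ∘ f, B(x₀, r))` is bounded by a multiple of
`r^{2α-n} ∬ |u(f a) - u(f b)|² |a-b|^{-n-2α}`, taken over the pairs in `B(x₀, 2r)` with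
`|a-b| < 2r`.

If `2s < dist(y, E)`, then quasisymmetry bounds `(diam f(B(y, 3s)))ⁿ` by a multiple of
`|f(B(y, s))| = ∫_{B(y,s)} J`, and the `A₁` condition bounds the average of `J` over `B(y, s)` by a
multiple of `J(b)`, for almost every `b` and all such balls containing `b` at once. For balls
centred at midpoints this gives `|f a - f b|ⁿ ≤ c |a-b|ⁿ J(a)`, the same with `J(b)`, and
`Rⁿ ≤ c rⁿ J(b)` for `R = 2 diam f(B(x₀, 2r))`. As `0 ≤ 2α ≤ n`, the two bounds on `J(b)` can be
interpolated, so that `r^{2α-n} |a-b|^{-n-2α} ≤ c² R^{2α-n} |f a - f b|^{-n-2α} J(a) J(b)`, and a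
change of variables turns the right-hand side into the `Q_α`-energy of `u` on `B(f x₀, R)`.

Membership in `Q_α`, as encoded by `MemQ`, makes only `|u|` measurable, and `∫⁻` of a non-measurable
function is its lower integral, for which Tonelli's theorem fails. Exchanging the integrals in
`Ψ_{α,2}` therefore requires a measurable substitute for `|u(f a) - u(f b)|²`; the change of
variables, by contrast, holds for lower integrals because `f` is a homeomorphism.
-/

open MeasureTheory Metric Filter Set ENNReal NNReal

noncomputable section

/-! ### Lower integrals of functions with two measurable branches -/

section LowerEnvelope

variable {X : Type*} [MeasurableSpace X] (μ : Measure X)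

open Classical in
/-- If `φ` agrees with `G` on `A` and with `H` on `B`, where `A ∪ B` is conull but `A` and `B` need
not be measurable, then `lowerEnvelope μ A B G H` is, up to null sets, the largest measurable
minorant of `φ`. -/
def lowerEnvelope (A B : Set X) (G H : X → ℝ≥0∞) (z : X) : ℝ≥0∞ :=
  min (if z ∈ toMeasurable μ A then G z else ⊤) (if z ∈ toMeasurable μ B then H z else ⊤)

variable {μ} {A B : Set X}

lemma measurable_lowerEnvelope {Y : Type*} [MeasurableSpace Y] {G H : Y → X → ℝ≥0∞}
    (hG : Measurable (Function.uncurry G)) (hH : Measurable (Function.uncurry H)) :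
    Measurable (Function.uncurry fun y => lowerEnvelope μ A B (G y) (H y)) := by
  classical
  exact .min (.ite (measurable_snd (measurableSet_toMeasurable μ A)) hG measurable_const)
    (.ite (measurable_snd (measurableSet_toMeasurable μ B)) hH measurable_const)

variable {G H φ : X → ℝ≥0∞}

lemma lowerEnvelope_ae_le (hAB : ∀ᵐ z ∂μ, z ∈ A ∨ z ∈ B) (hA : EqOn φ G A) (hB : EqOn φ H B) :
    lowerEnvelope μ A B G H ≤ᵐ[μ] φ := by
  filter_upwards [hAB] with z hz
  rcases hz with hz | hz
  · exact (min_le_left _ _).trans (by rw [if_pos (subset_toMeasurable μ A hz), hA hz])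
  · exact (min_le_right _ _).trans (by rw [if_pos (subset_toMeasurable μ B hz), hB hz])

lemma exists_measurable_le_comp {F : ℝ → X → ℝ≥0∞} (hF : Measurable (Function.uncurry F))
    {U : X → ℝ} (hU : AEMeasurable (fun x => |U x|) μ) :
    ∃ V : X → ℝ, Measurable V ∧ ∀ᵐ w ∂μ, F (V w) w ≤ F (U w) w := by
  classical
  obtain ⟨v, hv, hUv⟩ := hU
  have hFg {g : X → ℝ} (hg : Measurable g) : Measurable fun w => F (g w) w :=
    hF.comp (hg.prodMk measurable_id)
  refine ⟨fun w => if F (v w) w ≤ F (-v w) w then v w else -v w,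
    .ite (measurableSet_le (hFg hv) (hFg hv.neg)) hv hv.neg, ?_⟩
  filter_upwards [hUv] with w hw
  rcases eq_or_eq_neg_of_abs_eq hw with hw | hw <;> rw [hw] <;> split_ifs with h
  exacts [le_rfl, (not_le.1 h).le, h, le_rfl]

variable [SFinite μ]

lemma ae_le_on_toMeasurable {g : X → ℝ≥0∞} (hg : Measurable g) (hG : Measurable G)
    (h : ∀ z ∈ A, g z ≤ G z) : ∀ᵐ z ∂μ, z ∈ toMeasurable μ A → g z ≤ G z := by
  have hdisj : A ∩ {z | G z < g z} = ∅ :=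
    eq_empty_of_forall_notMem fun z hz => hz.2.not_ge (h z hz.1)
  have hnull : μ (toMeasurable μ A ∩ {z | G z < g z}) = 0 := by
    rw [Measure.measure_toMeasurable_inter_of_sFinite (measurableSet_lt hG hg), hdisj,
      measure_empty]
  filter_upwards [measure_eq_zero_iff_ae_notMem.1 hnull] with z hz hzA
  exact not_lt.1 fun hlt => hz ⟨hzA, hlt⟩

lemma ae_le_lowerEnvelope {g : X → ℝ≥0∞} (hg : Measurable g) (hG : Measurable G)
    (hH : Measurable H) (hgφ : g ≤ φ) (hA : EqOn φ G A) (hB : EqOn φ H B) :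
    g ≤ᵐ[μ] lowerEnvelope μ A B G H := by
  filter_upwards [ae_le_on_toMeasurable hg hG fun z hz => (hgφ z).trans_eq (hA hz),
    ae_le_on_toMeasurable hg hH fun z hz => (hgφ z).trans_eq (hB hz)] with z hzA hzB
  refine le_min ?_ ?_
  · split_ifs with h
    exacts [hzA h, le_top]
  · split_ifs with h
    exacts [hzB h, le_top]

lemma setLIntegral_le_lowerEnvelope (hG : Measurable G) (hH : Measurable H) (hA : EqOn φ G A)
    (hB : EqOn φ H B) (S : Set X) :
    ∫⁻ z in S, φ z ∂μ ≤ ∫⁻ z in S, lowerEnvelope μ A B G H z ∂μ := by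
  obtain ⟨g, hg, hgφ, hint⟩ := exists_measurable_le_lintegral_eq (μ.restrict S) φ
  rw [hint]
  exact lintegral_mono_ae (ae_restrict_of_ae (ae_le_lowerEnvelope hg hG hH hgφ hA hB))

lemma exists_measurable_sq_dist_version {U : X → ℝ} (hU : AEMeasurable (fun x => |U x|) μ) :
    ∃ d : ℝ → X → ℝ≥0∞, Measurable (Function.uncurry d) ∧
      (∀ c S, ∫⁻ z in S, ENNReal.ofReal (|U z - c| ^ 2) ∂μ ≤ ∫⁻ z in S, d c z ∂μ) ∧
      ∀ c, ∀ᵐ z ∂μ, d c z ≤ ENNReal.ofReal (|U z - c| ^ 2) := by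
  obtain ⟨v, hv, hUv⟩ := hU
  have hsign : ∀ᵐ z ∂μ, z ∈ {z | U z = v z} ∨ z ∈ {z | U z = -v z} := by
    filter_upwards [hUv] with z hz
    exact eq_or_eq_neg_of_abs_eq hz
  have hmeas {g : X → ℝ} (hg : Measurable g) :
      Measurable (Function.uncurry fun c z => ENNReal.ofReal (|g z - c| ^ 2)) := by
    unfold Function.uncurry; fun_prop
  have hmeas' {g : X → ℝ} (hg : Measurable g) (c : ℝ) :
      Measurable fun z => ENNReal.ofReal (|g z - c| ^ 2) := by fun_prop
  have hEqOn (g : X → ℝ) (c : ℝ) : EqOn (fun z => ENNReal.ofReal (|U z - c| ^ 2))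
      (fun z => ENNReal.ofReal (|g z - c| ^ 2)) {z | U z = g z} :=
    fun z (hz : U z = g z) => by simp only [hz]
  exact ⟨_, measurable_lowerEnvelope (hmeas hv) (hmeas hv.neg),
    fun c => setLIntegral_le_lowerEnvelope (hmeas' hv c) (hmeas' hv.neg c) (hEqOn v c) (hEqOn _ c),
    fun c => lowerEnvelope_ae_le hsign (hEqOn v c) (hEqOn _ c)⟩

/-- A measurable substitute `T w z` for `|U w - U z|²`: it takes the form `d (V w) z`, where `d c`
is a measurable version of `|U - c|²` and `V = ±|U|` carries the sign with the smaller energy. -/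
lemma exists_measurable_sq_dist_minorant {U : X → ℝ} (hU : AEMeasurable (fun x => |U x|) μ)
    {K : X → X → ℝ≥0∞} (hK : Measurable (Function.uncurry K)) :
    ∃ T : X → X → ℝ≥0∞, Measurable (Function.uncurry T) ∧
      (∀ w, ∃ c : ℝ, ∀ S, ∫⁻ z in S, ENNReal.ofReal (|U z - c| ^ 2) ∂μ ≤ ∫⁻ z in S, T w z ∂μ) ∧
      ∀ᵐ w ∂μ, ∫⁻ z, T w z * K w z ∂μ ≤ ∫⁻ z, ENNReal.ofReal (|U w - U z| ^ 2) * K w z ∂μ := by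
  obtain ⟨d, hd, hle_d, hd_le⟩ := exists_measurable_sq_dist_version hU
  have hdK : Measurable fun q : (ℝ × X) × X => d q.1.1 q.2 * K q.1.2 q.2 :=
    (hd.comp (by fun_prop : Measurable fun q : (ℝ × X) × X => (q.1.1, q.2))).mul
      (hK.comp (by fun_prop : Measurable fun q : (ℝ × X) × X => (q.1.2, q.2)))
  obtain ⟨V, hV, hVU⟩ := exists_measurable_le_comp
    (F := fun c w => ∫⁻ z, d c z * K w z ∂μ) hdK.lintegral_prod_right' hU
  refine ⟨fun w => d (V w), hd.comp (by fun_prop : Measurable fun q : X × X => (V q.1, q.2)),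
    fun w => ⟨V w, hle_d (V w)⟩, ?_⟩
  filter_upwards [hVU] with w hw
  refine hw.trans (lintegral_mono_ae ?_)
  filter_upwards [hd_le (U w)] with z hz
  rw [abs_sub_comm (U w)]
  gcongr

end LowerEnvelope

/-! ### Domination of `Ψ_{α,2}` by a double integral -/

section MeanSqOsc

variable {X : Type*} [MeasurableSpace X] {μ : Measure X}

/-- The mean square oscillation `inf_c ⨍_B |U - c|²`, with `∫⁻` the lower integral when `U` is not
measurable. -/
def meanSqOsc (μ : Measure X) (U : X → ℝ) (B : Set X) : ℝ≥0∞ :=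
  ⨅ c : ℝ, (μ B)⁻¹ * ∫⁻ z in B, ENNReal.ofReal (|U z - c| ^ 2) ∂μ

lemma meanSqOsc_le_lintegral_lintegral {U : X → ℝ} {B : Set X} {T : X → X → ℝ≥0∞}
    (hT : ∀ w, ∃ c : ℝ, ∫⁻ z in B, ENNReal.ofReal (|U z - c| ^ 2) ∂μ ≤ ∫⁻ z in B, T w z ∂μ)
    (h0 : μ B ≠ 0) (htop : μ B ≠ ⊤) :
    meanSqOsc μ U B ≤ (μ B)⁻¹ * (μ B)⁻¹ * ∫⁻ w in B, ∫⁻ z in B, T w z ∂μ ∂μ := by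
  have hle (w : X) : meanSqOsc μ U B ≤ (μ B)⁻¹ * ∫⁻ z in B, T w z ∂μ := by
    obtain ⟨c, hc⟩ := hT w
    exact (iInf_le _ c).trans (mul_le_mul_right hc _)
  calc meanSqOsc μ U B
      = (μ B)⁻¹ * ∫⁻ _ in B, meanSqOsc μ U B ∂μ := by
        rw [setLIntegral_const, mul_left_comm, ENNReal.inv_mul_cancel h0 htop, mul_one]
    _ ≤ (μ B)⁻¹ * ∫⁻ w in B, (μ B)⁻¹ * ∫⁻ z in B, T w z ∂μ ∂μ := by
        gcongr with w
        exact hle w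
    _ = (μ B)⁻¹ * (μ B)⁻¹ * ∫⁻ w in B, ∫⁻ z in B, T w z ∂μ ∂μ := by
        rw [lintegral_const_mul' _ _ (ENNReal.inv_ne_top.2 h0), mul_assoc]

lemma lintegral_lintegral_lintegral_rotate {Y Z : Type*} [MeasurableSpace Y] [MeasurableSpace Z]
    {ν : Measure Y} {κ : Measure Z} [SFinite μ] [SFinite ν] [SFinite κ] {G : X → Y → Z → ℝ≥0∞}
    (hG : Measurable fun q : X × Y × Z => G q.1 q.2.1 q.2.2) :
    ∫⁻ x, ∫⁻ y, ∫⁻ z, G x y z ∂κ ∂ν ∂μ = ∫⁻ y, ∫⁻ z, ∫⁻ x, G x y z ∂μ ∂κ ∂ν := by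
  have hG' : Measurable fun q : (X × Y) × Z => G q.1.1 q.1.2 q.2 :=
    hG.comp MeasurableEquiv.prodAssoc.measurable
  rw [lintegral_lintegral_swap hG'.lintegral_prod_right'.aemeasurable]
  exact lintegral_congr fun y => lintegral_lintegral_swap
    (hG.comp (by fun_prop : Measurable fun q : X × Z => (q.1, y, q.2))).aemeasurable

lemma tsum_mul_lintegral_lintegral [SFinite μ] {T : X → X → ℝ≥0∞}
    (hT : Measurable (Function.uncurry T)) {κ : ℕ → X → X → ℝ≥0∞}
    (hκ : ∀ k, Measurable (Function.uncurry (κ k))) (c : ℕ → ℝ≥0∞) :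
    ∑' k, c k * ∫⁻ w, ∫⁻ z, T w z * κ k w z ∂μ ∂μ =
      ∫⁻ w, ∫⁻ z, T w z * ∑' k, c k * κ k w z ∂μ ∂μ := by
  have hTκ (k : ℕ) : Measurable fun q : X × X => T q.1 q.2 * κ k q.1 q.2 := hT.mul (hκ k)
  have hsec (k : ℕ) (w : X) : Measurable fun z => T w z * κ k w z :=
    (hTκ k).comp measurable_prodMk_left
  simp only [← ENNReal.tsum_mul_left, mul_left_comm (T _ _)]
  simp_rw [lintegral_tsum fun k => ((hsec k _).const_mul (c k)).aemeasurable,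
    lintegral_const_mul _ (hsec _ _)]
  rw [lintegral_tsum fun k => ((hTκ k).lintegral_prod_right'.const_mul (c k)).aemeasurable]
  exact tsum_congr fun k => (lintegral_const_mul _ (hTκ k).lintegral_prod_right').symm

end MeanSqOsc

section Centres

variable {X : Type*} [PseudoMetricSpace X] [MeasurableSpace X] [OpensMeasurableSpace X]
  {μ : Measure X} {ρ : ℝ}

lemma lintegral_centres_le (w z : X) (t : ℝ≥0∞) :
    ∫⁻ x, (if dist w x < ρ ∧ dist z x < ρ then t else 0) ∂μ ≤
      t * if dist w z < 2 * ρ then μ (ball w ρ) else 0 := by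
  split_ifs with hwz
  · rw [← lintegral_indicator_const measurableSet_ball]
    refine lintegral_mono fun x => ?_
    split_ifs with hx
    · rw [indicator_of_mem (mem_ball'.2 hx.1)]
    · exact zero_le
  · have hfar (x : X) : ¬(dist w x < ρ ∧ dist z x < ρ) := fun hx => by
      linarith [dist_triangle_right w z x]
    simp only [if_neg (hfar _), lintegral_zero, mul_zero, le_refl]

variable [SecondCountableTopology X] [SFinite μ]

lemma lintegral_lintegral_ball_le {S D : Set X} (hS : MeasurableSet S)
    (hSD : ∀ x ∈ S, ball x ρ ⊆ D) {T : X → X → ℝ≥0∞} (hT : Measurable (Function.uncurry T)) :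
    ∫⁻ x in S, ∫⁻ w in ball x ρ, ∫⁻ z in ball x ρ, T w z ∂μ ∂μ ∂μ ≤
      ∫⁻ w in D, ∫⁻ z in D, T w z * (if dist w z < 2 * ρ then μ (ball w ρ) else 0) ∂μ ∂μ := by
  let G (x w z : X) : ℝ≥0∞ := if dist w x < ρ ∧ dist z x < ρ then T w z else 0
  have hG : Measurable fun q : X × X × X => G q.1 q.2.1 q.2.2 := by
    have hw : MeasurableSet {q : X × X × X | dist q.2.1 q.1 < ρ} :=
      measurableSet_lt (by fun_prop) measurable_const
    have hz : MeasurableSet {q : X × X × X | dist q.2.2 q.1 < ρ} :=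
      measurableSet_lt (by fun_prop) measurable_const
    exact .ite (hw.inter hz) (hT.comp measurable_snd) measurable_const
  have hlocal (x : X) (hx : x ∈ S) : ∫⁻ w in ball x ρ, ∫⁻ z in ball x ρ, T w z ∂μ ∂μ ≤
      ∫⁻ w in D, ∫⁻ z in D, G x w z ∂μ ∂μ := by
    refine le_trans ?_ (lintegral_mono_set (hSD x hx))
    refine setLIntegral_mono' measurableSet_ball fun w hw => ?_
    refine le_trans ?_ (lintegral_mono_set (hSD x hx))
    exact setLIntegral_mono' measurableSet_ball fun z hz => (if_pos ⟨hw, hz⟩).ge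
  calc ∫⁻ x in S, ∫⁻ w in ball x ρ, ∫⁻ z in ball x ρ, T w z ∂μ ∂μ ∂μ
      ≤ ∫⁻ x in S, ∫⁻ w in D, ∫⁻ z in D, G x w z ∂μ ∂μ ∂μ := setLIntegral_mono' hS hlocal
    _ = ∫⁻ w in D, ∫⁻ z in D, ∫⁻ x in S, G x w z ∂μ ∂μ ∂μ :=
        lintegral_lintegral_lintegral_rotate hG
    _ ≤ _ := lintegral_mono fun w => lintegral_mono fun z =>
        (setLIntegral_le_lintegral S _).trans (lintegral_centres_le w z (T w z))

end Centres

lemma lintegral_meanSqOsc_ball_le {E : Type*} [NormedAddCommGroup E] [NormedSpace ℝ E]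
    [FiniteDimensional ℝ E] [MeasurableSpace E] [BorelSpace E] {μ : Measure E}
    [μ.IsAddHaarMeasure] {S D : Set E} {ρ : ℝ} (hρ : 0 < ρ) (hS : MeasurableSet S)
    (hSD : ∀ x ∈ S, ball x ρ ⊆ D) {U : E → ℝ} {T : E → E → ℝ≥0∞}
    (hT : Measurable (Function.uncurry T))
    (hUT : ∀ w, ∃ c : ℝ, ∀ B ⊆ D,
      ∫⁻ z in B, ENNReal.ofReal (|U z - c| ^ 2) ∂μ ≤ ∫⁻ z in B, T w z ∂μ) :
    ∫⁻ x in S, meanSqOsc μ U (ball x ρ) ∂μ ≤ ∫⁻ w in D, ∫⁻ z in D,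
      T w z * (if dist w z < 2 * ρ then (μ (ball 0 ρ))⁻¹ else 0) ∂μ ∂μ := by
  set V := μ (ball 0 ρ)
  have hV (x : E) : μ (ball x ρ) = V := Measure.addHaar_ball_center μ x ρ
  have hV0 : V ≠ 0 := (measure_ball_pos μ 0 hρ).ne'
  have hVtop : V ≠ ⊤ := measure_ball_lt_top.ne
  have hVV : V⁻¹ * V⁻¹ ≠ ⊤ :=
    ENNReal.mul_ne_top (ENNReal.inv_ne_top.2 hV0) (ENNReal.inv_ne_top.2 hV0)
  have hosc (x : E) (hx : x ∈ S) : meanSqOsc μ U (ball x ρ) ≤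
      V⁻¹ * V⁻¹ * ∫⁻ w in ball x ρ, ∫⁻ z in ball x ρ, T w z ∂μ ∂μ := by
    rw [← hV x] at hV0 hVtop ⊢
    exact meanSqOsc_le_lintegral_lintegral
      (fun w => (hUT w).imp fun c hc => hc _ (hSD x hx)) hV0 hVtop
  calc ∫⁻ x in S, meanSqOsc μ U (ball x ρ) ∂μ
      ≤ V⁻¹ * V⁻¹ * ∫⁻ x in S, ∫⁻ w in ball x ρ, ∫⁻ z in ball x ρ, T w z ∂μ ∂μ ∂μ := by
        rw [← lintegral_const_mul' _ _ hVV]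
        exact setLIntegral_mono' hS hosc
    _ ≤ V⁻¹ * V⁻¹ * ∫⁻ w in D, ∫⁻ z in D,
          T w z * (if dist w z < 2 * ρ then V else 0) ∂μ ∂μ := by
        refine mul_le_mul_right ?_ _
        simpa only [hV] using lintegral_lintegral_ball_le (μ := μ) hS hSD hT
    _ = _ := by
        simp_rw [← lintegral_const_mul' _ _ hVV, mul_left_comm _ (T _ _), mul_ite, mul_zero,
          mul_assoc, ENNReal.inv_mul_cancel hV0 hVtop, mul_one]

section Psi

variable {n : ℕ}

lemma Psi_two_eq (α : ℝ) (U : Pt n → ℝ) (x₀ : Pt n) (r : ℝ) :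
    Psi α 2 U x₀ r = ∑' k : ℕ, ENNReal.ofReal (((2 : ℝ) ^ k) ^ (2 * α)) *
      ((volume (ball x₀ r))⁻¹ *
        ∫⁻ x in ball x₀ r, meanSqOsc volume U (ball x (r / 2 ^ k))) := by
  have hweight (k : ℕ) : (2 : ℝ) ^ (2 * (k : ℝ) * α) = ((2 : ℝ) ^ k) ^ (2 * α) := by
    rw [← Real.rpow_natCast, ← Real.rpow_mul zero_le_two]
    ring_nf
  have hradius (k : ℕ) : (2 : ℝ) ^ (-(k : ℝ)) * r = r / 2 ^ k := by
    rw [Real.rpow_neg zero_le_two, Real.rpow_natCast, inv_mul_eq_div]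
  simp only [Psi, meanSqOsc, hweight, hradius, div_self (two_ne_zero' ℝ), ENNReal.rpow_one,
    Real.rpow_two]

/-- The kernel left over when the sum over scales and the integral over centres in `Ψ_{α,2}` are
carried out for a fixed pair `(a, b)`. It vanishes for `|a-b| ≥ 2r`, and is otherwise comparable to
`r^{2α-n} |a-b|^{-n-2α}`. -/
def scaleKernel (α r : ℝ) (a b : Pt n) : ℝ≥0∞ :=
  ∑' k : ℕ, ENNReal.ofReal (((2 : ℝ) ^ k) ^ (2 * α)) * (volume (ball (0 : Pt n) r))⁻¹ *
    if dist a b < 2 * (r / 2 ^ k) then (volume (ball (0 : Pt n) (r / 2 ^ k)))⁻¹ else 0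

lemma measurable_ite_dist_lt (c : ℝ) (v : ℝ≥0∞) :
    Measurable (Function.uncurry fun a b : Pt n => if dist a b < c then v else 0) :=
  .ite (measurableSet_lt (by fun_prop) measurable_const) measurable_const measurable_const

lemma measurable_scaleKernel (α r : ℝ) :
    Measurable (Function.uncurry (scaleKernel (n := n) α r)) :=
  .tsum fun _ => (measurable_ite_dist_lt _ _).const_mul _

lemma Psi_le_lintegral (α : ℝ) {x₀ : Pt n} {r : ℝ} (hr : 0 < r) {U : Pt n → ℝ}
    (hU : AEMeasurable (fun x => |U x|) (volume.restrict (ball x₀ (2 * r)))) :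
    Psi α 2 U x₀ r ≤ ∫⁻ w in ball x₀ (2 * r), ∫⁻ z in ball x₀ (2 * r),
      ENNReal.ofReal (|U w - U z| ^ 2) * scaleKernel α r w z := by
  set D := ball x₀ (2 * r)
  obtain ⟨T, hT, hUT, hTU⟩ :=
    exists_measurable_sq_dist_minorant hU (measurable_scaleKernel α r)
  have hUT' (w : Pt n) : ∃ c : ℝ, ∀ B ⊆ D,
      ∫⁻ z in B, ENNReal.ofReal (|U z - c| ^ 2) ≤ ∫⁻ z in B, T w z :=
    (hUT w).imp fun c hc B hB => by
      simpa only [Measure.restrict_restrict_of_subset hB] using hc B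
  have hball (k : ℕ) : ∀ x ∈ ball x₀ r, ball x (r / 2 ^ k) ⊆ D := fun x hx =>
    ball_subset_ball' (by
      linarith [mem_ball.1 hx, div_le_self hr.le (one_le_pow₀ (M₀ := ℝ) one_le_two (n := k))])
  calc Psi α 2 U x₀ r
      ≤ ∑' k : ℕ, ENNReal.ofReal (((2 : ℝ) ^ k) ^ (2 * α)) * (volume (ball (0 : Pt n) r))⁻¹ *
          ∫⁻ w in D, ∫⁻ z in D, T w z * if dist w z < 2 * (r / 2 ^ k) then
            (volume (ball (0 : Pt n) (r / 2 ^ k)))⁻¹ else 0 := by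
        simp only [Psi_two_eq, Measure.addHaar_ball_center, mul_assoc]
        exact ENNReal.tsum_le_tsum fun k => mul_le_mul_right (mul_le_mul_right
          (lintegral_meanSqOsc_ball_le (by positivity) measurableSet_ball (hball k) hT hUT') _) _
    _ = ∫⁻ w in D, ∫⁻ z in D, T w z * scaleKernel α r w z :=
        tsum_mul_lintegral_lintegral hT (fun _ => measurable_ite_dist_lt _ _) _
    _ ≤ _ := lintegral_mono_ae hTU

end Psi

/-! ### Size of the kernel -/

section KernelSize

lemma sum_dyadic_lt_le {p s : ℝ} (hp : 1 ≤ p) (hs : 0 ≤ s) (N : ℕ) :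
    (∑ k ∈ Finset.range N, if (2 : ℝ) ^ k < s then ((2 : ℝ) ^ k) ^ p else 0) ≤
      min (((2 : ℝ) ^ N) ^ p) (2 * s ^ p) := by
  induction N with
  | zero => simpa using Real.rpow_nonneg hs p
  | succ N ih =>
    rw [le_min_iff] at ih
    rw [Finset.sum_range_succ]
    have hdouble : 2 * ((2 : ℝ) ^ N) ^ p ≤ ((2 : ℝ) ^ (N + 1)) ^ p := by
      rw [pow_succ', Real.mul_rpow zero_le_two (by positivity)]
      gcongr
      exact Real.self_le_rpow_of_one_le one_le_two hp
    have hpos : 0 ≤ ((2 : ℝ) ^ N) ^ p := by positivity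
    split_ifs with hN
    · have hNs : ((2 : ℝ) ^ N) ^ p ≤ s ^ p :=
        Real.rpow_le_rpow (by positivity) hN.le (zero_le_one.trans hp)
      exact le_min (by linarith) (by linarith)
    · exact le_min (by linarith) (by linarith)

lemma tsum_dyadic_lt_le {p s : ℝ} (hp : 1 ≤ p) (hs : 0 ≤ s) :
    (∑' k : ℕ, if (2 : ℝ) ^ k < s then ENNReal.ofReal (((2 : ℝ) ^ k) ^ p) else 0) ≤
      ENNReal.ofReal (2 * s ^ p) := by
  refine ENNReal.tsum_le_of_sum_range_le fun N => ?_
  have hite (k : ℕ) : (if (2 : ℝ) ^ k < s then ENNReal.ofReal (((2 : ℝ) ^ k) ^ p) else 0) =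
      ENNReal.ofReal (if (2 : ℝ) ^ k < s then ((2 : ℝ) ^ k) ^ p else 0) := by
    rw [apply_ite ENNReal.ofReal, ENNReal.ofReal_zero]
  simp only [hite]
  rw [← ENNReal.ofReal_sum_of_nonneg fun k _ => by positivity]
  exact ENNReal.ofReal_le_ofReal ((sum_dyadic_lt_le hp hs N).trans (min_le_right _ _))

variable {n : ℕ} {α r : ℝ} {a b : Pt n}

lemma volume_real_ball (x : Pt n) {ρ : ℝ} (hρ : 0 < ρ) :
    volume.real (ball x ρ) = ρ ^ n * volume.real (ball (0 : Pt n) 1) := by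
  rw [Measure.real, Measure.addHaar_ball_of_pos _ _ hρ, finrank_euclideanSpace_fin,
    ENNReal.toReal_mul, ENNReal.toReal_ofReal (by positivity), Measure.real]

lemma volume_real_ball_pos (x : Pt n) {ρ : ℝ} (hρ : 0 < ρ) : 0 < volume.real (ball x ρ) :=
  ENNReal.toReal_pos (measure_ball_pos _ _ hρ).ne' measure_ball_lt_top.ne

lemma inv_volume_ball (x : Pt n) {ρ : ℝ} (hρ : 0 < ρ) :
    (volume (ball x ρ))⁻¹ = ENNReal.ofReal (ρ ^ n * volume.real (ball (0 : Pt n) 1))⁻¹ := by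
  rw [← volume_real_ball x hρ, ENNReal.ofReal_inv_of_pos (volume_real_ball_pos x hρ),
    ofReal_measureReal measure_ball_lt_top.ne]

lemma scaleKernel_eq_zero (hr : 0 ≤ r) (hab : 2 * r ≤ dist a b) : scaleKernel α r a b = 0 := by
  refine ENNReal.tsum_eq_zero.2 fun k => ?_
  have hk : r / 2 ^ k ≤ r := div_le_self hr (one_le_pow₀ one_le_two)
  rw [if_neg (by linarith), mul_zero]

lemma scaleKernel_eq_tsum (hr : 0 < r) (hab : a ≠ b) :
    scaleKernel α r a b =
      ENNReal.ofReal ((r ^ n) ^ 2 * volume.real (ball (0 : Pt n) 1) ^ 2)⁻¹ *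
        ∑' k : ℕ, if (2 : ℝ) ^ k < 2 * r / dist a b then
          ENNReal.ofReal (((2 : ℝ) ^ k) ^ ((n : ℝ) + 2 * α)) else 0 := by
  rw [scaleKernel, ← ENNReal.tsum_mul_left]
  refine tsum_congr fun k => ?_
  have hk : (0 : ℝ) < 2 ^ k := by positivity
  have hiff : dist a b < 2 * (r / 2 ^ k) ↔ (2 : ℝ) ^ k < 2 * r / dist a b := by
    rw [← mul_div_assoc, lt_div_iff₀ hk, lt_div_iff₀ (dist_pos.2 hab), mul_comm]
  simp only [hiff, mul_ite, mul_zero]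
  congr 1
  rw [inv_volume_ball _ hr, inv_volume_ball _ (by positivity),
    ← ENNReal.ofReal_mul (by positivity), ← ENNReal.ofReal_mul (by positivity),
    ← ENNReal.ofReal_mul (by positivity), Real.rpow_add hk, Real.rpow_natCast]
  congr 1
  have hω := (volume_real_ball_pos (0 : Pt n) one_pos).ne'
  rw [div_pow]
  field_simp

lemma scaleKernel_le (hα : 1 ≤ (n : ℝ) + 2 * α) (hr : 0 < r) (hab : a ≠ b) :
    scaleKernel α r a b ≤ ENNReal.ofReal
      (2 ^ ((n : ℝ) + 2 * α + 1) / volume.real (ball (0 : Pt n) 1) ^ 2 *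
        (r ^ (2 * α - (n : ℝ)) / dist a b ^ ((n : ℝ) + 2 * α))) := by
  set p := (n : ℝ) + 2 * α with hp
  have hrp : r ^ (2 * α - (n : ℝ)) = r ^ p / (r ^ n) ^ 2 := by
    rw [_root_.eq_div_iff (by positivity), ← pow_mul, ← Real.rpow_natCast, ← Real.rpow_add hr, hp]
    push_cast
    ring_nf
  rw [scaleKernel_eq_tsum hr hab]
  refine (mul_le_mul_right (tsum_dyadic_lt_le hα (by positivity)) _).trans_eq ?_
  rw [← ENNReal.ofReal_mul (by positivity), Real.div_rpow (by positivity) dist_nonneg,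
    Real.mul_rpow zero_le_two hr.le, hrp, Real.rpow_add_one two_ne_zero]
  congr 1
  field_simp

end KernelSize

/-! ### Quasisymmetric maps -/

section Quasisymmetric

variable {n : ℕ} {η : ℝ≥0 ≃o ℝ≥0} {f : Pt n → Pt n}

lemma IsQS.dist_le (hf : IsQS f η) {x a b : Pt n} {t : ℝ≥0} (h : dist x a ≤ t * dist x b) :
    dist (f x) (f a) ≤ η t * dist (f x) (f b) := by
  rcases eq_or_ne x b with rfl | hxb
  · obtain rfl : x = a := dist_le_zero.1 (by simpa using h)
    simp
  · have hratio : nndist x a / nndist x b ≤ t :=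
      div_le_of_le_mul₀ zero_le zero_le (by exact_mod_cast h)
    have hη := (hf x a b hxb).trans (mul_le_mul_left (η.monotone hratio) _)
    exact_mod_cast hη

lemma orderIso_apply_pos (η : ℝ≥0 ≃o ℝ≥0) {t : ℝ≥0} (ht : 0 < t) : (0 : ℝ) < η t := by
  exact_mod_cast zero_le.trans_lt (η.strictMono ht)

lemma IsQS.ball_subset_image_ball (hf : IsQS f η) (hsurj : f.Surjective) (x b : Pt n) :
    ball (f x) (dist (f x) (f b) / η 1) ⊆ f '' ball x (dist x b) := by
  intro y hy
  obtain ⟨a, rfl⟩ := hsurj y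
  refine mem_image_of_mem f (mem_ball'.2 (not_le.1 fun hba => ?_))
  rw [mem_ball', lt_div_iff₀' (orderIso_apply_pos η one_pos)] at hy
  exact hy.not_ge (hf.dist_le (by simpa using hba))

lemma IsQS.image_ball_subset_closedBall (hf : IsQS f η) (x b : Pt n) (t : ℝ≥0) :
    f '' ball x (t * dist x b) ⊆ closedBall (f x) (η t * dist (f x) (f b)) := by
  rintro _ ⟨a, ha, rfl⟩
  exact mem_closedBall'.2 (hf.dist_le (mem_ball'.1 ha).le)

variable [NeZero n]

lemma exists_dist_eq_of_nonneg (x : Pt n) {s : ℝ} (hs : 0 ≤ s) : ∃ b, dist x b = s := by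
  obtain ⟨v, hv⟩ := exists_norm_eq (Pt n) hs
  exact ⟨x + v, by rw [dist_self_add_right, hv]⟩

lemma IsQS.isBounded_image_ball (hf : IsQS f η) (x : Pt n) (s : ℝ) :
    Bornology.IsBounded (f '' ball x s) := by
  obtain ⟨b, hb⟩ := exists_dist_eq_of_nonneg x (abs_nonneg s)
  refine isBounded_closedBall.subset
    ((image_mono (ball_subset_ball ?_)).trans (hf.image_ball_subset_closedBall x b 1))
  simpa [hb] using le_abs_self s

lemma IsQS.diam_image_ball_pow_le (hf : IsQS f η) (hsurj : f.Surjective) (x : Pt n) {s : ℝ}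
    (hs : 0 ≤ s) (t : ℝ≥0) :
    diam (f '' ball x (t * s)) ^ n * volume.real (ball (0 : Pt n) 1) ≤
      (2 * η t * η 1) ^ n * volume.real (f '' ball x s) := by
  obtain ⟨b, rfl⟩ := exists_dist_eq_of_nonneg x hs
  set l := dist (f x) (f b)
  have hη := orderIso_apply_pos η one_pos
  have hdiam : diam (f '' ball x (t * dist x b)) ≤ 2 * (η t * l) :=
    (diam_mono (hf.image_ball_subset_closedBall x b t) isBounded_closedBall).trans
      (diam_closedBall (by positivity))
  have hvol : (l / η 1) ^ n * volume.real (ball (0 : Pt n) 1) ≤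
      volume.real (f '' ball x (dist x b)) := by
    refine Eq.trans_le ?_ (measureReal_mono (hf.ball_subset_image_ball hsurj x b)
      (hf.isBounded_image_ball x _).measure_lt_top.ne)
    have hl : 0 ≤ l / η 1 := by positivity
    rw [measureReal_def _ (ball (f x) _), Measure.addHaar_ball _ _ hl, finrank_euclideanSpace_fin,
      ENNReal.toReal_mul, ENNReal.toReal_ofReal (by positivity), measureReal_def]
  calc diam (f '' ball x (t * dist x b)) ^ n * volume.real (ball (0 : Pt n) 1)
      ≤ (2 * (η t * l)) ^ n * volume.real (ball (0 : Pt n) 1) := by gcongr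
    _ = (2 * η t * η 1) ^ n * ((l / η 1) ^ n * volume.real (ball (0 : Pt n) 1)) := by
        rw [show 2 * (η t * l) = 2 * η t * η 1 * (l / η 1) by field_simp, mul_pow, mul_assoc]
    _ ≤ _ := by gcongr

lemma IsQS.diam_image_ball_pos (hf : IsQS f η) (hinj : f.Injective) (x : Pt n) {s : ℝ}
    (hs : 0 < s) : 0 < diam (f '' ball x s) := by
  obtain ⟨b, hb⟩ := exists_dist_eq_of_nonneg x (half_pos hs).le
  have hne : x ≠ b := dist_pos.1 (hb ▸ half_pos hs)
  refine (dist_pos.2 (hinj.ne hne)).trans_le (dist_le_diam_of_mem (hf.isBounded_image_ball x s)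
    (mem_image_of_mem f (mem_ball_self hs)) (mem_image_of_mem f (mem_ball'.2 ?_)))
  linarith

end Quasisymmetric

/-! ### Jacobians and the local `A₁` condition -/

section Jacobian

variable {n : ℕ} {f : Pt n ≃ₜ Pt n} {J : Pt n → ℝ}

lemma JacobianCOV.aemeasurable {f : Pt n → Pt n} (hJ : JacobianCOV f J) :
    AEMeasurable J volume := by
  refine ⟨fun x => |(fderiv ℝ f x).det|,
    ContinuousLinearMap.continuous_det.abs.measurable.comp (measurable_fderiv ℝ f), ?_⟩
  filter_upwards [hJ.1] with x ⟨D, hD, hx⟩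
  rw [hx, hD.fderiv]

lemma JacobianCOV.ae_nonneg {f : Pt n → Pt n} (hJ : JacobianCOV f J) : 0 ≤ᵐ[volume] J := by
  filter_upwards [hJ.1] with x ⟨D, _, hx⟩
  exact hx ▸ abs_nonneg D.det

lemma JacobianCOV.measurePreserving (hJ : JacobianCOV f J) :
    MeasurePreserving f (volume.withDensity fun x => ENNReal.ofReal (J x)) volume := by
  refine ⟨f.measurable, Measure.ext fun s hs => ?_⟩
  have hfs : MeasurableSet (f ⁻¹' s) := f.measurable hs
  rw [Measure.map_apply f.measurable hs, withDensity_apply _ hfs, ← lintegral_indicator hfs,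
    ← lintegral_indicator_one hs, ← hJ.2 _ (measurable_one.indicator hs)]
  refine lintegral_congr fun x => ?_
  rw [← indicator_comp_right]
  by_cases hx : x ∈ f ⁻¹' s <;> simp [hx]

lemma JacobianCOV.setLIntegral_image (hJ : JacobianCOV f J) (s : Set (Pt n))
    (g : Pt n → ℝ≥0∞) :
    ∫⁻ y in f '' s, g y = ∫⁻ x in s, g (f x) * ENNReal.ofReal (J x) := by
  rw [← hJ.measurePreserving.setLIntegral_comp_emb f.measurableEmbedding,
    setLIntegral_withDensity_eq_setLIntegral_mul_non_measurable₀' _ _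
      hJ.aemeasurable.ennreal_ofReal.restrict _ (ae_of_all _ fun _ => ENNReal.ofReal_lt_top)]
  simp only [Pi.mul_apply, mul_comm]

lemma JacobianCOV.lintegral_lintegral_comp_le (hJ : JacobianCOV f J) {D D' : Set (Pt n)}
    (hD : MapsTo f D D') (k : Pt n → Pt n → ℝ≥0∞) :
    ∫⁻ a in D, ∫⁻ b in D, k (f a) (f b) * (ENNReal.ofReal (J a) * ENNReal.ofReal (J b)) ≤
      ∫⁻ y in D', ∫⁻ z in D', k y z := by
  have hsingle (g : Pt n → ℝ≥0∞) :
      ∫⁻ a in D, g (f a) * ENNReal.ofReal (J a) ≤ ∫⁻ y in D', g y :=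
    (hJ.setLIntegral_image D g).symm.trans_le (lintegral_mono_set hD.image_subset)
  calc ∫⁻ a in D, ∫⁻ b in D, k (f a) (f b) * (ENNReal.ofReal (J a) * ENNReal.ofReal (J b))
      = ∫⁻ a in D, (∫⁻ b in D, k (f a) (f b) * ENNReal.ofReal (J b)) * ENNReal.ofReal (J a) := by
        simp only [← lintegral_mul_const' _ _ ENNReal.ofReal_ne_top]
        exact lintegral_congr fun a => lintegral_congr fun b => by ring
    _ ≤ ∫⁻ a in D, (∫⁻ z in D', k (f a) z) * ENNReal.ofReal (J a) := by
        exact lintegral_mono fun a => mul_le_mul_left (hsingle (k (f a))) _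
    _ ≤ ∫⁻ y in D', ∫⁻ z in D', k y z := hsingle fun y => ∫⁻ z in D', k y z

lemma JacobianCOV.setAverage_eq (hJ : JacobianCOV f J) (s : Set (Pt n)) :
    ⨍ x in s, J x = volume.real (f '' s) / volume.real s := by
  have hvol : volume.real (f '' s) = (∫⁻ x in s, ENNReal.ofReal (J x)).toReal := by
    rw [measureReal_def]
    simpa using congrArg ENNReal.toReal (hJ.setLIntegral_image s 1)
  rw [MeasureTheory.setAverage_eq, smul_eq_mul, ← div_eq_inv_mul, hvol,
    integral_eq_lintegral_of_nonneg_ae (ae_restrict_of_ae hJ.ae_nonneg)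
      hJ.aemeasurable.aestronglyMeasurable.restrict]

lemma JacobianCOV.quasiMeasurePreserving_restrict (hJ : JacobianCOV f J) {D : Set (Pt n)}
    (hpos : ∀ᵐ x ∂volume.restrict D, 0 < J x) :
    Measure.QuasiMeasurePreserving f (volume.restrict D) volume := by
  refine hJ.measurePreserving.quasiMeasurePreserving.mono_left ?_
  have hne : ∀ᵐ x ∂volume.restrict D, ENNReal.ofReal (J x) ≠ 0 :=
    hpos.mono fun x hx => (ENNReal.ofReal_pos.2 hx).ne'
  refine (withDensity_absolutelyContinuous' hJ.aemeasurable.ennreal_ofReal.restrict hne).trans ?_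
  rw [← restrict_withDensity']
  exact Measure.restrict_le_self.absolutelyContinuous

lemma ae_forall_isOpen_le {X : Type*} [TopologicalSpace X] [SecondCountableTopology X]
    [MeasurableSpace X] (μ : Measure X) (w : X → ℝ) :
    ∀ᵐ a ∂μ, ∀ U, IsOpen U → a ∈ U → ∀ c, (∀ᵐ x ∂μ.restrict U, c ≤ w x) → c ≤ w a := by
  have hbasis : ∀ᵐ a ∂μ, ∀ V ∈ TopologicalSpace.countableBasis X, ∀ q : ℚ,
      (∀ᵐ x ∂μ.restrict V, (q : ℝ) ≤ w x) → a ∈ V → (q : ℝ) ≤ w a := by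
    refine (ae_ball_iff (TopologicalSpace.countable_countableBasis X)).2 fun V _ =>
      ae_all_iff.2 fun q => ?_
    by_cases hq : ∀ᵐ x ∂μ.restrict V, (q : ℝ) ≤ w x
    · exact (ae_imp_of_ae_restrict hq).mono fun a ha _ => ha
    · exact ae_of_all _ fun _ h => absurd h hq
  filter_upwards [hbasis] with a ha U hU haU c hc
  obtain ⟨V, hV, haV, hVU⟩ :=
    (TopologicalSpace.isBasis_countableBasis X).exists_subset_of_mem_open haU hU
  refine le_of_forall_rat_lt_imp_le fun q hq => ha V hV q ?_ haV
  exact (ae_restrict_of_ae_restrict_of_subset hVU hc).mono fun x hx => hq.le.trans hx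

lemma MemA1.exists_ae_setAverage_le {w : Pt n → ℝ} {E : Set (Pt n)} (hw : MemA1 w E)
    (h0 : 0 ≤ᵐ[volume] w) :
    ∃ C > 0, ∀ᵐ a, ∀ y s, 0 < s → ENNReal.ofReal (2 * s) < infEDist y E → a ∈ ball y s →
      ⨍ x in ball y s, w x ≤ C * w a := by
  obtain ⟨C, hC, hw⟩ := hw
  refine ⟨C, hC, (ae_forall_isOpen_le volume w).mono fun a ha y s hs hE hay => ?_⟩
  refine (hw y s hs hE).trans (mul_le_mul_of_nonneg_left ?_ hC.le)
  exact ha _ isOpen_ball hay _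
    (ae_essInf_le (isBoundedUnder_of_eventually_ge (ae_restrict_of_ae h0)))

variable {η : ℝ≥0 ≃o ℝ≥0} {E : Set (Pt n)} [NeZero n]

lemma exists_ae_diam_image_ball_pow_le (hf : IsQS f η) (hJ : JacobianCOV f J) (hA : MemA1 J E)
    {t : ℝ≥0} (ht : 0 < t) :
    ∃ c > 0, ∀ᵐ a, ∀ y s, 0 < s → ENNReal.ofReal (2 * s) < infEDist y E → a ∈ ball y s →
      diam (f '' ball y (t * s)) ^ n ≤ c * s ^ n * J a := by
  obtain ⟨C, hC, hA⟩ := hA.exists_ae_setAverage_le hJ.ae_nonneg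
  have hηt := orderIso_apply_pos η ht
  have hη1 := orderIso_apply_pos η one_pos
  refine ⟨(2 * η t * η 1) ^ n * C, by positivity, ?_⟩
  filter_upwards [hA] with a ha y s hs hE hay
  have hω := volume_real_ball_pos (0 : Pt n) one_pos
  have havg := ha y s hs hE hay
  rw [hJ.setAverage_eq, volume_real_ball y hs, div_le_iff₀ (by positivity)] at havg
  refine le_of_mul_le_mul_right ?_ hω
  calc diam (f '' ball y (t * s)) ^ n * volume.real (ball (0 : Pt n) 1)
      ≤ (2 * η t * η 1) ^ n * volume.real (f '' ball y s) :=
        hf.diam_image_ball_pow_le f.surjective y hs.le t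
    _ ≤ (2 * η t * η 1) ^ n * (C * J a * (s ^ n * volume.real (ball (0 : Pt n) 1))) := by gcongr
    _ = _ := by ring

end Jacobian

section LowerBounds

variable {n : ℕ} {f : Pt n ≃ₜ Pt n} {η : ℝ≥0 ≃o ℝ≥0} {J : Pt n → ℝ} {E : Set (Pt n)}

lemma lt_infEDist_of_dist_lt {X : Type*} [PseudoMetricSpace X] {E : Set X} {x y : X} {s t : ℝ}
    (hxy : dist y x < s) (ht : 0 ≤ t) (hE : ENNReal.ofReal (s + t) ≤ infEDist x E) :
    ENNReal.ofReal t < infEDist y E := by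
  by_contra! hle
  refine hE.not_gt ?_
  calc infEDist x E ≤ infEDist y E + edist x y := infEDist_le_infEDist_add_edist
    _ < ENNReal.ofReal t + ENNReal.ofReal s := by
        refine ENNReal.add_lt_add_of_le_of_lt (ne_top_of_le_ne_top ENNReal.ofReal_ne_top hle) hle ?_
        rwa [edist_lt_ofReal, dist_comm]
    _ = ENNReal.ofReal (s + t) := by
        rw [add_comm, ENNReal.ofReal_add (dist_nonneg.trans hxy.le) ht]

lemma mapsTo_ball_two_mul_diam {X Y : Type*} [PseudoMetricSpace X] [PseudoMetricSpace Y]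
    {g : X → Y} {x : X} {ρ : ℝ} (hbdd : Bornology.IsBounded (g '' ball x ρ))
    (hpos : 0 < diam (g '' ball x ρ)) :
    MapsTo g (ball x ρ) (ball (g x) (2 * diam (g '' ball x ρ))) := by
  intro a ha
  have hle := dist_le_diam_of_mem hbdd (mem_image_of_mem g ha)
    (mem_image_of_mem g (mem_ball_self (pos_of_mem_ball ha)))
  exact mem_ball.2 (by linarith)

lemma exists_ae_diam_image_pow_le_of_subset [NeZero n] (hf : IsQS f η) (hJ : JacobianCOV f J)
    (hA : MemA1 J E) :
    ∃ c > 0, ∀ (x₀ : Pt n) (r : ℝ), ENNReal.ofReal (4 * r) ≤ infEDist x₀ E →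
      ∀ᵐ b ∂volume.restrict (ball x₀ (2 * r)), ∀ x ∈ ball x₀ (2 * r), ∀ s ≤ r, dist x b < 2 * s →
        ∀ S ⊆ ball (midpoint ℝ x b) (3 * s), diam (f '' S) ^ n ≤ c * s ^ n * J b := by
  obtain ⟨c, hc, hdiam⟩ := exists_ae_diam_image_ball_pow_le hf hJ hA (t := 3) (by norm_num)
  refine ⟨c, hc, fun x₀ r hE => ?_⟩
  filter_upwards [ae_restrict_of_ae hdiam, ae_restrict_mem measurableSet_ball] with b hb hbD
  intro x hx s hs hxb S hS
  have hs0 : 0 < s := by linarith [dist_nonneg (x := x) (y := b)]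
  have hfar : ENNReal.ofReal (2 * s) < infEDist (midpoint ℝ x b) E :=
    lt_infEDist_of_dist_lt (mem_ball.1 ((convex_ball x₀ _).midpoint_mem hx hbD)) (by positivity)
      (hE.trans' (ENNReal.ofReal_le_ofReal (by linarith)))
  have hbmid : b ∈ ball (midpoint ℝ x b) s := by
    rw [mem_ball', dist_midpoint_right, Real.norm_two]
    linarith
  calc diam (f '' S) ^ n ≤ diam (f '' ball (midpoint ℝ x b) (3 * s)) ^ n := by
        gcongr ?_ ^ n
        exact diam_mono (image_mono hS) (hf.isBounded_image_ball _ _)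
    _ ≤ c * s ^ n * J b := hb _ s hs0 hfar hbmid

lemma exists_ae_jacobian_lower_bounds [NeZero n] (hf : IsQS f η) (hJ : JacobianCOV f J)
    (hA : MemA1 J E) :
    ∃ c > 0, ∀ (x₀ : Pt n) (r : ℝ), 0 < r → ENNReal.ofReal (4 * r) ≤ infEDist x₀ E →
      ∀ᵐ b ∂volume.restrict (ball x₀ (2 * r)),
        (2 * diam (f '' ball x₀ (2 * r))) ^ n ≤ c * r ^ n * J b ∧
        ∀ a ∈ ball x₀ (2 * r), dist a b < 2 * r →
          dist (f a) (f b) ^ n ≤ c * dist a b ^ n * J b := by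
  obtain ⟨c, hc, hdiam⟩ := exists_ae_diam_image_pow_le_of_subset hf hJ hA
  refine ⟨2 ^ n * c, by positivity, fun x₀ r hr hE => ?_⟩
  filter_upwards [hdiam x₀ r hE, ae_restrict_of_ae hJ.ae_nonneg,
    ae_restrict_mem measurableSet_ball] with b hmid (hJb : 0 ≤ J b) hbD
  constructor
  · rw [mul_pow, mul_assoc (2 ^ n), mul_assoc (2 ^ n)]
    refine mul_le_mul_of_nonneg_left ?_ (by positivity)
    refine hmid x₀ (mem_ball_self (by positivity)) r le_rfl (mem_ball'.1 hbD) _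
      (ball_subset_ball' ?_)
    rw [dist_left_midpoint, Real.norm_two]
    linarith [mem_ball'.1 hbD]
  · intro a ha hab
    rcases eq_or_ne a b with rfl | hne
    · simp [NeZero.ne n]
    have hpos := dist_pos.2 hne
    have hsmall : dist a b / 2 < min (dist a b) r := lt_min (by linarith) (by linarith)
    have hpair : {a, b} ⊆ ball (midpoint ℝ a b) (3 * min (dist a b) r) := by
      refine pair_subset ?_ ?_ <;> rw [mem_ball]
      · rw [dist_left_midpoint, Real.norm_two]
        linarith
      · rw [dist_right_midpoint, Real.norm_two]
        linarith
    have hdist := hmid a ha _ (min_le_right _ _) (by linarith) _ hpair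
    rw [image_pair, diam_pair] at hdist
    calc dist (f a) (f b) ^ n ≤ c * min (dist a b) r ^ n * J b := hdist
      _ ≤ 1 * c * dist a b ^ n * J b := by
          rw [one_mul]
          gcongr
          exact min_le_left _ _
      _ ≤ 2 ^ n * c * dist a b ^ n * J b := by
          gcongr
          exact one_le_pow₀ one_le_two

end LowerBounds

/-! ### Interpolation of the Jacobian bounds -/

section Interpolation

variable {n : ℕ} {α : ℝ}

lemma rpow_mul_rpow_sub_le_of_pow_le (hn : n ≠ 0) {p C x₀ x₁ y₀ y₁ : ℝ} (hp : 0 ≤ p)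
    (hpn : p ≤ n) (hC : 0 ≤ C) (hx₀ : 0 ≤ x₀) (hx₁ : 0 ≤ x₁) (hy₀ : 0 ≤ y₀) (hy₁ : 0 ≤ y₁)
    (h₀ : x₀ ^ n ≤ C * y₀ ^ n) (h₁ : x₁ ^ n ≤ C * y₁ ^ n) :
    x₀ ^ p * x₁ ^ (n - p) ≤ C * (y₀ ^ p * y₁ ^ (n - p)) := by
  obtain ⟨K, hK, rfl⟩ : ∃ K, 0 ≤ K ∧ K ^ n = C :=
    ⟨C ^ (n : ℝ)⁻¹, by positivity, Real.rpow_inv_natCast_pow hC hn⟩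
  rw [← mul_pow] at h₀ h₁
  have hx₀' := le_of_pow_le_pow_left₀ hn (by positivity) h₀
  have hx₁' := le_of_pow_le_pow_left₀ hn (by positivity) h₁
  have hpn' : 0 ≤ n - p := sub_nonneg.2 hpn
  calc x₀ ^ p * x₁ ^ (n - p) ≤ (K * y₀) ^ p * (K * y₁) ^ (n - p) := by gcongr
    _ = K ^ p * K ^ (n - p) * (y₀ ^ p * y₁ ^ (n - p)) := by
        rw [Real.mul_rpow hK hy₀, Real.mul_rpow hK hy₁, mul_mul_mul_comm]
    _ = K ^ n * (y₀ ^ p * y₁ ^ (n - p)) := by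
        rw [← Real.rpow_add_of_nonneg hK hp hpn', add_sub_cancel, Real.rpow_natCast]

lemma rpow_div_rpow_le_of_pow_le (hn : n ≠ 0) (hα : 0 ≤ α) (hαn : 2 * α ≤ n)
    {c τ t R r Ja Jb : ℝ} (hc : 0 < c) (hτ : 0 < τ) (ht : 0 < t) (hR : 0 < R) (hr : 0 < r)
    (hJa : τ ^ n ≤ c * t ^ n * Ja) (hJb : τ ^ n ≤ c * t ^ n * Jb) (hJR : R ^ n ≤ c * r ^ n * Jb) :
    r ^ (2 * α - n) / t ^ (n + 2 * α) ≤
      c ^ 2 * (R ^ (2 * α - n) / τ ^ (n + 2 * α)) * (Ja * Jb) := by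
  have hJb0 : 0 ≤ Jb := (pos_of_mul_pos_right (hJb.trans_lt' (by positivity)) (by positivity)).le
  have hτR := rpow_mul_rpow_sub_le_of_pow_le hn (p := 2 * α) (C := c * Jb) (by positivity) hαn
    (by positivity) hτ.le hR.le ht.le hr.le (by linarith) (by linarith)
  have hmul : τ ^ (n + 2 * α) * R ^ (n - 2 * α) ≤
      c ^ 2 * (Ja * Jb) * (t ^ (n + 2 * α) * r ^ (n - 2 * α)) := by
    simp only [Real.rpow_add hτ, Real.rpow_add ht, Real.rpow_natCast]
    calc _ = τ ^ n * (τ ^ (2 * α) * R ^ (n - 2 * α)) := by ring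
      _ ≤ c * t ^ n * Ja * (c * Jb * (t ^ (2 * α) * r ^ (n - 2 * α))) :=
          mul_le_mul hJa hτR (by positivity) ((by positivity : 0 ≤ τ ^ n).trans hJa)
      _ = _ := by ring
  have hinv {x : ℝ} (hx : 0 < x) : x ^ (2 * α - n) = (x ^ (n - 2 * α))⁻¹ := by
    rw [← Real.rpow_neg hx.le, neg_sub]
  rw [hinv hr, hinv hR, ← one_div, div_div, inv_eq_one_div, div_div, mul_right_comm, mul_one_div,
    div_le_div_iff₀ (by positivity) (by positivity), one_mul]
  linarith

lemma sq_mul_scaleKernel_le [NeZero n] (hα : 0 ≤ α) (hαn : 2 * α ≤ n) {f : Pt n → Pt n}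
    (hf : f.Injective) {a b : Pt n} {c R r Ja Jb : ℝ} (hc : 0 < c) (hR : 0 < R) (hr : 0 < r)
    (hJa : dist a b < 2 * r → dist (f a) (f b) ^ n ≤ c * dist a b ^ n * Ja)
    (hJb : dist a b < 2 * r → dist (f a) (f b) ^ n ≤ c * dist a b ^ n * Jb)
    (hJR : R ^ n ≤ c * r ^ n * Jb) (u : Pt n → ℝ) :
    ENNReal.ofReal (|u (f a) - u (f b)| ^ 2) * scaleKernel α r a b ≤
      ENNReal.ofReal (2 ^ (n + 2 * α + 1) / volume.real (ball (0 : Pt n) 1) ^ 2 * c ^ 2) *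
        (ENNReal.ofReal (R ^ (2 * α - n)) *
        (ENNReal.ofReal (|u (f a) - u (f b)| ^ 2 / ‖f a - f b‖ ^ (n + 2 * α)) *
          (ENNReal.ofReal Ja * ENNReal.ofReal Jb))) := by
  rcases eq_or_ne a b with rfl | hab
  · simp
  rcases le_or_gt (2 * r) (dist a b) with hfar | hnear
  · rw [scaleKernel_eq_zero hr.le hfar, mul_zero]
    exact zero_le
  have hn : (1 : ℝ) ≤ n := Nat.one_le_cast.2 NeZero.one_le
  have hτ : 0 < dist (f a) (f b) := dist_pos.2 (hf.ne hab)
  have ht : 0 < dist a b := dist_pos.2 hab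
  have hω := volume_real_ball_pos (0 : Pt n) one_pos
  have hJa0 : 0 ≤ Ja :=
    (pos_of_mul_pos_right ((hJa hnear).trans_lt' (by positivity)) (by positivity)).le
  refine (mul_le_mul_right (scaleKernel_le (by linarith) hr hab) _).trans ?_
  rw [← dist_eq_norm, ← ENNReal.ofReal_mul hJa0, ← ENNReal.ofReal_mul (by positivity),
    ← ENNReal.ofReal_mul (by positivity), ← ENNReal.ofReal_mul (by positivity),
    ← ENNReal.ofReal_mul (by positivity)]
  refine ENNReal.ofReal_le_ofReal ?_
  have hinterp := rpow_div_rpow_le_of_pow_le (NeZero.ne n) hα hαn hc hτ ht hR hr (hJa hnear)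
    (hJb hnear) hJR
  set A := (2 : ℝ) ^ (n + 2 * α + 1) / volume.real (ball (0 : Pt n) 1) ^ 2
  calc _ ≤ |u (f a) - u (f b)| ^ 2 * (A * (c ^ 2 *
          (R ^ (2 * α - n) / dist (f a) (f b) ^ (n + 2 * α)) * (Ja * Jb))) := by gcongr
    _ = _ := by ring

end Interpolation

section Energy

variable {n : ℕ} {α : ℝ} {u : Pt n → ℝ}

lemma energy_le_Qnorm_sq (α : ℝ) (u : Pt n → ℝ) (y : Pt n) {R : ℝ} (hR : 0 < R) :
    ENNReal.ofReal (R ^ (2 * α - n)) * ∫⁻ v in ball y R, ∫⁻ w in ball y R,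
      ENNReal.ofReal (|u v - u w| ^ 2 / ‖v - w‖ ^ (n + 2 * α)) ≤ Qnorm α u ^ 2 := by
  rw [← ENNReal.rpow_natCast, ← ENNReal.rpow_inv_le_iff (by norm_num), Nat.cast_ofNat,
    ← one_div]
  exact le_iSup₂_of_le y R (le_iSup_of_le hR le_rfl)

lemma JacobianCOV.lintegral_sq_mul_scaleKernel_le [NeZero n] {f : Pt n ≃ₜ Pt n} {J : Pt n → ℝ}
    (hJ : JacobianCOV f J) (hα : 0 ≤ α) (hαn : 2 * α ≤ n) {D : Set (Pt n)} (hD : MeasurableSet D)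
    {y : Pt n} {c R r : ℝ} (hc : 0 < c) (hR : 0 < R) (hr : 0 < r) (hfD : MapsTo f D (ball y R))
    (hlow : ∀ᵐ b ∂volume.restrict D, R ^ n ≤ c * r ^ n * J b ∧
      ∀ a ∈ D, dist a b < 2 * r → dist (f a) (f b) ^ n ≤ c * dist a b ^ n * J b)
    (u : Pt n → ℝ) :
    ∫⁻ a in D, ∫⁻ b in D, ENNReal.ofReal (|u (f a) - u (f b)| ^ 2) * scaleKernel α r a b ≤
      ENNReal.ofReal (2 ^ (n + 2 * α + 1) / volume.real (ball (0 : Pt n) 1) ^ 2 * c ^ 2) *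
        Qnorm α u ^ 2 := by
  set C := 2 ^ (n + 2 * α + 1) / volume.real (ball (0 : Pt n) 1) ^ 2 * c ^ 2
  let k (y z : Pt n) : ℝ≥0∞ := ENNReal.ofReal (|u y - u z| ^ 2 / ‖y - z‖ ^ (n + 2 * α))
  calc ∫⁻ a in D, ∫⁻ b in D, ENNReal.ofReal (|u (f a) - u (f b)| ^ 2) * scaleKernel α r a b
      ≤ ∫⁻ a in D, ∫⁻ b in D, ENNReal.ofReal C * (ENNReal.ofReal (R ^ (2 * α - n)) *
          (k (f a) (f b) * (ENNReal.ofReal (J a) * ENNReal.ofReal (J b)))) := by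
        refine lintegral_mono_ae ?_
        filter_upwards [hlow, ae_restrict_mem hD] with a ha haD
        refine lintegral_mono_ae ?_
        filter_upwards [hlow, ae_restrict_mem hD] with b hb hbD
        refine sq_mul_scaleKernel_le hα hαn f.injective hc hR hr ?_ (hb.2 a haD) hb.1 u
        simpa only [dist_comm b a, dist_comm (f b)] using ha.2 b hbD
    _ = ENNReal.ofReal C * (ENNReal.ofReal (R ^ (2 * α - n)) * ∫⁻ a in D, ∫⁻ b in D,
          k (f a) (f b) * (ENNReal.ofReal (J a) * ENNReal.ofReal (J b))) := by
        simp only [lintegral_const_mul' _ _ ENNReal.ofReal_ne_top]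
    _ ≤ ENNReal.ofReal C * (ENNReal.ofReal (R ^ (2 * α - n)) *
          ∫⁻ v in ball y R, ∫⁻ w in ball y R, k v w) :=
        mul_le_mul_right (mul_le_mul_right (hJ.lintegral_lintegral_comp_le hfD k) _) _
    _ ≤ ENNReal.ofReal C * Qnorm α u ^ 2 := mul_le_mul_right (energy_le_Qnorm_sq α u y hR) _

lemma MemQ.aemeasurable_abs (hu : MemQ α u) : AEMeasurable (fun x => |u x|) volume := by
  simpa only [Function.comp_def, Real.sqrt_sq (abs_nonneg _)] using
    Real.continuous_sqrt.measurable.comp_aemeasurable hu.1.aestronglyMeasurable.aemeasurable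

end Energy

theorem Psi_composition_far_from_E_general (n : ℕ) [NeZero n] (α : ℝ) (hα : 0 ≤ α)
    (hαn : 2 * α ≤ n) (f : Pt n ≃ₜ Pt n) (η : ℝ≥0 ≃o ℝ≥0) (hqs : IsQS (⇑f) η) (Jf : Pt n → ℝ)
    (hJf : JacobianCOV (⇑f) Jf) (E : Set (Pt n)) (hA1 : MemA1 Jf E) :
    ∃ C > (0 : ℝ), ∀ (x₀ : Pt n) (r : ℝ), 0 < r → ENNReal.ofReal (4 * r) ≤ infEDist x₀ E →
      ∀ u : Pt n → ℝ, AEMeasurable (fun x => |u x|) volume →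
        Psi α 2 (u ∘ ⇑f) x₀ r ≤ ENNReal.ofReal C * Qnorm α u ^ 2 := by
  obtain ⟨c, hc, hlow⟩ := exists_ae_jacobian_lower_bounds hqs hJf hA1
  have hω := volume_real_ball_pos (0 : Pt n) one_pos
  refine ⟨2 ^ (n + 2 * α + 1) / volume.real (ball (0 : Pt n) 1) ^ 2 * c ^ 2, by positivity,
    fun x₀ r hr hE u hu => ?_⟩
  specialize hlow x₀ r hr hE
  have hdiam : 0 < diam (f '' ball x₀ (2 * r)) :=
    hqs.diam_image_ball_pos f.injective x₀ (by positivity)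
  have hJpos : ∀ᵐ b ∂volume.restrict (ball x₀ (2 * r)), 0 < Jf b := hlow.mono fun b hb =>
    pos_of_mul_pos_right (hb.1.trans_lt' (by positivity)) (by positivity)
  have hΨ := Psi_le_lintegral α hr
    (hu.comp_quasiMeasurePreserving (hJf.quasiMeasurePreserving_restrict hJpos))
  exact hΨ.trans (hJf.lintegral_sq_mul_scaleKernel_le hα hαn measurableSet_ball hc
    (by positivity) hr (mapsTo_ball_two_mul_diam (hqs.isBounded_image_ball x₀ _) hdiam) hlow u)

/-- Case 1 of the proof of Theorem 1.3: for balls `B(x₀,r)` far from the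
degeneracy set `E` (namely `dist(x₀,E) ≥ 4r`), the quantity `Ψ_{α,2}(u∘f, B(x₀,r))` is
uniformly controlled by `‖u‖²_{Q_α}`. -/
theorem Psi_composition_far_from_E (n : ℕ) (hn : 2 ≤ n) (α : ℝ) (hα : α ∈ Ioo (0:ℝ) 1)
    (f : Pt n ≃ₜ Pt n) (η : ℝ≥0 ≃o ℝ≥0) (hqs : IsQS (⇑f) η)
    (Jf Jfi : Pt n → ℝ) (hJf : JacobianCOV (⇑f) Jf) (hJfi : JacobianCOV (⇑f.symm) Jfi)
    (E : Set (Pt n)) (hEc : IsClosed E) (hA1 : MemA1 Jf E) :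
    ∃ C > (0:ℝ), ∀ (x₀ : Pt n) (r : ℝ), 0 < r →
      ENNReal.ofReal (4 * r) ≤ EMetric.infEdist x₀ E →
      ∀ u : Pt n → ℝ, MemQ α u →
        Psi α 2 (u ∘ ⇑f) x₀ r ≤ ENNReal.ofReal C * (Qnorm α u) ^ 2 := by
  have : NeZero n := ⟨by omega⟩
  have hαn : 2 * α ≤ n := by linarith [hα.2, Nat.ofNat_le_cast (α := ℝ) |>.2 hn]
  obtain ⟨C, hC, hΨ⟩ := Psi_composition_far_from_E_general n α hα.1.le hαn f η hqs Jf hJf E hA1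
  exact ⟨C, hC, fun x₀ r hr hE u hu => hΨ x₀ r hr hE u hu.aemeasurable_abs⟩

end
end
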